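/- For every integer n ≥ 4, the largest prime factor of g(n) satisfies P⁺(g(n)) / √(n·log n) ≤ 43 / √(215·log 215) = 1.26542463…; equivalently, P⁺(g(n))·√(215·log 215) ≤ 43·√(n·log n) (the maximum of P⁺(g(n))/√(n log n) over n ≥ 4 is attained at n = 215, where P⁺(g(215)) = 43). -/

import Mathlib

/-- Landau's function: the maximal order of a permutation of the symmetric group on `n` letters. -/
noncomputable def landau (n : ℕ) : ℕ :=
  Finset.univ.sup fun σ : Equiv.Perm (Fin n) => orderOf σ

/-- The largest prime factor of `m` (0 if `m` has no prime factor). -/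
def maxPrimeFac (m : ℕ) : ℕ := m.primeFactors.sup id


/-- digits `f 0, ..., f (n-1)` packed in base `2^w` -/
def pack (w : ℕ) (f : ℕ → ℕ) (n : ℕ) : ℕ := ∑ i ∈ Finset.range n, f i * 2 ^ (w * i)

theorem pack_succ (w f n) : pack w f (n+1) = pack w f n + f n * 2 ^ (w * n) := by
  simp [pack, Finset.sum_range_succ]

theorem pack_zero (w f) : pack w f 0 = 0 := by simp [pack]

theorem pack_lt (w : ℕ) (f : ℕ → ℕ) (n : ℕ) (h : ∀ i < n, f i < 2 ^ w) :
    pack w f n < 2 ^ (w * n) := by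
  induction n with
  | zero => simp [pack]
  | succ n ih =>
    have h1 := ih (fun i hi => h i (by omega))
    have h2 := h n (by omega)
    rw [pack_succ, Nat.mul_succ, pow_add]
    have : (f n + 1) * 2 ^ (w * n) ≤ 2 ^ w * 2 ^ (w * n) := Nat.mul_le_mul_right _ h2
    nlinarith

theorem pack_congr (w : ℕ) {f g : ℕ → ℕ} {n : ℕ} (h : ∀ i < n, f i = g i) :
    pack w f n = pack w g n :=
  Finset.sum_congr rfl (fun i hi => by rw [h i (Finset.mem_range.1 hi)])

theorem pack_add (w f g n) : pack w (fun i => f i + g i) n = pack w f n + pack w g n := by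
  simp [pack, add_mul, Finset.sum_add_distrib]

theorem pack_mul (w c f n) : pack w (fun i => c * f i) n = c * pack w f n := by
  simp [pack, Finset.mul_sum, mul_assoc]

theorem pack_sub (w : ℕ) (f g : ℕ → ℕ) (n : ℕ) (h : ∀ i < n, g i ≤ f i) :
    pack w (fun i => f i - g i) n = pack w f n - pack w g n := by
  have : pack w f n = pack w (fun i => (f i - g i) + g i) n :=
    pack_congr w (fun i hi => by have := h i hi; omega)
  rw [this, pack_add]; omega

theorem pack_split (w f m n) :
    pack w f (m + n) = pack w f m + 2 ^ (w * m) * pack w (fun i => f (m + i)) n := by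
  simp only [pack, Finset.sum_range_add, Finset.mul_sum]
  congr 1
  refine Finset.sum_congr rfl fun i _ => ?_
  rw [Nat.mul_add, pow_add]; ring

theorem pack_testBit (w : ℕ) (f : ℕ → ℕ) (n : ℕ) (h : ∀ i < n, f i < 2 ^ w)
    (i j : ℕ) (hi : i < n) (hj : j < w) :
    (pack w f n).testBit (w * i + j) = (f i).testBit j := by
  obtain ⟨k, rfl⟩ : ∃ k, n = i + (k + 1) := ⟨n - i - 1, by omega⟩
  have hlt : pack w f i < 2 ^ (w * i) := pack_lt w f i (fun a ha => h a (by omega))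
  rw [pack_split, Nat.add_comm, Nat.testBit_two_pow_mul_add _ hlt]
  simp only [show ¬ (w * i + j < w * i) by omega, if_false]
  rw [show w * i + j - w * i = j by omega, Nat.add_comm k 1, pack_split]
  have h0 : pack w (fun a => f (i + a)) 1 = f i := by simp [pack]
  rw [h0, Nat.add_comm, Nat.mul_one, Nat.testBit_two_pow_mul_add _ (h i (by omega))]
  simp [hj]

theorem pack_ext (w : ℕ) (hw : 0 < w) (n : ℕ) (a b : ℕ) (ha : a < 2 ^ (w * n)) (hb : b < 2 ^ (w * n))
    (h : ∀ i < n, ∀ j < w, a.testBit (w * i + j) = b.testBit (w * i + j)) : a = b := by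
  apply Nat.eq_of_testBit_eq
  intro k
  by_cases hk : k < w * n
  · have := h (k / w) (Nat.div_lt_of_lt_mul hk) (k % w) (Nat.mod_lt _ hw)
    rwa [Nat.div_add_mod] at this
  · have h2 : 2 ^ (w * n) ≤ 2 ^ k := Nat.pow_le_pow_right (by norm_num) (by omega)
    rw [Nat.testBit_lt_two_pow (lt_of_lt_of_le ha h2), Nat.testBit_lt_two_pow (lt_of_lt_of_le hb h2)]

theorem pack_land (w : ℕ) (hw : 0 < w) (f g : ℕ → ℕ) (n : ℕ) (hf : ∀ i < n, f i < 2 ^ w)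
    (hg : ∀ i < n, g i < 2 ^ w) :
    pack w f n &&& pack w g n = pack w (fun i => f i &&& g i) n := by
  have hfg : ∀ i < n, f i &&& g i < 2 ^ w := fun i hi => Nat.and_lt_two_pow _ (hg i hi)
  refine pack_ext w hw n _ _ (Nat.and_lt_two_pow _ (pack_lt w g n hg)) (pack_lt w _ n hfg) ?_
  intro i hi j hj
  rw [Nat.testBit_and, pack_testBit w f n hf i j hi hj, pack_testBit w g n hg i j hi hj,
    pack_testBit w _ n hfg i j hi hj, Nat.testBit_and]

theorem pack_lor (w : ℕ) (hw : 0 < w) (f g : ℕ → ℕ) (n : ℕ) (hf : ∀ i < n, f i < 2 ^ w)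
    (hg : ∀ i < n, g i < 2 ^ w) :
    pack w f n ||| pack w g n = pack w (fun i => f i ||| g i) n := by
  have hfg : ∀ i < n, f i ||| g i < 2 ^ w := fun i hi => Nat.or_lt_two_pow (hf i hi) (hg i hi)
  refine pack_ext w hw n _ _ (Nat.or_lt_two_pow (pack_lt w f n hf) (pack_lt w g n hg))
    (pack_lt w _ n hfg) ?_
  intro i hi j hj
  rw [Nat.testBit_or, pack_testBit w f n hf i j hi hj, pack_testBit w g n hg i j hi hj,
    pack_testBit w _ n hfg i j hi hj, Nat.testBit_or]

theorem pack_inj (w : ℕ) (f g : ℕ → ℕ) (n : ℕ) (hf : ∀ i < n, f i < 2 ^ w)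
    (hg : ∀ i < n, g i < 2 ^ w) (h : pack w f n = pack w g n) : ∀ i < n, f i = g i := by
  intro i hi
  apply Nat.eq_of_testBit_eq
  intro j
  by_cases hj : j < w
  · rw [← pack_testBit w f n hf i j hi hj, h, pack_testBit w g n hg i j hi hj]
  · have h2 : 2 ^ w ≤ 2 ^ j := Nat.pow_le_pow_right (by norm_num) (by omega)
    rw [Nat.testBit_lt_two_pow (lt_of_lt_of_le (hf i hi) h2),
      Nat.testBit_lt_two_pow (lt_of_lt_of_le (hg i hi) h2)]

/-- forces the evaluation of the first argument -/
def force {α : Sort*} (x : ℕ) (k : ℕ → α) : α :=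
  match x with
  | 0 => k 0
  | n + 1 => k (n + 1)

theorem force_eq {α : Sort*} (x : ℕ) (k : ℕ → α) : force x k = k x := by
  cases x <;> rfl

/-- constant repunit -/
def rep (w n : ℕ) : ℕ := (2 ^ (w * n) - 1) / (2 ^ w - 1)

theorem rep_eq (w : ℕ) (hw : 0 < w) (n : ℕ) : rep w n = pack w (fun _ => 1) n := by
  have h2 : 2 ≤ 2 ^ w := by
    calc 2 = 2 ^ 1 := rfl
      _ ≤ 2 ^ w := Nat.pow_le_pow_right (by norm_num) hw
  have := Nat.geomSum_eq h2 n
  simp only [pack, one_mul, rep, pow_mul]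
  rw [this]

theorem pack_const (w : ℕ) (hw : 0 < w) (c n : ℕ) : pack w (fun _ => c) n = c * rep w n := by
  rw [rep_eq w hw, ← pack_mul]; simp

/-- top bit facts -/
theorem land_top (w : ℕ) (d : ℕ) (hd : d < 2 ^ (w+1)) :
    d &&& 2 ^ w = if 2 ^ w ≤ d then 2 ^ w else 0 := by
  rw [Nat.and_two_pow]
  by_cases h : 2 ^ w ≤ d
  · have : d.testBit w = true := by
      rw [Nat.testBit_eq_decide_div_mod_eq]
      have : d / 2 ^ w = 1 := by
        apply Nat.div_eq_of_lt_le <;> [omega; (rw [pow_succ] at hd; omega)]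
      simp [this]
    simp [this, h]
  · rw [Nat.testBit_lt_two_pow (by omega)]; simp [h]

/-- pointwise `f i ≤ g i`, for digits `< 2^w`, word size `w+1` -/
def packLe (w n X Y : ℕ) : Bool :=
  force (2 ^ w * rep (w+1) n) (fun HR => Nat.beq ((Y + HR - X) &&& HR) HR)

theorem packLe_sound (w : ℕ) (f g : ℕ → ℕ) (n : ℕ) (hf : ∀ i < n, f i < 2 ^ w)
    (hg : ∀ i < n, g i < 2 ^ w)
    (h : packLe w n (pack (w+1) f n) (pack (w+1) g n) = true) : ∀ i < n, f i ≤ g i := by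
  have hp : 2 ^ (w+1) = 2 ^ w + 2 ^ w := by rw [pow_succ]; omega
  have h1 : (pack (w+1) g n + 2 ^ w * rep (w+1) n - pack (w+1) f n)
      = pack (w+1) (fun i => g i + 2 ^ w - f i) n := by
    rw [pack_sub _ _ _ _ (fun i hi => by have := hf i hi; omega), pack_add,
      pack_const _ (by omega)]
  have hpos : 0 < 2 ^ w := by positivity
  rw [packLe, force_eq] at h
  have h2 := Nat.eq_of_beq_eq_true h
  rw [h1, ← pack_const _ (by omega), pack_land _ (by omega) _ _ _
    (fun i hi => by have := hg i hi; omega) (fun i hi => by omega)] at h2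
  have h3 := pack_inj _ _ _ _ (fun i hi => Nat.and_lt_two_pow _ (by omega)) (fun i hi => by omega) h2
  intro i hi
  have h4 := h3 i hi
  rw [land_top w _ (by have := hg i hi; omega)] at h4
  split_ifs at h4 with h5
  · omega
  · omega

/-- pointwise maximum, digits `< 2^w`, word size `w+1`. -/
def packMax (w HR X Y : ℕ) : ℕ :=
  force (X + HR - Y) (fun D => force (D &&& HR) (fun b => Y + (D &&& (b - (b >>> w)))))

theorem packMax_eq (w : ℕ) (f g : ℕ → ℕ) (n : ℕ) (hf : ∀ i < n, f i < 2 ^ w)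
    (hg : ∀ i < n, g i < 2 ^ w) :
    packMax w (2 ^ w * rep (w+1) n) (pack (w+1) f n) (pack (w+1) g n)
      = pack (w+1) (fun i => max (f i) (g i)) n := by
  have hp : 2 ^ (w+1) = 2 ^ w + 2 ^ w := by rw [pow_succ]; omega
  have hpos : 0 < 2 ^ w := by positivity
  have h1 : (pack (w+1) f n + 2 ^ w * rep (w+1) n - pack (w+1) g n)
      = pack (w+1) (fun i => f i + 2 ^ w - g i) n := by
    rw [pack_sub _ _ _ _ (fun i hi => by have := hg i hi; omega), pack_add,
      pack_const _ (by omega)]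
  have hb : pack (w+1) (fun i => f i + 2 ^ w - g i) n &&& (2 ^ w * rep (w+1) n)
      = 2 ^ w * pack (w+1) (fun i => if g i ≤ f i then 1 else 0) n := by
    rw [← pack_const _ (by omega), pack_land _ (by omega) _ _ _
      (fun i hi => by have := hf i hi; omega) (fun i hi => by omega), ← pack_mul]
    apply pack_congr
    intro i hi
    have := hf i hi
    have := hg i hi
    rw [land_top w _ (by omega)]
    by_cases h : g i ≤ f i
    · rw [if_pos (by omega), if_pos h]; omega
    · rw [if_neg (by omega), if_neg h]; omega
  have hm : 2 ^ w * pack (w+1) (fun i => if g i ≤ f i then 1 else 0) n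
      - (2 ^ w * pack (w+1) (fun i => if g i ≤ f i then 1 else 0) n) >>> w
      = pack (w+1) (fun i => if g i ≤ f i then 2 ^ w - 1 else 0) n := by
    rw [Nat.shiftRight_eq_div_pow, Nat.mul_div_cancel_left _ hpos, ← Nat.sub_one_mul, ← pack_mul]
    apply pack_congr
    intro i hi
    split_ifs <;> simp
  rw [packMax, force_eq, force_eq, h1, hb, hm, pack_land _ (by omega) _ _ _ (fun i hi => by have := hf i hi; omega)
    (fun i hi => by split_ifs <;> omega), ← pack_add]
  apply pack_congr
  intro i hi
  have := hf i hi
  have := hg i hi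
  split_ifs with h
  · rw [Nat.and_two_pow_sub_one_eq_mod, max_eq_left h]
    have : f i + 2 ^ w - g i = (f i - g i) + 2 ^ w := by omega
    rw [this, Nat.add_mod_right, Nat.mod_eq_of_lt (by omega)]; omega
  · simp; omega


/-- The sum of the maximal prime powers dividing `N`. -/
def ell (N : ℕ) : ℕ := ∑ p ∈ N.primeFactors, p ^ N.factorization p

theorem ell_mul_coprime {a b : ℕ} (h : a.Coprime b) : ell (a * b) = ell a + ell b := by
  unfold ell
  rw [h.primeFactors_mul, Finset.sum_union h.disjoint_primeFactors]
  congr 1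
  · refine Finset.sum_congr rfl fun p hp => ?_
    rw [Nat.factorization_mul_of_coprime h]
    have : p ∉ b.primeFactors := fun hb => (Finset.disjoint_left.1 h.disjoint_primeFactors hp hb)
    rw [← Nat.support_factorization, Finsupp.mem_support_iff, not_not] at this
    simp [this]
  · refine Finset.sum_congr rfl fun p hp => ?_
    rw [Nat.factorization_mul_of_coprime h]
    have : p ∉ a.primeFactors := fun hb => (Finset.disjoint_left.1 h.disjoint_primeFactors hb hp)
    rw [← Nat.support_factorization, Finsupp.mem_support_iff, not_not] at this
    simp [this]

theorem ell_one : ell 1 = 0 := by simp [ell]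

theorem ell_prime_pow {p k : ℕ} (hp : p.Prime) (hk : k ≠ 0) : ell (p ^ k) = p ^ k := by
  unfold ell
  rw [Nat.primeFactors_prime_pow hk hp]
  simp [hp.factorization_pow]

theorem ell_prime_pow_mul {p k M : ℕ} (hp : p.Prime) (hk : k ≠ 0) (h : ¬ p ∣ M) :
    ell (p ^ k * M) = p ^ k + ell M := by
  rw [ell_mul_coprime (Nat.Coprime.pow_left k ((Nat.Prime.coprime_iff_not_dvd hp).2 h)),
    ell_prime_pow hp hk]

theorem ell_mul_prime {q M : ℕ} (hp : q.Prime) (h : ¬ q ∣ M) :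
    ell (M * q) = ell M + q := by
  have := ell_prime_pow_mul hp one_ne_zero h
  rw [pow_one] at this
  rw [mul_comm, this, add_comm]

theorem ell_le (N : ℕ) : N ≠ 0 → ell N ≤ N := by
  induction N using Nat.recOnPosPrimePosCoprime with
  | zero => intro h; simp at h
  | one => intro; simp [ell]
  | prime_pow p n hp hn => intro _; rw [ell_prime_pow hp hn.ne']
  | coprime a b ha hb hab iha ihb =>
    intro _
    rw [ell_mul_coprime hab]
    have := iha (by omega)
    have := ihb (by omega)
    nlinarith

theorem ell_lcm_le {a b : ℕ} (ha : a ≠ 0) (hb : b ≠ 0) : ell (a.lcm b) ≤ ell a + ell b := by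
  unfold ell
  have hpf : (a.lcm b).primeFactors = a.primeFactors ∪ b.primeFactors := by
    ext p
    simp only [Nat.mem_primeFactors, Finset.mem_union, ne_eq, ha, hb, Nat.lcm_ne_zero ha hb,
      not_false_eq_true, and_true]
    constructor
    · rintro ⟨hp, h⟩
      have h' : p ∣ a * b := h.trans (Nat.lcm_dvd_mul a b)
      rcases (Nat.Prime.dvd_mul hp).1 h' with h | h
      · exact Or.inl ⟨hp, h⟩
      · exact Or.inr ⟨hp, h⟩
    · rintro (⟨hp, h⟩ | ⟨hp, h⟩)
      · exact ⟨hp, h.trans (Nat.dvd_lcm_left a b)⟩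
      · exact ⟨hp, h.trans (Nat.dvd_lcm_right a b)⟩
  rw [hpf, Nat.factorization_lcm ha hb]
  have h1 : ∑ p ∈ a.primeFactors, p ^ a.factorization p =
      ∑ p ∈ a.primeFactors ∪ b.primeFactors, if p ∈ a.primeFactors then p ^ a.factorization p else 0 := by
    rw [← Finset.sum_filter]; congr 1; ext p; simp; tauto
  have h2 : ∑ p ∈ b.primeFactors, p ^ b.factorization p =
      ∑ p ∈ a.primeFactors ∪ b.primeFactors, if p ∈ b.primeFactors then p ^ b.factorization p else 0 := by
    rw [← Finset.sum_filter]; congr 1; ext p; simp; tauto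
  rw [h1, h2, ← Finset.sum_add_distrib]
  refine Finset.sum_le_sum fun p hp => ?_
  have key : ∀ n : ℕ, p ∉ n.primeFactors → n.factorization p = 0 := by
    intro n hn
    rwa [← Nat.support_factorization, Finsupp.mem_support_iff, not_not] at hn
  rw [Finsupp.sup_apply]
  by_cases h3 : p ∈ a.primeFactors <;> by_cases h4 : p ∈ b.primeFactors
  · simp only [h3, h4, if_true]
    rcases le_total (a.factorization p) (b.factorization p) with h | h
    · rw [sup_eq_right.2 h]; omega
    · rw [sup_eq_left.2 h]; omega
  · simp [h3, h4, key b h4]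
  · simp [h3, h4, key a h3]
  · simp only [Finset.mem_union] at hp; tauto

theorem ell_multiset_lcm (s : Multiset ℕ) (h : ∀ x ∈ s, x ≠ 0) :
    s.lcm ≠ 0 ∧ ell s.lcm ≤ s.sum := by
  induction s using Multiset.induction_on with
  | empty => simp [ell]
  | cons a s ih =>
    have h1 := ih (fun x hx => h x (Multiset.mem_cons_of_mem hx))
    have ha := h a (Multiset.mem_cons_self a s)
    rw [Multiset.lcm_cons, Multiset.sum_cons]
    refine ⟨Nat.lcm_ne_zero ha h1.1, ?_⟩
    have := ell_lcm_le ha h1.1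
    have := ell_le a ha
    change ell (Nat.lcm a s.lcm) ≤ _
    omega

theorem landau_spec (n : ℕ) : landau n ≠ 0 ∧ ell (landau n) ≤ n := by
  obtain ⟨σ, -, hσ⟩ := Finset.exists_mem_eq_sup (Finset.univ : Finset (Equiv.Perm (Fin n)))
    Finset.univ_nonempty (fun σ => orderOf σ)
  have h : landau n = orderOf σ := hσ
  rw [h, ← Equiv.Perm.lcm_cycleType]
  have := ell_multiset_lcm σ.cycleType (fun x hx => by
    have := Equiv.Perm.two_le_of_mem_cycleType hx; omega)
  refine ⟨this.1, this.2.trans ?_⟩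
  have h2 := σ.sum_cycleType_le
  simpa using h2

theorem le_landau {n M : ℕ} (hM : M ≠ 0) (h : ell M ≤ n) : M ≤ landau n := by
  classical
  set m : Multiset ℕ := M.primeFactors.val.map (fun p => p ^ M.factorization p) with hm
  have hsum : m.sum = ell M := rfl
  have h2 : ∀ a ∈ m, 2 ≤ a := by
    intro a ha
    rw [hm, Multiset.mem_map] at ha
    obtain ⟨p, hp, rfl⟩ := ha
    have hp' : p ∈ M.primeFactors := hp
    have hpp := Nat.prime_of_mem_primeFactors hp'
    have : M.factorization p ≠ 0 := by
      rwa [← Nat.support_factorization, Finsupp.mem_support_iff] at hp'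
    calc 2 ≤ p := hpp.two_le
      _ = p ^ 1 := (pow_one p).symm
      _ ≤ _ := Nat.pow_le_pow_right hpp.pos (by omega)
  obtain ⟨σ, hσ⟩ := (Equiv.Perm.exists_with_cycleType_iff (α := Fin n) (m := m)).2
    ⟨by simpa [hsum] using h, h2⟩
  have hdvd : M ∣ orderOf σ := by
    conv_lhs => rw [← Nat.prod_factorization_pow_eq_self hM]
    unfold Finsupp.prod
    rw [Nat.support_factorization]
    apply Finset.prod_dvd_of_isRelPrime
    · intro p hp q hq hpq
      apply Nat.coprime_iff_isRelPrime.1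
      exact Nat.Coprime.pow _ _ ((Nat.coprime_primes (Nat.prime_of_mem_primeFactors hp)
        (Nat.prime_of_mem_primeFactors hq)).2 hpq)
    · intro p hp
      rw [← Equiv.Perm.lcm_cycleType, hσ]
      exact Multiset.dvd_lcm (Multiset.mem_map.2 ⟨p, hp, rfl⟩)
  have h3 : orderOf σ ≤ landau n :=
    Finset.le_sup (f := fun σ : Equiv.Perm (Fin n) => orderOf σ) (Finset.mem_univ σ)
  exact (Nat.le_of_dvd (orderOf_pos σ) hdvd).trans h3

theorem ell_div_prime {p N : ℕ} (hp : p.Prime) (hN : N ≠ 0) (h : p ∣ N) :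
    ell (N / p) + p ≤ ell N := by
  obtain ⟨k, M, hM, rfl⟩ := Nat.exists_eq_pow_mul_and_not_dvd hN p hp.ne_one
  have hk : k ≠ 0 := by
    rintro rfl
    simp at h; exact hM h
  obtain ⟨j, rfl⟩ := Nat.exists_eq_succ_of_ne_zero hk
  have h1 : p ^ (j + 1) * M / p = p ^ j * M := by
    rw [pow_succ, mul_right_comm]; exact Nat.mul_div_cancel _ hp.pos
  simp only [Nat.succ_eq_add_one] at *
  rw [h1, ell_prime_pow_mul hp hk hM]
  rcases Nat.eq_zero_or_pos j with rfl | hj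
  · simp; omega
  · rw [ell_prime_pow_mul hp hj.ne' hM]
    have : p ≤ p ^ j := by
      calc p = p ^ 1 := (pow_one p).symm
        _ ≤ _ := Nat.pow_le_pow_right hp.pos hj
    have := hp.two_le
    rw [pow_succ]
    nlinarith

/-- properties of the largest prime factor -/
theorem maxPrimeFac_spec {N : ℕ} (h : 2 ≤ N) :
    (maxPrimeFac N).Prime ∧ maxPrimeFac N ∣ N ∧ ∀ p, p.Prime → p ∣ N → p ≤ maxPrimeFac N := by
  have hne : N.primeFactors.Nonempty := Nat.nonempty_primeFactors.2 h
  obtain ⟨p, hp, hs⟩ := Finset.exists_mem_eq_sup N.primeFactors hne id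
  have h1 : maxPrimeFac N = p := hs
  rw [h1]
  refine ⟨Nat.prime_of_mem_primeFactors hp, Nat.dvd_of_mem_primeFactors hp, fun q hq hqN => ?_⟩
  rw [← h1]
  exact Finset.le_sup (f := id) (Nat.mem_primeFactors.2 ⟨hq, hqN, by omega⟩)

/-- removing `P`, adding missing primes -/
theorem landau_exch1 {n P q₁ q₂ : ℕ} (hP : P.Prime) (hPN : P ∣ landau n) (h1 : q₁.Prime)
    (h2 : q₂.Prime) (hne : q₁ ≠ q₂) (h1N : ¬ q₁ ∣ landau n) (h2N : ¬ q₂ ∣ landau n)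
    (hprod : P < q₁ * q₂) : P < q₁ + q₂ := by
  by_contra hcon
  obtain ⟨hN0, hN⟩ := landau_spec n
  set N := landau n with hNdef
  obtain ⟨K, hK⟩ := hPN
  have hK0 : K ≠ 0 := by rintro rfl; simp at hK; omega
  have hdiv : N / P = K := by rw [hK]; exact Nat.mul_div_cancel_left _ hP.pos
  have e1 := ell_div_prime hP hN0 ⟨K, hK⟩
  rw [hdiv] at e1
  have a1 : ¬ q₁ ∣ K := fun h => h1N (hK ▸ h.mul_left P)
  have a2 : ¬ q₂ ∣ K * q₁ := fun h => by
    rcases (Nat.Prime.dvd_mul h2).1 h with h | h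
    · exact h2N (hK ▸ h.mul_left P)
    · exact hne ((Nat.prime_dvd_prime_iff_eq h2 h1).1 h).symm
  have e2 : ell (K * q₁ * q₂) = ell K + q₁ + q₂ := by
    rw [ell_mul_prime h2 a2, ell_mul_prime h1 a1]
  have h3 := le_landau (n := n) (M := K * q₁ * q₂)
    (by have := h1.pos; have := h2.pos; positivity) (by omega)
  have : P * K < K * q₁ * q₂ := by
    have := Nat.mul_lt_mul_of_pos_left hprod (Nat.pos_of_ne_zero hK0)
    nlinarith
  rw [← hNdef] at h3
  omega

theorem landau_exch2 {n P p q₁ q₂ : ℕ} (hP : P.Prime) (hPN : P ∣ landau n) (hp : p.Prime)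
    (hpN : p ∣ landau n) (hpP : p ≠ P) (h1 : q₁.Prime)
    (h2 : q₂.Prime) (hne : q₁ ≠ q₂) (h1N : ¬ q₁ ∣ landau n) (h2N : ¬ q₂ ∣ landau n)
    (hprod : p * P < q₁ * q₂) : p + P < q₁ + q₂ := by
  by_contra hcon
  obtain ⟨hN0, hN⟩ := landau_spec n
  set N := landau n with hNdef
  obtain ⟨K', hK'⟩ := hPN
  have hK0' : K' ≠ 0 := by rintro rfl; simp at hK'; omega
  have hdiv : N / P = K' := by rw [hK']; exact Nat.mul_div_cancel_left _ hP.pos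
  have e1 := ell_div_prime hP hN0 ⟨K', hK'⟩
  have hpK : p ∣ K' := by
    rcases (Nat.Prime.dvd_mul hp).1 (hK' ▸ hpN) with h | h
    · exact absurd ((Nat.prime_dvd_prime_iff_eq hp hP).1 h) hpP
    · exact h
  have e1' := ell_div_prime hp hK0' hpK
  obtain ⟨K, hK⟩ := hpK
  have hK0 : K ≠ 0 := by rintro rfl; simp at hK; omega
  have hdiv' : K' / p = K := by rw [hK]; exact Nat.mul_div_cancel_left _ hp.pos
  rw [hdiv] at e1
  rw [hdiv'] at e1'
  have hNK : N = P * p * K := by rw [hK', hK, mul_assoc]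
  have a1 : ¬ q₁ ∣ K := fun h => h1N (hNK ▸ h.mul_left _)
  have a2 : ¬ q₂ ∣ K * q₁ := fun h => by
    rcases (Nat.Prime.dvd_mul h2).1 h with h | h
    · exact h2N (hNK ▸ h.mul_left _)
    · exact hne ((Nat.prime_dvd_prime_iff_eq h2 h1).1 h).symm
  have e2 : ell (K * q₁ * q₂) = ell K + q₁ + q₂ := by
    rw [ell_mul_prime h2 a2, ell_mul_prime h1 a1]
  have h3 := le_landau (n := n) (M := K * q₁ * q₂)
    (by have := h1.pos; have := h2.pos; positivity) (by omega)
  have : P * p * K < K * q₁ * q₂ := by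
    have := Nat.mul_lt_mul_of_pos_left hprod (Nat.pos_of_ne_zero hK0)
    nlinarith
  rw [← hNdef] at h3
  omega

/-- The exchange principle. -/
theorem exchange {n P t : ℕ} (hP : P.Prime) (hPN : P ∣ landau n) (ht : t < P)
    (hgap : ∀ q₁ q₂ : ℕ, q₁.Prime → q₂.Prime → q₁ < q₂ → P < q₁ ^ 2 → q₂ ≤ t → P < q₁ + q₂ →
      ∃ p, p.Prime ∧ P < p ^ 2 ∧ q₁ + q₂ ≤ p + P ∧ p * P < q₁ * q₂) :
    ∑ p ∈ (Finset.range (t+1)).filter (fun p => p.Prime ∧ P < p ^ 2), p ≤ n := by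
  classical
  obtain ⟨hN0, hN⟩ := landau_spec n
  set N := landau n with hNdef
  set S := (Finset.range (t+1)).filter (fun p => p.Prime ∧ P < p ^ 2) with hS
  have memS : ∀ p, p ∈ S ↔ p ≤ t ∧ p.Prime ∧ P < p ^ 2 := by
    intro p; simp [hS]
  set B := S.filter (fun p => ¬ p ∣ N) with hB
  -- at most one missing prime
  have hcard : B.card ≤ 1 := by
    by_contra hc
    have hBne : B.Nonempty := Finset.card_pos.1 (by omega)
    set q₁ := B.min' hBne with hq1
    have hq1B : q₁ ∈ B := Finset.min'_mem B hBne
    obtain ⟨q₂, hq2B, hq12⟩ := Finset.exists_mem_ne (by omega : 1 < B.card) q₁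
    have hle : q₁ ≤ q₂ := Finset.min'_le B q₂ hq2B
    have hlt : q₁ < q₂ := lt_of_le_of_ne hle (Ne.symm hq12)
    obtain ⟨hq1S, hq1N⟩ := Finset.mem_filter.1 hq1B
    obtain ⟨hq2S, hq2N⟩ := Finset.mem_filter.1 hq2B
    obtain ⟨_, hq1p, hq1P⟩ := (memS _).1 hq1S
    obtain ⟨hq2t, hq2p, hq2P⟩ := (memS _).1 hq2S
    have hsum := landau_exch1 hP hPN hq1p hq2p hlt.ne hq1N hq2N (by nlinarith)
    obtain ⟨p, hp, hpP, hpx, hpm⟩ := hgap q₁ q₂ hq1p hq2p hlt hq1P hq2t hsum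
    have hpq : p < q₁ := by
      by_contra hge
      have : q₁ * q₂ < p * P := by
        calc q₁ * q₂ < q₁ * P := Nat.mul_lt_mul_of_pos_left (by omega) hq1p.pos
          _ ≤ p * P := Nat.mul_le_mul_right _ (by omega)
      omega
    have hpN : p ∣ N := by
      by_contra hpn
      have hpB : p ∈ B := Finset.mem_filter.2 ⟨(memS p).2 ⟨by omega, hp, hpP⟩, hpn⟩
      have := Finset.min'_le B p hpB
      omega
    have := landau_exch2 hP hPN hp hpN (by omega) hq1p hq2p hlt.ne hq1N hq2N hpm
    omega
  -- the sum
  have hsplit : ∑ p ∈ S, p = ∑ p ∈ S.filter (fun p => p ∣ N), p + ∑ p ∈ B, p :=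
    (Finset.sum_filter_add_sum_filter_not S (fun p => p ∣ N) _).symm
  have hBsum : ∑ p ∈ B, p ≤ P := by
    rcases Finset.eq_empty_or_nonempty B with h | ⟨q, hq⟩
    · rw [h]; simp
    · have : B = {q} := by
        symm; apply Finset.eq_of_subset_of_card_le (by simpa using hq) (by simpa using hcard)
      rw [this]; simp
      have := ((memS q).1 (Finset.mem_filter.1 hq).1).1
      omega
  have hPnot : P ∉ S.filter (fun p => p ∣ N) := by
    intro h
    have := ((memS P).1 (Finset.mem_filter.1 h).1).1
    omega
  have hins : ∑ p ∈ insert P (S.filter (fun p => p ∣ N)), p ≤ ell N := by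
    unfold ell
    calc _ ≤ ∑ p ∈ insert P (S.filter (fun p => p ∣ N)), p ^ N.factorization p := by
          refine Finset.sum_le_sum fun p hp => ?_
          have hpp : p.Prime ∧ p ∣ N := by
            rcases Finset.mem_insert.1 hp with rfl | h
            · exact ⟨hP, hPN⟩
            · exact ⟨((memS p).1 (Finset.mem_filter.1 h).1).2.1, (Finset.mem_filter.1 h).2⟩
          calc p = p ^ 1 := (pow_one p).symm
            _ ≤ _ := Nat.pow_le_pow_right hpp.1.pos
              (hpp.1.factorization_pos_of_dvd hN0 hpp.2)
      _ ≤ _ := by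
          apply Finset.sum_le_sum_of_subset
          intro p hp
          rcases Finset.mem_insert.1 hp with rfl | h
          · exact Nat.mem_primeFactors.2 ⟨hP, hPN, hN0⟩
          · exact Nat.mem_primeFactors.2
              ⟨((memS p).1 (Finset.mem_filter.1 h).1).2.1, (Finset.mem_filter.1 h).2, hN0⟩
  rw [Finset.sum_insert hPnot] at hins
  omega


/-- trial division by the members of a list -/
def isPB (ds : List ℕ) (n : ℕ) : Bool :=
  Nat.ble 2 n && ds.all (fun d => Nat.blt n (d * d) || !(Nat.beq (n % d) 0))

theorem isPB_of_prime (ds : List ℕ) (hds : ∀ d ∈ ds, 2 ≤ d) (n : ℕ) (hn : n.Prime) :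
    isPB ds n = true := by
  simp only [isPB, Bool.and_eq_true, Nat.ble_eq, List.all_eq_true, Bool.or_eq_true,
    Bool.not_eq_true']
  refine ⟨hn.two_le, fun d hd => ?_⟩
  by_cases h : n % d = 0
  · left
    have h2 := hds d hd
    rcases (Nat.dvd_prime hn).1 (Nat.dvd_of_mod_eq_zero h) with h1 | h1
    · omega
    · subst h1
      rw [Nat.blt_eq]; nlinarith
  · right
    cases h3 : Nat.beq (n % d) 0
    · rfl
    · exact absurd (Nat.eq_of_beq_eq_true h3) h

theorem prime_of_isPB (ds : List ℕ) (B : ℕ) (hds : ∀ d ≤ B, d.Prime → d ∈ ds) (n : ℕ)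
    (hn : n < (B + 1) ^ 2) (h : isPB ds n = true) : n.Prime := by
  simp only [isPB, Bool.and_eq_true, Nat.ble_eq, List.all_eq_true, Bool.or_eq_true,
    Bool.not_eq_true'] at h
  by_contra hnp
  have h1 : n.minFac ^ 2 ≤ n := Nat.minFac_sq_le_self (by omega) hnp
  have h2 : n.minFac.Prime := Nat.minFac_prime (by omega)
  have h3 : n.minFac ≤ B := by
    by_contra hc
    have : (B + 1) ^ 2 ≤ n.minFac ^ 2 := Nat.pow_le_pow_left (by omega) 2
    omega
  rcases h.2 _ (hds _ h3 h2) with h4 | h4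
  · rw [Nat.blt_eq] at h4; nlinarith
  · have h5 : n % n.minFac = 0 := Nat.mod_eq_zero_of_dvd (Nat.minFac_dvd n)
    rw [h5] at h4
    simp at h4

def smallP : List ℕ := [2,3,5,7,11,13,17,19,23,29,31,37,41,43,47,53,59,61,67,71,73,79,83,89,97]

def isP (n : ℕ) : Bool := isPB smallP n

theorem isP_iff (n : ℕ) (hn : n < 10000) : isP n = true ↔ n.Prime := by
  constructor
  · refine prime_of_isPB smallP 99 ?_ n (by omega)
    intro d hd hp
    have h2 := hp.two_le
    interval_cases d <;> first | (exfalso; revert hp; norm_num; done) | simp [smallP]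
  · exact isPB_of_prime smallP (by decide) n

def shiftMul (W L X q : ℕ) : ℕ := ((X &&& (2 ^ (W * (L - q)) - 1)) * q) <<< (W * q)

theorem pack_mod (W : ℕ) (f : ℕ → ℕ) (m n : ℕ) (h : m ≤ n) (hf : ∀ i < n, f i < 2 ^ W) :
    pack W f n % 2 ^ (W * m) = pack W f m := by
  obtain ⟨k, rfl⟩ := Nat.exists_eq_add_of_le h
  rw [pack_split, Nat.add_mul_mod_self_left,
    Nat.mod_eq_of_lt (pack_lt W f m (fun i hi => hf i (by omega)))]

theorem shiftMul_eq (W L q : ℕ) (f : ℕ → ℕ) (hf : ∀ i < L, f i < 2 ^ W) (hq : q ≤ L) :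
    shiftMul W L (pack W f L) q = pack W (fun i => if i < q then 0 else q * f (i - q)) L := by
  unfold shiftMul
  rw [Nat.shiftLeft_eq, Nat.and_two_pow_sub_one_eq_mod, pack_mod W f _ L (by omega) hf]
  obtain ⟨k, rfl⟩ := Nat.exists_eq_add_of_le hq
  rw [pack_split]
  have h0 : pack W (fun i => if i < q then 0 else q * f (i - q)) q = 0 := by
    unfold pack
    apply Finset.sum_eq_zero
    intro i hi
    simp [Finset.mem_range.1 hi]
  rw [h0]
  simp only [Nat.add_sub_cancel_left, show ∀ i, ¬ (q + i < q) from fun i => by omega, if_false]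
  rw [pack_mul]
  ring

/-- `G` is the table of the maximal values of `N` with `ell N ≤ n` and all prime factors `< b`. -/
def Tab (L b : ℕ) (G : ℕ → ℕ) : Prop :=
  ∀ n < L, (∃ M, M ≠ 0 ∧ (∀ p, p.Prime → p ∣ M → p < b) ∧ ell M ≤ n ∧ M = G n) ∧
    ∀ M, M ≠ 0 → (∀ p, p.Prime → p ∣ M → p < b) → ell M ≤ n → M ≤ G n

def dpInner (w L HR X p : ℕ) : ℕ → ℕ → ℕ → ℕ
  | 0, _, acc => acc
  | k + 1, q, acc =>
    if Nat.blt q L then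
      force (packMax w HR (shiftMul (w+1) L X q) acc) (fun acc' => dpInner w L HR X p k (q * p) acc')
    else acc

/-- check that `q * G (n - q) < G n` for all `n < m` and all powers `q`. `X` has `m` digits -/
def dpChk (w m R X p : ℕ) : ℕ → ℕ → Bool
  | 0, _ => true
  | k + 1, q =>
    if Nat.blt q m then
      packLe w m (shiftMul (w+1) m X q + R) X && dpChk w m R X p k (q * p)
    else true

def dpLoop (w L HR TM : ℕ) (K : ℕ → ℕ → Bool) : List (ℕ × ℕ) → ℕ → ℕ → Bool
  | [], b, X => K b X
  | (p, m) :: l, b, X =>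
    Nat.ble b p && Nat.ble m L && Nat.blt p 10000 && isP p &&
      (List.range' b (p - b)).all (fun r => !isP r) &&
    force (X &&& (2 ^ ((w+1) * m) - 1)) (fun Xm => dpChk w m (rep (w+1) m) Xm p 14 p) &&
    force (dpInner w L HR X p 14 p X) (fun X' =>
      Nat.beq (X' &&& TM) 0 && dpLoop w L HR TM K l (p + 1) X')

theorem dpChk_sound (w m p : ℕ) (f : ℕ → ℕ) (hw : 16 ≤ w) (hm : m ≤ 2 ^ 14)
    (hf : ∀ i < m, f i < 2 ^ (w - 15)) (hp : 2 ≤ p) :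
    ∀ k q, dpChk w m (rep (w+1) m) (pack (w+1) f m) p k q = true →
      ∀ j < k, ∀ n < m, q * p ^ j ≤ n → q * p ^ j * f (n - q * p ^ j) < f n := by
  have e : 2 ^ w = 2 ^ (w - 15) * 2 ^ 15 := by rw [← pow_add]; congr 1; omega
  have e1 : 2 ^ (w+1) = 2 * 2 ^ w := by rw [pow_succ]; omega
  have epos : 0 < 2 ^ (w - 15) := by positivity
  intro k
  induction k with
  | zero => intro q _ j hj; omega
  | succ k ih =>
    intro q h j hj n hn hle
    have hqm : q < m := by
      have : q ≤ q * p ^ j := Nat.le_mul_of_pos_right _ (by positivity)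
      omega
    rw [dpChk, if_pos (by rw [Nat.blt_eq]; exact hqm), Bool.and_eq_true] at h
    rcases Nat.eq_zero_or_pos j with rfl | hj0
    · have h1 := h.1
      rw [shiftMul_eq (w+1) m q f (fun i hi => by have := hf i hi; omega) hqm.le,
        rep_eq _ (by omega), ← pack_add] at h1
      have h2 := packLe_sound w _ _ m (fun i hi => ?_) (fun i hi => by have := hf i hi; omega) h1 n hn
      · simp only [pow_zero, mul_one] at hle ⊢
        rw [if_neg (by omega)] at h2
        omega
      · split_ifs with hiq
        · omega
        · have h3 := hf (i - q) (by omega)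
          have : q * f (i - q) ≤ 2 ^ 14 * 2 ^ (w-15) :=
            Nat.mul_le_mul (by omega) h3.le
          omega
    · have := ih (q * p) h.2 (j - 1) (by omega) n hn
      have e2 : q * p * p ^ (j - 1) = q * p ^ j := by
        conv_rhs => rw [show j = (j - 1) + 1 by omega, pow_succ]
        ring
      rw [e2] at this
      exact this hle

theorem dpInner_eq (w L p : ℕ) (f : ℕ → ℕ) (hw : 16 ≤ w) (hL : L ≤ 2 ^ 14)
    (hf : ∀ i < L, f i < 2 ^ (w - 15)) (hp : 2 ≤ p) :
    ∀ k q g, 1 ≤ q → (∀ i < L, g i < 2 ^ w) → ∃ g', (∀ i < L, g' i < 2 ^ w) ∧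
      dpInner w L (2 ^ w * rep (w+1) L) (pack (w+1) f L) p k q (pack (w+1) g L) = pack (w+1) g' L ∧
      (∀ i < L, (g' i = g i ∨ ∃ j, q * p ^ j ≤ i ∧ g' i = q * p ^ j * f (i - q * p ^ j)) ∧
        g i ≤ g' i ∧ ∀ j < k, q * p ^ j ≤ i → q * p ^ j * f (i - q * p ^ j) ≤ g' i) := by
  have e : 2 ^ w = 2 ^ (w - 15) * 2 ^ 15 := by rw [← pow_add]; congr 1; omega
  have e1 : 2 ^ (w+1) = 2 * 2 ^ w := by rw [pow_succ]; omega
  have epos : 0 < 2 ^ (w - 15) := by positivity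
  intro k
  induction k with
  | zero => intro q g _ hg; exact ⟨g, hg, rfl, fun i hi => ⟨Or.inl rfl, le_rfl, fun j hj => by omega⟩⟩
  | succ k ih =>
    intro q g hq1 hg
    by_cases hq : q < L
    · have hsm : ∀ i < L, (if i < q then 0 else q * f (i - q)) < 2 ^ w := by
        intro i hi
        split_ifs with hiq
        · omega
        · have h3 := hf (i - q) (by omega)
          have : q * f (i - q) ≤ 2 ^ 14 * 2 ^ (w-15) :=
            Nat.mul_le_mul (by omega) h3.le
          omega
      have hmax : ∀ i < L, max (if i < q then 0 else q * f (i - q)) (g i) < 2 ^ w :=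
        fun i hi => max_lt (hsm i hi) (hg i hi)
      obtain ⟨g', hg', heq, hprop⟩ := ih (q * p)
        (fun i => max (if i < q then 0 else q * f (i - q)) (g i)) (by nlinarith) hmax
      refine ⟨g', hg', ?_, ?_⟩
      · rw [dpInner, if_pos (by rw [Nat.blt_eq]; exact hq), force_eq,
          shiftMul_eq (w+1) L q f (fun i hi => by have := hf i hi; omega) hq.le,
          packMax_eq w _ _ L hsm hg, heq]
      · intro i hi
        obtain ⟨h1, h2, h3⟩ := hprop i hi
        have e2 : ∀ j, q * p * p ^ j = q * p ^ (j + 1) := fun j => by rw [pow_succ]; ring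
        refine ⟨?_, le_trans (le_max_right _ _) h2, ?_⟩
        · rcases h1 with h1 | ⟨j, hj1, hj2⟩
          · rcases max_choice (if i < q then 0 else q * f (i - q)) (g i) with hm | hm
            · rw [hm] at h1
              by_cases hiq : i < q
              · left
                rw [if_pos hiq] at h1 hm
                rw [if_pos hiq] at h2
                have : g i ≤ g' i := le_trans (le_max_right _ _) h2
                omega
              · right
                rw [if_neg hiq] at h1
                exact ⟨0, by simpa using (by omega : q ≤ i), by simpa using h1⟩
            · left; rw [h1, hm]
          · right
            exact ⟨j + 1, by rw [← e2]; exact hj1, by rw [← e2]; exact hj2⟩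
        · intro j hj hle
          rcases Nat.eq_zero_or_pos j with rfl | hj0
          · simp only [pow_zero, mul_one] at hle ⊢
            have := le_trans (le_max_left _ _) h2
            rwa [if_neg (by omega)] at this
          · have := h3 (j - 1) (by omega)
            rw [e2, show j - 1 + 1 = j by omega] at this
            exact this hle
    · refine ⟨g, hg, ?_, fun i hi => ⟨Or.inl rfl, le_rfl, fun j hj hle => ?_⟩⟩
      · rw [dpInner, if_neg (by rw [Nat.blt_eq]; exact hq)]
      · have : q ≤ q * p ^ j := Nat.le_mul_of_pos_right _ (by positivity)
        omega

theorem Tab_skip {L b c : ℕ} {G : ℕ → ℕ} (h : Tab L b G) (hbc : b ≤ c)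
    (hno : ∀ r, b ≤ r → r < c → ¬ r.Prime) : Tab L c G := by
  have key : ∀ M : ℕ, (∀ p, p.Prime → p ∣ M → p < c) → (∀ p, p.Prime → p ∣ M → p < b) := by
    intro M hM p hp hpM
    by_contra hc
    exact hno p (by omega) (hM p hp hpM) hp
  intro n hn
  obtain ⟨⟨M, h1, h2, h3⟩, h4⟩ := h n hn
  exact ⟨⟨M, h1, fun p hp hpM => lt_of_lt_of_le (h2 p hp hpM) hbc, h3⟩,
    fun M hM hs => h4 M hM (key M hs)⟩

theorem Tab_step {L p : ℕ} (hL : L ≤ 2 ^ 14) {G G' : ℕ → ℕ} (hp : p.Prime) (h : Tab L p G)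
    (h' : ∀ i < L, (G' i = G i ∨ ∃ j, p * p ^ j ≤ i ∧ G' i = p * p ^ j * G (i - p * p ^ j)) ∧
        G i ≤ G' i ∧ ∀ j < 14, p * p ^ j ≤ i → p * p ^ j * G (i - p * p ^ j) ≤ G' i) :
    Tab L (p + 1) G' := by
  intro n hn
  obtain ⟨h1, h2, h3⟩ := h' n hn
  refine ⟨?_, ?_⟩
  · rcases h1 with h1 | ⟨j, hj1, hj2⟩
    · obtain ⟨⟨M, hM, hs, he, hG⟩, -⟩ := h n hn
      exact ⟨M, hM, fun q hq hqM => by have := hs q hq hqM; omega, he, by rw [h1, hG]⟩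
    · obtain ⟨⟨M, hM, hs, he, hG⟩, -⟩ := h (n - p * p ^ j) (by omega)
      have hpM : ¬ p ∣ M := fun hd => by have := hs p hp hd; omega
      refine ⟨p ^ (j+1) * M, ?_, ?_, ?_, ?_⟩
      · have := hp.pos
        positivity
      · intro q hq hqd
        rcases (Nat.Prime.dvd_mul hq).1 hqd with hd | hd
        · have := (Nat.prime_dvd_prime_iff_eq hq hp).1 (hq.dvd_of_dvd_pow hd)
          omega
        · have := hs q hq hd; omega
      · rw [ell_prime_pow_mul hp (by omega) hpM]
        have : p ^ (j+1) = p * p ^ j := by rw [pow_succ]; ring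
        omega
      · rw [hj2, hG, pow_succ]; ring
  · intro M hM hs he
    obtain ⟨k, M', hM', rfl⟩ := Nat.exists_eq_pow_mul_and_not_dvd hM p hp.ne_one
    have hM0 : M' ≠ 0 := by rintro rfl; simp at hM
    have hs' : ∀ q, q.Prime → q ∣ M' → q < p := by
      intro q hq hqd
      have := hs q hq (hqd.mul_left _)
      have : q ≠ p := fun h => hM' (h ▸ hqd)
      omega
    rcases Nat.eq_zero_or_pos k with rfl | hk
    · simp only [pow_zero, one_mul] at he ⊢
      exact ((h n hn).2 M' hM0 hs' he).trans h2
    · rw [ell_prime_pow_mul hp hk.ne' hM'] at he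
      have e2 : p * p ^ (k - 1) = p ^ k := by
        conv_rhs => rw [show k = (k - 1) + 1 by omega, pow_succ]
        ring
      have hk14 : k - 1 < 14 := by
        by_contra hc
        have h5 : 2 ^ 14 ≤ p ^ k :=
          (Nat.pow_le_pow_left hp.two_le 14).trans (Nat.pow_le_pow_right hp.pos (by omega))
        omega
      have := h3 (k - 1) hk14
      rw [e2] at this
      refine le_trans (Nat.mul_le_mul_left _ ?_) (this (by omega))
      exact (h (n - p ^ k) (by omega)).2 M' hM0 hs' (by omega)

theorem Tab_excl {L m p n : ℕ} {G : ℕ → ℕ} (hp : p.Prime) (hmL : m ≤ L) (hL : L ≤ 2 ^ 14)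
    (h : Tab L p G)
    (hchk : ∀ j < 14, ∀ n < m, p * p ^ j ≤ n → p * p ^ j * G (n - p * p ^ j) < G n)
    (hn : n < m) : maxPrimeFac (landau n) ≠ p := by
  intro heq
  obtain ⟨hN0, hN⟩ := landau_spec n
  have h2 : 2 ≤ landau n := by
    by_contra hc
    have h1 : landau n = 1 := by omega
    rw [h1] at heq
    simp [maxPrimeFac] at heq
    exact hp.ne_zero heq.symm
  obtain ⟨-, hd, hmax⟩ := maxPrimeFac_spec h2
  rw [heq] at hd hmax
  obtain ⟨⟨M, hM, hs, he, hG⟩, -⟩ := h n (by omega)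
  have hlow : G n ≤ landau n := hG ▸ le_landau hM he
  obtain ⟨k, M', hM', hk⟩ := Nat.exists_eq_pow_mul_and_not_dvd hN0 p hp.ne_one
  have hM0 : M' ≠ 0 := by rintro rfl; simp at hk; omega
  have hk0 : k ≠ 0 := by
    rintro rfl
    simp at hk
    exact hM' (hk ▸ hd)
  have hs' : ∀ q, q.Prime → q ∣ M' → q < p := by
    intro q hq hqd
    have := hmax q hq (hk ▸ hqd.mul_left _)
    have : q ≠ p := fun h => hM' (h ▸ hqd)
    omega
  have hell : ell (landau n) = p ^ k + ell M' := by
    conv_lhs => rw [hk]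
    exact ell_prime_pow_mul hp hk0 hM'
  have e2 : p * p ^ (k - 1) = p ^ k := by
    conv_rhs => rw [show k = (k - 1) + 1 by omega, pow_succ]
    ring
  have hk14 : k - 1 < 14 := by
    by_contra hc
    have h5 : 2 ^ 14 ≤ p ^ k :=
      (Nat.pow_le_pow_left hp.two_le 14).trans (Nat.pow_le_pow_right hp.pos (by omega))
    omega
  have h3 := hchk (k - 1) hk14 n hn
  rw [e2] at h3
  have h4 := h3 (by omega)
  have h5 := (h (n - p ^ k) (by omega)).2 M' hM0 hs' (by omega)
  have h6 : p ^ k * M' ≤ p ^ k * G (n - p ^ k) := Nat.mul_le_mul_left _ h5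
  omega

theorem topmask_sound (w : ℕ) (hw : 16 ≤ w) (g : ℕ → ℕ) (L : ℕ) (hg : ∀ i < L, g i < 2 ^ w)
    (h : pack (w+1) g L &&& ((2 ^ 15 - 1) * 2 ^ (w - 15) * rep (w+1) L) = 0) :
    ∀ i < L, g i < 2 ^ (w - 15) := by
  have e : 2 ^ w = 2 ^ (w - 15) * 2 ^ 15 := by rw [← pow_add]; congr 1; omega
  have e1 : 2 ^ (w+1) = 2 * 2 ^ w := by rw [pow_succ]; omega
  have epos : 0 < 2 ^ (w - 15) := by positivity
  rw [← pack_const _ (by omega), pack_land _ (by omega) _ _ _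
    (fun i hi => by have := hg i hi; omega) (fun i hi => by omega)] at h
  intro i hi
  have h1 : g i &&& ((2 ^ 15 - 1) * 2 ^ (w - 15)) = 0 := by
    have := pack_inj (w+1) (fun i => g i &&& ((2 ^ 15 - 1) * 2 ^ (w - 15))) (fun _ => 0) L
      (fun i hi => Nat.and_lt_two_pow _ (by omega)) (fun i hi => by positivity)
      (by rw [h]; simp [pack])
    exact this i hi
  by_contra hc
  have h2 : g i / 2 ^ (w - 15) &&& (2 ^ 15 - 1) = 0 := by
    have := congrArg (fun x => x >>> (w - 15)) h1
    simp only [Nat.shiftRight_and_distrib, Nat.zero_shiftRight] at this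
    rw [Nat.shiftRight_eq_div_pow, Nat.shiftRight_eq_div_pow, Nat.mul_div_cancel _ epos] at this
    exact this
  rw [Nat.and_two_pow_sub_one_eq_mod, Nat.mod_eq_of_lt] at h2
  · have := Nat.div_pos (by omega : 2 ^ (w-15) ≤ g i) epos
    omega
  · have := hg i hi
    apply Nat.div_lt_of_lt_mul
    omega

theorem dpLoop_sound (w L : ℕ) (hw : 16 ≤ w) (hL : L ≤ 2 ^ 14) (K : ℕ → ℕ → Bool) :
    ∀ (l : List (ℕ × ℕ)) (b : ℕ) (G : ℕ → ℕ), (∀ i < L, G i < 2 ^ (w - 15)) → Tab L b G →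
      dpLoop w L (2 ^ w * rep (w+1) L) ((2 ^ 15 - 1) * 2 ^ (w - 15) * rep (w+1) L) K l b
        (pack (w+1) G L) = true →
      (∀ pm ∈ l, ∀ n < pm.2, maxPrimeFac (landau n) ≠ pm.1) ∧
      ∃ b' G', (∀ i < L, G' i < 2 ^ (w - 15)) ∧ Tab L b' G' ∧ K b' (pack (w+1) G' L) = true := by
  have e : 2 ^ w = 2 ^ (w - 15) * 2 ^ 15 := by rw [← pow_add]; congr 1; omega
  have e1 : 2 ^ (w+1) = 2 * 2 ^ w := by rw [pow_succ]; omega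
  have epos : 0 < 2 ^ (w - 15) := by positivity
  intro l
  induction l with
  | nil =>
    intro b G hG hT h
    exact ⟨fun pm hpm => by simp at hpm, b, G, hG, hT, h⟩
  | cons a l ih =>
    obtain ⟨p, m⟩ := a
    intro b G hG hT h
    rw [dpLoop, force_eq, force_eq] at h
    simp only [Bool.and_eq_true, Nat.ble_eq, Nat.blt_eq, List.all_eq_true] at h
    obtain ⟨⟨⟨⟨⟨⟨hbp, hmL⟩, hp1⟩, hpP⟩, hskip⟩, hchk⟩, htop, hrest⟩ := h
    have hp := (isP_iff p hp1).1 hpP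
    have hT' : Tab L p G := by
      refine Tab_skip hT hbp (fun r hr1 hr2 hr => ?_)
      have h1 := hskip r (by rw [List.mem_range'_1]; omega)
      rw [(isP_iff r (by omega)).2 hr] at h1
      simp at h1
    obtain ⟨g', hg', heq, hprop⟩ := dpInner_eq w L p G hw hL hG hp.two_le 14 p G hp.one_lt.le
      (fun i hi => by have := hG i hi; omega)
    rw [heq] at htop hrest
    have hg'' := topmask_sound w hw g' L hg' (Nat.eq_of_beq_eq_true htop)
    rw [Nat.and_two_pow_sub_one_eq_mod, pack_mod _ _ _ _ hmL (fun i hi => by have := hG i hi; omega)] at hchk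
    have hc := dpChk_sound w m p G hw (by omega) (fun i hi => hG i (by omega)) hp.two_le 14 p hchk
    obtain ⟨ih1, ih2⟩ := ih (p + 1) g' hg'' (Tab_step hL hp hT' hprop) hrest
    refine ⟨fun pm hpm => ?_, ih2⟩
    rcases List.mem_cons.1 hpm with rfl | hpm
    · intro n hn
      exact Tab_excl hp hmL hL hT' hc hn
    · exact ih1 pm hpm

theorem Tab_init (L : ℕ) : Tab L 2 (fun _ => 1) := by
  intro n _
  refine ⟨⟨1, one_ne_zero, fun p hp h => ?_, by simp [ell], rfl⟩, fun M hM hs _ => ?_⟩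
  · have := hp.two_le
    have := Nat.le_of_dvd one_pos h
    have := Nat.dvd_one.1 h
    omega
  · by_contra hc
    have hc' : ¬ M ≤ 1 := hc
    have h1 : M ≠ 1 := by omega
    have h2 := hs _ (Nat.minFac_prime h1) (Nat.minFac_dvd M)
    have := (Nat.minFac_prime h1).two_le
    omega

def dpRun (w L : ℕ) (K : ℕ → ℕ → Bool) (l : List (ℕ × ℕ)) : Bool :=
  force (rep (w+1) L) (fun R =>
    force (2 ^ w * R) (fun HR =>
      force ((2 ^ 15 - 1) * 2 ^ (w - 15) * R) (fun TM => dpLoop w L HR TM K l 2 R)))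

theorem dpRun_sound (w L : ℕ) (hw : 16 ≤ w) (hL : L ≤ 2 ^ 14) (K : ℕ → ℕ → Bool)
    (l : List (ℕ × ℕ)) (h : dpRun w L K l = true) :
    (∀ pm ∈ l, ∀ n < pm.2, maxPrimeFac (landau n) ≠ pm.1) ∧
      ∃ b' G', (∀ i < L, G' i < 2 ^ (w - 15)) ∧ Tab L b' G' ∧ K b' (pack (w+1) G' L) = true := by
  rw [dpRun, force_eq, force_eq, force_eq] at h
  conv at h => lhs; arg 8; rw [rep_eq _ (by omega)]
  exact dpLoop_sound w L hw hL K l 2 _ (fun i hi => Nat.one_lt_two_pow (by omega)) (Tab_init L) h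


/-- The primes `p ≤ 467`, with bounds for the values `n` that are excluded by dynamic programming. -/
def dpList : List (ℕ × ℕ) := [
(2, 0), (3, 0), (5, 8), (7, 13), (11, 24), (13, 31), (17, 47), (19, 57), (23, 77), (29, 112), (31,
125), (37, 168), (41, 199), (43, 215), (47, 251), (53, 307), (59, 369), (61, 391), (67, 459), (71,
507), (73, 531), (79, 609), (83, 664), (89, 748), (97, 870), (101, 933), (103, 965), (107, 1032),
(109, 1066), (113, 1135), (127, 1393), (131, 1471), (137, 1592), (139, 1632), (149, 1845), (151,
1890), (157, 2025), (163, 2162), (167, 2258), (173, 2404), (179, 2553), (181, 2603), (191, 2866),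
(193, 2919), (197, 3025), (199, 3082), (211, 3419), (223, 3774), (227, 3895), (229, 3959), (233,
4082), (239, 4273), (241, 4333), (251, 4664), (257, 4865), (263, 5069), (269, 5276), (271, 5348),
(277, 5559), (281, 5707), (283, 5781), (293, 6150), (307, 6686), (311, 6844), (313, 6924), (317,
7085), (331, 7659), (337, 7910), (347, 8336), (349, 8422), (353, 8596), (359, 8859), (367, 9225),
(373, 9495), (379, 9769), (383, 9956), (389, 10243), (397, 10624), (401, 10821), (409, 11215),
(419, 11712), (421, 11817), (431, 12328), (433, 12428), (439, 12745), (443, 12949), (449, 13272),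
(457, 13702), (461, 13927), (463, 14032), (467, 14243)]

theorem dp_ok : dpRun 575 14243 (fun _ _ => true) dpList = true := by decide +kernel

/-- The strict inequality `P ^ 2 / (n log n) < 43 ^ 2 / (215 log 215)`. -/
def Good (P n : ℕ) : Prop :=
  (P : ℝ) ^ 2 * (215 * Real.log 215) < 43 ^ 2 * (n * Real.log n)

def good (P m : ℕ) : Bool :=
  Nat.blt (P * P * (215 * 7749 * 64)) (1849 * 1000 * m * Nat.log2 (m ^ 64))

theorem log215_lt : Real.log 215 < 7749 / 1000 * Real.log 2 := by
  have h : (215 : ℝ) ^ 1000 < 2 ^ 7749 := by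
    have : (215 : ℕ) ^ 1000 < 2 ^ 7749 := by decide +kernel
    exact_mod_cast this
  have h2 := Real.log_lt_log (by positivity) h
  rw [Real.log_pow, Real.log_pow] at h2
  push_cast at h2
  linarith

theorem good_sound {P m n : ℕ} (h : good P m = true) (hm : 1 ≤ m) (hmn : m ≤ n) : Good P n := by
  rw [good, Nat.blt_eq] at h
  have hlog : (Nat.log2 (m ^ 64) : ℝ) * Real.log 2 ≤ 64 * Real.log m := by
    have h1 : 2 ^ Nat.log2 (m ^ 64) ≤ m ^ 64 := Nat.log2_self_le (by positivity)
    have h2 : (2 : ℝ) ^ Nat.log2 (m ^ 64) ≤ (m : ℝ) ^ 64 := by exact_mod_cast h1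
    have h3 := Real.log_le_log (by positivity) h2
    rw [Real.log_pow, Real.log_pow] at h3
    exact_mod_cast h3
  have hl2 : 0 < Real.log 2 := Real.log_pos (by norm_num)
  have hm' : (1 : ℝ) ≤ m := by exact_mod_cast hm
  have hmn' : (m : ℝ) ≤ n := by exact_mod_cast hmn
  have hmono : (m : ℝ) * Real.log m ≤ n * Real.log n :=
    mul_le_mul hmn' (Real.log_le_log (by linarith) hmn') (Real.log_nonneg hm') (by linarith)
  have h' : (P : ℝ) * P * (215 * 7749 * 64) < 1849 * 1000 * m * (Nat.log2 (m ^ 64) : ℕ) := by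
    exact_mod_cast h
  have h4 := mul_lt_mul_of_pos_right h' hl2
  have h5 : (m : ℝ) * ((Nat.log2 (m ^ 64) : ℝ) * Real.log 2) ≤ m * (64 * Real.log m) :=
    mul_le_mul_of_nonneg_left hlog (by linarith)
  have h6 : (P : ℝ) ^ 2 * Real.log 215 ≤ P ^ 2 * (7749 / 1000 * Real.log 2) :=
    mul_le_mul_of_nonneg_left log215_lt.le (by positivity)
  unfold Good
  nlinarith

theorem dp_cover : ((List.range 468).all fun p => !isP p ||
    dpList.any fun pm => Nat.beq pm.1 p &&
      (if Nat.ble p 3 then good p (p + 2) else if Nat.beq p 43 then Nat.beq pm.2 215 && good 43 216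
        else good p pm.2 && Nat.ble 1 pm.2)) = true := by
  decide +kernel

theorem landau4 : maxPrimeFac (landau 4) ≠ 3 := by
  intro heq
  obtain ⟨hN0, hN⟩ := landau_spec 4
  have h4 : 4 ≤ landau 4 := by
    apply le_landau (by norm_num)
    rw [show 4 = 2 ^ 2 by norm_num, ell_prime_pow Nat.prime_two (by norm_num)]
  obtain ⟨-, hd, -⟩ := maxPrimeFac_spec (by omega : 2 ≤ landau 4)
  rw [heq] at hd
  have e1 := ell_div_prime Nat.prime_three hN0 hd
  have hK : landau 4 / 3 ≠ 1 := fun h => by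
    obtain ⟨k, hk⟩ := hd
    omega
  have hK0 : landau 4 / 3 ≠ 0 := by omega
  have e2 := ell_div_prime (Nat.minFac_prime hK) hK0 (Nat.minFac_dvd _)
  have := (Nat.minFac_prime hK).two_le
  omega

theorem landau_small_range {P n : ℕ} (hP : P.Prime) (hP4 : P < 468) (hn : 4 ≤ n)
    (h : maxPrimeFac (landau n) = P) : Good P n ∨ (P = 43 ∧ n = 215) := by
  have hc := List.all_eq_true.1 dp_cover P (List.mem_range.2 hP4)
  rw [(isP_iff P (by omega)).2 hP] at hc
  simp only [Bool.not_true, Bool.false_or, List.any_eq_true, Bool.and_eq_true] at hc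
  obtain ⟨⟨p, m⟩, hmem, heq, hc⟩ := hc
  have hpP := Nat.eq_of_beq_eq_true heq
  simp only at hpP
  subst hpP
  have hdp := (dpRun_sound 575 14243 (by norm_num) (by norm_num) _ _ dp_ok).1 _ hmem n
  simp only at hdp hc
  by_cases h3 : p ≤ 3
  · rw [if_pos (by rw [Nat.ble_eq]; exact h3)] at hc
    left
    by_cases hn4 : p + 2 ≤ n
    · exact good_sound hc (by omega) hn4
    · have h1 : n = 4 := by omega
      have h2 : p = 3 := by omega
      subst h1; subst h2
      exact absurd h landau4
  rw [if_neg (by rw [Nat.ble_eq]; exact h3)] at hc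
  by_cases h43 : p = 43
  · rw [if_pos (by subst h43; rfl), Bool.and_eq_true] at hc
    have hm := Nat.eq_of_beq_eq_true hc.1
    subst hm; subst h43
    rcases lt_trichotomy n 215 with h1 | h1 | h1
    · exact absurd h (hdp h1)
    · exact Or.inr ⟨rfl, h1⟩
    · exact Or.inl (good_sound hc.2 (by norm_num) (by omega))
  · rw [if_neg (fun h => h43 (Nat.eq_of_beq_eq_true h)), Bool.and_eq_true, Nat.ble_eq] at hc
    left
    by_cases hnm : n < m
    · exact absurd h (hdp hnm)
    · exact good_sound hc.1 hc.2 (by omega)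

def dpList41 : List (ℕ × ℕ) := [(2, 0), (3, 0), (5, 0), (7, 0), (11, 0), (13, 0), (17, 0), (19, 0),
  (23, 0), (29, 0), (31, 0), (37, 0), (41, 0)]

theorem dp41_ok : dpRun 127 216 (fun b X => Nat.beq b 42 &&
    Nat.blt (X / 2 ^ (128 * 215)) 103489212907080) dpList41 = true := by decide +kernel

theorem le_landau215 : 103489212907080 ≤ landau 215 := by
  apply le_landau (by norm_num)
  have e : 103489212907080
      = 2 ^ 3 * (3 ^ 2 * (5 ^ 1 * (7 ^ 1 * (11 ^ 1 * (13 ^ 1 * (17 ^ 1 * (19 ^ 1 * (23 ^ 1 *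
        (29 ^ 1 * (31 ^ 1 * 43 ^ 1)))))))))) := by norm_num
  rw [e]
  rw [ell_prime_pow_mul (by norm_num) (by norm_num) (by norm_num),
    ell_prime_pow_mul (by norm_num) (by norm_num) (by norm_num),
    ell_prime_pow_mul (by norm_num) (by norm_num) (by norm_num),
    ell_prime_pow_mul (by norm_num) (by norm_num) (by norm_num),
    ell_prime_pow_mul (by norm_num) (by norm_num) (by norm_num),
    ell_prime_pow_mul (by norm_num) (by norm_num) (by norm_num),
    ell_prime_pow_mul (by norm_num) (by norm_num) (by norm_num),
    ell_prime_pow_mul (by norm_num) (by norm_num) (by norm_num),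
    ell_prime_pow_mul (by norm_num) (by norm_num) (by norm_num),
    ell_prime_pow_mul (by norm_num) (by norm_num) (by norm_num),
    ell_prime_pow_mul (by norm_num) (by norm_num) (by norm_num),
    ell_prime_pow (by norm_num) (by norm_num)]
  norm_num

theorem landau215_ge : 43 ≤ maxPrimeFac (landau 215) := by
  obtain ⟨b, G, hG, hT, hK⟩ := (dpRun_sound 127 216 (by norm_num) (by norm_num) _ _ dp41_ok).2
  rw [Bool.and_eq_true, Nat.blt_eq] at hK
  obtain ⟨hb, hX⟩ := hK
  have hb' := Nat.eq_of_beq_eq_true hb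
  subst hb'
  rw [show 216 = 215 + 1 from rfl, pack_split, Nat.add_mul_div_left _ _ (by positivity),
    Nat.div_eq_of_lt (pack_lt _ _ _ (fun i hi => lt_of_lt_of_le (hG i (by omega))
      (Nat.pow_le_pow_right (by norm_num) (by norm_num))))] at hX
  have h1 : G 215 < 103489212907080 := by simpa [pack] using hX
  by_contra hc
  have h215 := le_landau215
  obtain ⟨-, -, hmax⟩ := maxPrimeFac_spec (by omega : 2 ≤ landau 215)
  have := (hT 215 (by norm_num)).2 (landau 215) (landau_spec 215).1 (fun p hp hpd => by
    have h2 := hmax p hp hpd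
    have : p ≠ 42 := by rintro rfl; revert hp; norm_num
    omega) (landau_spec 215).2
  omega


/-- the primes below `5410` -/
def primeL : List ℕ := [
  2,3,5,7,11,13,17,19,23,29,31,37,41,43,47,53,59,61,67,71,73,79,83,89,97,101,103,107,109,113,127,
  131,137,139,149,151,157,163,167,173,179,181,191,193,197,199,211,223,227,229,233,239,241,251,257,
  263,269,271,277,281,283,293,307,311,313,317,331,337,347,349,353,359,367,373,379,383,389,397,401,
  409,419,421,431,433,439,443,449,457,461,463,467,479,487,491,499,503,509,521,523,541,547,557,563,
  569,571,577,587,593,599,601,607,613,617,619,631,641,643,647,653,659,661,673,677,683,691,701,709,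
  719,727,733,739,743,751,757,761,769,773,787,797,809,811,821,823,827,829,839,853,857,859,863,877,
  881,883,887,907,911,919,929,937,941,947,953,967,971,977,983,991,997,1009,1013,1019,1021,1031,
  1033,1039,1049,1051,1061,1063,1069,1087,1091,1093,1097,1103,1109,1117,1123,1129,1151,1153,1163,
  1171,1181,1187,1193,1201,1213,1217,1223,1229,1231,1237,1249,1259,1277,1279,1283,1289,1291,1297,
  1301,1303,1307,1319,1321,1327,1361,1367,1373,1381,1399,1409,1423,1427,1429,1433,1439,1447,1451,
  1453,1459,1471,1481,1483,1487,1489,1493,1499,1511,1523,1531,1543,1549,1553,1559,1567,1571,1579,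
  1583,1597,1601,1607,1609,1613,1619,1621,1627,1637,1657,1663,1667,1669,1693,1697,1699,1709,1721,
  1723,1733,1741,1747,1753,1759,1777,1783,1787,1789,1801,1811,1823,1831,1847,1861,1867,1871,1873,
  1877,1879,1889,1901,1907,1913,1931,1933,1949,1951,1973,1979,1987,1993,1997,1999,2003,2011,2017,
  2027,2029,2039,2053,2063,2069,2081,2083,2087,2089,2099,2111,2113,2129,2131,2137,2141,2143,2153,
  2161,2179,2203,2207,2213,2221,2237,2239,2243,2251,2267,2269,2273,2281,2287,2293,2297,2309,2311,
  2333,2339,2341,2347,2351,2357,2371,2377,2381,2383,2389,2393,2399,2411,2417,2423,2437,2441,2447,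
  2459,2467,2473,2477,2503,2521,2531,2539,2543,2549,2551,2557,2579,2591,2593,2609,2617,2621,2633,
  2647,2657,2659,2663,2671,2677,2683,2687,2689,2693,2699,2707,2711,2713,2719,2729,2731,2741,2749,
  2753,2767,2777,2789,2791,2797,2801,2803,2819,2833,2837,2843,2851,2857,2861,2879,2887,2897,2903,
  2909,2917,2927,2939,2953,2957,2963,2969,2971,2999,3001,3011,3019,3023,3037,3041,3049,3061,3067,
  3079,3083,3089,3109,3119,3121,3137,3163,3167,3169,3181,3187,3191,3203,3209,3217,3221,3229,3251,
  3253,3257,3259,3271,3299,3301,3307,3313,3319,3323,3329,3331,3343,3347,3359,3361,3371,3373,3389,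
  3391,3407,3413,3433,3449,3457,3461,3463,3467,3469,3491,3499,3511,3517,3527,3529,3533,3539,3541,
  3547,3557,3559,3571,3581,3583,3593,3607,3613,3617,3623,3631,3637,3643,3659,3671,3673,3677,3691,
  3697,3701,3709,3719,3727,3733,3739,3761,3767,3769,3779,3793,3797,3803,3821,3823,3833,3847,3851,
  3853,3863,3877,3881,3889,3907,3911,3917,3919,3923,3929,3931,3943,3947,3967,3989,4001,4003,4007,
  4013,4019,4021,4027,4049,4051,4057,4073,4079,4091,4093,4099,4111,4127,4129,4133,4139,4153,4157,
  4159,4177,4201,4211,4217,4219,4229,4231,4241,4243,4253,4259,4261,4271,4273,4283,4289,4297,4327,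
  4337,4339,4349,4357,4363,4373,4391,4397,4409,4421,4423,4441,4447,4451,4457,4463,4481,4483,4493,
  4507,4513,4517,4519,4523,4547,4549,4561,4567,4583,4591,4597,4603,4621,4637,4639,4643,4649,4651,
  4657,4663,4673,4679,4691,4703,4721,4723,4729,4733,4751,4759,4783,4787,4789,4793,4799,4801,4813,
  4817,4831,4861,4871,4877,4889,4903,4909,4919,4931,4933,4937,4943,4951,4957,4967,4969,4973,4987,
  4993,4999,5003,5009,5011,5021,5023,5039,5051,5059,5077,5081,5087,5099,5101,5107,5113,5119,5147,
  5153,5167,5171,5179,5189,5197,5209,5227,5231,5233,5237,5261,5273,5279,5281,5297,5303,5309,5323,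
  5333,5347,5351,5381,5387,5393,5399,5407]

theorem primeL_eq : (List.range 5410).filter isP = primeL := by decide +kernel

theorem mem_primeL {n : ℕ} : n ∈ primeL ↔ n < 5410 ∧ n.Prime := by
  rw [← primeL_eq, List.mem_filter, List.mem_range]
  constructor
  · rintro ⟨h1, h2⟩; exact ⟨h1, (isP_iff n (by omega)).1 h2⟩
  · rintro ⟨h1, h2⟩; exact ⟨h1, (isP_iff n (by omega)).2 h2⟩

theorem primeL_nodup : primeL.Nodup := by
  rw [← primeL_eq]; exact List.nodup_range.filter _

def gapChk (P Q T X : ℕ) : ℕ → List ℕ → Bool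
  | a, [] => Nat.blt X (a + 1)
  | a, b :: l =>
    if Nat.blt X (a + 1) then true
    else if Nat.ble (b * b) Q then gapChk P Q T X a l
    else Nat.blt (b * P) (T * (a + 1 + P - T)) && gapChk P Q T X b l

theorem gapChk_sound (P Q T X : ℕ) (hT : T ≤ P) : ∀ (l : List ℕ) (a : ℕ), gapChk P Q T X a l = true →
    ∀ x, a + 1 ≤ x → x ≤ X → ∃ p ∈ l, Q < p ^ 2 ∧ x ≤ p ∧ p * P < T * (x + P - T) := by
  intro l
  induction l with
  | nil =>
    intro a h x h1 h2
    rw [gapChk, Nat.blt_eq] at h; omega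
  | cons b l ih =>
    intro a h x h1 h2
    rw [gapChk] at h
    split_ifs at h with h3 h4
    · rw [Nat.blt_eq] at h3; omega
    · obtain ⟨p, hp, h5⟩ := ih a h x h1 h2
      exact ⟨p, List.mem_cons_of_mem _ hp, h5⟩
    · rw [Bool.and_eq_true, Nat.blt_eq] at h
      rw [Nat.ble_eq] at h4
      by_cases hx : x ≤ b
      · refine ⟨b, List.mem_cons_self, by rw [pow_two]; omega, hx, lt_of_lt_of_le h.1 ?_⟩
        exact Nat.mul_le_mul_left _ (by omega)
      · obtain ⟨p, hp, h5⟩ := ih b h.2 x (by omega) h2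
        exact ⟨p, List.mem_cons_of_mem _ hp, h5⟩

def sumChk (P T : ℕ) : ℕ → List ℕ → ℕ
  | acc, [] => acc
  | acc, b :: l =>
    if Nat.blt T b then acc
    else if Nat.ble (b * b) P then sumChk P T acc l
    else force (acc + b) (fun acc' => sumChk P T acc' l)

theorem sumChk_le (P T : ℕ) : ∀ (l : List ℕ) (acc : ℕ), sumChk P T acc l ≤
    acc + (l.filter (fun p => p ≤ T ∧ P < p ^ 2)).sum := by
  intro l
  induction l with
  | nil => intro acc; simp [sumChk]
  | cons b l ih =>
    intro acc
    rw [sumChk]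
    split_ifs with h1 h2
    · exact Nat.le_add_right _ _
    · rw [Nat.ble_eq] at h2
      rw [List.filter_cons_of_neg (by simp only [decide_eq_true_eq, pow_two]; omega)]
      exact ih acc
    · rw [Nat.ble_eq] at h2
      rw [Nat.blt_eq] at h1
      rw [List.filter_cons_of_pos (by simp only [decide_eq_true_eq, pow_two]; omega), force_eq, List.sum_cons]
      have := ih (acc + b)
      omega

theorem sumChk_primeL {P T : ℕ} : sumChk P T 0 primeL ≤
    ∑ p ∈ (Finset.range (T+1)).filter (fun p => p.Prime ∧ P < p^2), p := by
  refine (sumChk_le P T primeL 0).trans ?_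
  rw [zero_add]
  have h := List.sum_toFinset (fun p : ℕ => p) (primeL_nodup.filter (fun p => p ≤ T ∧ P < p ^ 2))
  rw [List.map_id'] at h
  rw [← h]
  apply Finset.sum_le_sum_of_subset
  intro p hp
  simp only [List.mem_toFinset, List.mem_filter, decide_eq_true_eq] at hp
  simp only [Finset.mem_filter, Finset.mem_range]
  exact ⟨by omega, (mem_primeL.1 hp.1).2, hp.2.2⟩

theorem prod_ge {q₁ q₂ P T : ℕ} (h1 : q₁ ≤ T) (h2 : q₂ ≤ T) (hs : P < q₁ + q₂) (hT : T ≤ P) :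
    T * ((q₁ + q₂ - P) + P - T) ≤ q₁ * q₂ := by
  have e : (q₁ + q₂ - P) + P - T = q₁ + q₂ - T := by omega
  rw [e]
  obtain ⟨a, rfl⟩ := Nat.exists_eq_add_of_le h1
  have : q₁ + q₂ - (q₁ + a) = q₂ - a := by omega
  rw [this]
  by_cases h : a ≤ q₂
  · obtain ⟨b, rfl⟩ := Nat.exists_eq_add_of_le h
    have : a + b - a = b := by omega
    rw [this]
    nlinarith
  · rw [Nat.sub_eq_zero_of_le (by omega)]; simp


theorem exchange_range {n P A Q T : ℕ} (hP : P.Prime) (hPN : P ∣ landau n) (hA : A ≤ P)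
    (hQ : P ≤ Q) (hT : T < A)
    (hg : ∀ x, 1 ≤ x → x ≤ 2 * T - A → ∃ p, p.Prime ∧ Q < p ^ 2 ∧ x ≤ p ∧
      p * A < T * (x + A - T)) :
    ∑ p ∈ (Finset.range (T+1)).filter (fun p => p.Prime ∧ Q < p^2), p ≤ n := by
  refine le_trans ?_ (exchange hP hPN (lt_of_lt_of_le hT hA) ?_)
  · apply Finset.sum_le_sum_of_subset
    intro p hp
    simp only [Finset.mem_filter, Finset.mem_range] at hp ⊢
    exact ⟨hp.1, hp.2.1, lt_of_le_of_lt hQ hp.2.2⟩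
  · intro q₁ q₂ _ _ hlt _ h2 h3
    obtain ⟨p, hp, h4, h5, h6⟩ := hg (q₁ + q₂ - P) (by omega) (by omega)
    refine ⟨p, hp, by omega, by omega, ?_⟩
    have h7 := prod_ge (by omega : q₁ ≤ T) h2 h3 (by omega : T ≤ P)
    refine lt_of_lt_of_le ?_ h7
    obtain ⟨a, rfl⟩ := Nat.exists_eq_add_of_le hA
    obtain ⟨c, rfl⟩ := Nat.exists_eq_add_of_lt hT
    set x := q₁ + q₂ - (T + c + 1 + a) with hx
    have e1 : x + (T + c + 1) - T = x + (c + 1) := by omega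
    have e2 : x + (T + c + 1 + a) - T = x + (c + 1) + a := by omega
    rw [e1] at h6
    rw [e2]
    have h8 : p ≤ T := by
      by_contra h9
      have : x + (c + 1) < T + c + 1 := by omega
      have : T * (x + (c+1)) ≤ p * (T + c + 1) := Nat.mul_le_mul (by omega) (by omega)
      omega
    have : p * a ≤ T * a := Nat.mul_le_mul_right _ h8
    nlinarith

def exL : List (ℕ × ℕ × ℕ) := [
  (487, 487, 430), (491, 503, 437), (509, 523, 449), (541, 547, 475), (557, 569, 489), (571,
  599, 510), (601, 613, 534), (617, 619, 542), (641, 661, 575), (673, 677, 591), (683, 683,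
  596), (691, 701, 607), (709, 709, 616), (719, 727, 621), (739, 739, 631), (751, 761, 648),
  (769, 809, 690), (811, 839, 729), (853, 887, 757), (907, 977, 834), (983, 1021, 878), (1031,
  1069, 935), (1087, 1129, 975), (1151, 1193, 1019), (1201, 1259, 1077), (1277, 1373, 1173),
  (1381, 1471, 1252), (1481, 1549, 1305), (1553, 1627, 1406), (1637, 1733, 1482), (1741, 1801,
  1534), (1811, 1847, 1569), (1861, 1987, 1692), (1993, 2143, 1815), (2153, 2311, 1992), (2333,
  2539, 2142), (2543, 2777, 2352), (2789, 3001, 2550), (3011, 3259, 2744), (3271, 3631, 3066),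
  (3637, 4001, 3387), (4003, 4441, 3736), (4447, 4973, 4197), (4987, 5483, 4642)]

theorem exL_ok : exL.all (fun r => Nat.blt r.2.2 r.1 && gapChk r.1 r.2.1 r.2.2 (2 * r.2.2 - r.1) 0 primeL &&
    force (sumChk r.2.1 r.2.2 0 primeL) (fun s => Nat.ble 1 s && good r.2.1 s)) = true := by
  decide +kernel

def exBad : List (ℕ × ℕ × ℕ × List ℕ) := [
  (479, 421, 317, [331, 337, 347, 349, 353, 359, 367, 373, 379, 383, 389, 397, 401, 409, 419, 421]),
  (631, 571, 467, [479, 487, 491, 499, 503, 509, 521, 523, 541, 547, 557, 563, 569, 571]),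
  (733, 631, 523, [541, 547, 557, 563, 569, 571, 577, 587, 593, 599, 601, 607, 613, 617, 619, 631]),
  (743, 659, 523, [541, 547, 557, 563, 569, 571, 577, 587, 593, 599, 601, 607, 613, 617, 619, 631, 641, 643, 647, 653, 659])]

theorem exCover : (primeL.drop 91).all (fun p => exL.any (fun r => Nat.ble r.1 p && Nat.ble p r.2.1)
    || exBad.any (fun q => Nat.beq q.1 p)) = true := by decide +kernel

def pairChk (P X : ℕ) (l : List ℕ) : Bool :=
  l.all (fun q₁ => l.all (fun q₂ => Nat.ble q₂ q₁ || Nat.ble (q₁ + q₂) (P + X) ||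
      l.any (fun p => Nat.ble (q₁ + q₂) (p + P) && Nat.blt P (p * p) &&
        Nat.blt (p * P) (q₁ * q₂))))

theorem exBad_ok : exBad.all (fun r => pairChk r.1 r.2.2.1 r.2.2.2 && Nat.blt r.2.1 r.1 &&
    gapChk r.1 r.1 r.2.1 r.2.2.1 0 primeL &&
    decide (primeL.filter (fun p => Nat.blt r.2.2.1 p && Nat.ble p r.2.1) = r.2.2.2) &&
    force (sumChk r.1 r.2.1 0 primeL) (fun s => Nat.ble 1 s && good r.1 s)) = true := by
  decide +kernel

theorem exact_range {P n : ℕ} (hP : P.Prime) (h1 : 468 ≤ P) (h2 : P < 5410)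
    (hd : P ∣ landau n) : Good P n := by
  have hm : P ∈ primeL.drop 91 := by
    have h := mem_primeL.2 ⟨h2, hP⟩
    rw [← List.take_append_drop 91 primeL, List.mem_append] at h
    rcases h with h | h
    · exfalso
      have h3 : (primeL.take 91).all (fun p => Nat.blt p 468) = true := by decide +kernel
      have := List.all_eq_true.1 h3 P h
      rw [Nat.blt_eq] at this
      omega
    · exact h
  have hc := List.all_eq_true.1 exCover P hm
  simp only [Bool.or_eq_true, List.any_eq_true, Bool.and_eq_true, Nat.ble_eq] at hc
  rcases hc with ⟨⟨A, Q, T⟩, hr, hA, hQ⟩ | ⟨⟨A, T, X, l⟩, hr, hA⟩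
  · have h := List.all_eq_true.1 exL_ok _ hr
    simp only [Bool.and_eq_true, Nat.blt_eq, force_eq, Nat.ble_eq] at h hA hQ
    obtain ⟨⟨hT, hg⟩, h3, h4⟩ := h
    have h5 : ∑ p ∈ (Finset.range (T+1)).filter (fun p => p.Prime ∧ Q < p^2), p ≤ n := by
      refine exchange_range hP hd hA hQ hT ?_
      intro x hx1 hx2
      obtain ⟨p, hp, h6⟩ := gapChk_sound A Q T _ hT.le _ _ hg x hx1 hx2
      exact ⟨p, (mem_primeL.1 hp).2, h6⟩
    have h6 := good_sound h4 h3 (sumChk_primeL.trans h5)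
    unfold Good at h6 ⊢
    refine lt_of_le_of_lt ?_ h6
    have : (P : ℝ) ≤ Q := by exact_mod_cast hQ
    gcongr
  · have h := List.all_eq_true.1 exBad_ok _ hr
    simp only [Bool.and_eq_true, Nat.blt_eq, force_eq, Nat.ble_eq, decide_eq_true_eq] at h hA
    have hA := Nat.eq_of_beq_eq_true hA
    subst hA
    obtain ⟨⟨⟨⟨hpc, hT⟩, hg⟩, hl⟩, h3, h4⟩ := h
    refine good_sound h4 h3 (sumChk_primeL.trans (exchange hP hd hT ?_))
    intro q₁ q₂ hq1 hq2 hlt hsq h7 h8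
    by_cases hx : q₁ + q₂ - A ≤ X
    · obtain ⟨p, hp, h9, h10, h11⟩ := gapChk_sound A A T _ hT.le _ _ hg (q₁ + q₂ - A) (by omega) hx
      exact ⟨p, (mem_primeL.1 hp).2, h9, by omega,
        lt_of_lt_of_le h11 (prod_ge (by omega) h7 h8 hT.le)⟩
    · have hm1 : q₁ ∈ l := by
        rw [← hl, List.mem_filter, mem_primeL]
        simp only [Bool.and_eq_true, Nat.blt_eq, Nat.ble_eq]
        exact ⟨⟨by omega, hq1⟩, by omega, by omega⟩
      have hm2 : q₂ ∈ l := by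
        rw [← hl, List.mem_filter, mem_primeL]
        simp only [Bool.and_eq_true, Nat.blt_eq, Nat.ble_eq]
        exact ⟨⟨by omega, hq2⟩, by omega, by omega⟩
      have h9 := List.all_eq_true.1 (List.all_eq_true.1 hpc q₁ hm1) q₂ hm2
      simp only [Bool.or_eq_true, List.any_eq_true, Bool.and_eq_true, Nat.ble_eq, Nat.blt_eq] at h9
      rcases h9 with (h9 | h9) | ⟨p, hp, ⟨h10, h11⟩, h12⟩
      · omega
      · omega
      · rw [← hl, List.mem_filter, mem_primeL] at hp
        exact ⟨p, hp.1.2, by rw [pow_two]; exact h11, h10, h12⟩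


theorem pack_digsum (w : ℕ) (f : ℕ → ℕ) (n : ℕ) :
    pack w f n % (2 ^ w - 1) ≤ ∑ i ∈ Finset.range n, f i := by
  have h1 : 1 ≤ 2 ^ w := Nat.one_le_two_pow
  have h : pack w f n ≡ ∑ i ∈ Finset.range n, f i [MOD 2 ^ w - 1] := by
    unfold pack
    apply Nat.ModEq.sum
    intro i _
    have h2 : 2 ^ w ≡ 1 [MOD 2 ^ w - 1] := ((Nat.modEq_iff_dvd' h1).2 dvd_rfl).symm
    have h3 := (h2.pow i).mul_left (f i)
    rwa [one_pow, mul_one, ← pow_mul] at h3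
  rw [h]
  exact Nat.mod_le _ _

def cnt (w : ℕ) : ℕ → ℕ → ℕ → ℕ → ℕ
  | 0, s, _, Y => s * (Y % (2 ^ w - 1))
  | k + 1, s, len, Y =>
    force (Y &&& (2 ^ (w * (len / 2)) - 1)) (fun Y₁ => force (Y >>> (w * (len / 2))) (fun Y₂ =>
      force (cnt w k s (len / 2) Y₁) (fun a => a + cnt w k (s + len / 2) (len - len / 2) Y₂)))

theorem pack_div (W : ℕ) (f : ℕ → ℕ) (m n : ℕ) (h : m ≤ n) (hf : ∀ i < n, f i < 2 ^ W) :
    pack W f n / 2 ^ (W * m) = pack W (fun i => f (m + i)) (n - m) := by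
  obtain ⟨k, rfl⟩ := Nat.exists_eq_add_of_le h
  rw [pack_split, Nat.add_mul_div_left _ _ (by positivity),
    Nat.div_eq_of_lt (pack_lt W f m (fun i hi => hf i (by omega)))]
  simp

theorem cnt_le (w : ℕ) : ∀ (k s len : ℕ) (f : ℕ → ℕ), (∀ i < len, f i < 2 ^ w) →
    cnt w k s len (pack w f len) ≤ ∑ i ∈ Finset.range len, (s + i) * f i := by
  intro k
  induction k with
  | zero =>
    intro s len f hf
    rw [cnt]
    refine (Nat.mul_le_mul_left s (pack_digsum w f len)).trans ?_
    rw [Finset.mul_sum]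
    exact Finset.sum_le_sum fun i _ => Nat.mul_le_mul_right _ (by omega)
  | succ k ih =>
    intro s len f hf
    have hl : len / 2 ≤ len := Nat.div_le_self _ _
    rw [cnt, force_eq, force_eq, force_eq, Nat.and_two_pow_sub_one_eq_mod,
      Nat.shiftRight_eq_div_pow, pack_mod w f _ _ hl hf, pack_div w f _ _ hl hf]
    have h1 := ih s (len / 2) f (fun i hi => hf i (by omega))
    have h2 := ih (s + len / 2) (len - len / 2) (fun i => f (len / 2 + i))
      (fun i hi => hf _ (by omega))
    have h3 := Finset.sum_range_add (fun i => (s + i) * f i) (len / 2) (len - len / 2)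
    rw [Nat.add_sub_cancel' hl] at h3
    rw [h3]
    have h4 : ∀ i, (s + len / 2 + i) * f (len / 2 + i) = (s + (len / 2 + i)) * f (len / 2 + i) :=
      fun i => by rw [add_assoc]
    simp only [h4] at h2
    exact Nat.add_le_add h1 h2

/-- characteristic function of the multiples of the members of `l` -/
def multF (l : List ℕ) (i : ℕ) : ℕ := if ∃ p ∈ l, p ∣ i then 1 else 0

theorem multF_lt (l : List ℕ) (w : ℕ) (hw : 0 < w) (i : ℕ) : multF l i < 2 ^ w := by
  have : 2 ^ 1 ≤ 2 ^ w := Nat.pow_le_pow_right (by norm_num) hw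
  unfold multF; split_ifs <;> omega

theorem pack_mult_aux (w p : ℕ) (hp : 0 < p) (m : ℕ) :
    pack w (multF [p]) (p * m) = pack (w * p) (fun _ => 1) m := by
  induction m with
  | zero => simp [pack_zero]
  | succ m ih =>
    rw [Nat.mul_succ, pack_split, ih, pack_succ]
    congr 1
    rw [one_mul, mul_assoc]
    have : pack w (fun i => multF [p] (p * m + i)) p = 1 := by
      unfold pack
      rw [Finset.sum_eq_single 0]
      · simp [multF]
      · intro i hi h0
        have hlt := Finset.mem_range.1 hi
        have : ¬ p ∣ p * m + i := by
          rw [Nat.dvd_add_right (Dvd.intro _ rfl)]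
          intro h
          have := Nat.le_of_dvd (by omega) h
          omega
        simp [multF, this]
      · intro h; simp at h; omega
    rw [this, mul_one]

theorem pack_mult (w p N : ℕ) (hw : 0 < w) (hp : 0 < p) :
    rep (w * p) ((N + p - 1) / p) = pack w (multF [p]) N := by
  rw [rep_eq _ (by positivity), ← pack_mult_aux w p hp]
  set m := (N + p - 1) / p with hm
  have h1 : p * m ≤ N + p - 1 := Nat.mul_div_le _ _
  have h2 : N + p - 1 < p * (m + 1) := by
    have := Nat.lt_mul_div_succ (N + p - 1) hp
    exact this
  have h3 : N ≤ p * m := by rw [Nat.mul_succ] at h2; omega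
  obtain ⟨k, hk⟩ := Nat.exists_eq_add_of_le h3
  rw [hk, pack_split]
  have : pack w (fun i => multF [p] (N + i)) k = 0 := by
    unfold pack
    apply Finset.sum_eq_zero
    intro i hi
    have hi := Finset.mem_range.1 hi
    have : ¬ p ∣ N + i := by
      rintro ⟨c, hc⟩
      have h4 : c < m := by
        by_contra hcm
        have : p * m ≤ p * c := Nat.mul_le_mul_left _ (by omega)
        omega
      have h5 : p * (c + 1) ≤ p * m := Nat.mul_le_mul_left _ h4
      rw [Nat.mul_succ] at h5
      omega
    simp [multF, this]
  rw [this]; simp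

def sieve (w N : ℕ) : List ℕ → ℕ → ℕ
  | [], X => X
  | p :: l, X => force (X ||| rep (w * p) ((N + p - 1) / p)) (fun X' => sieve w N l X')

theorem sieve_eq (w N : ℕ) (hw : 0 < w) : ∀ (l l' : List ℕ), (∀ p ∈ l, 0 < p) →
    sieve w N l (pack w (multF l') N) = pack w (multF (l' ++ l)) N := by
  intro l
  induction l with
  | nil => intro l' _; simp [sieve]
  | cons p l ih =>
    intro l' h
    rw [sieve, force_eq, pack_mult w p N hw (h p (by simp)),
      pack_lor w hw _ _ N (fun i _ => multF_lt _ w hw i) (fun i _ => multF_lt _ w hw i)]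
    have e : pack w (fun i => multF l' i ||| multF [p] i) N = pack w (multF (l' ++ [p])) N := by
      apply pack_congr
      intro i _
      have h3 : (∃ q ∈ l' ++ [p], q ∣ i) ↔ (∃ q ∈ l', q ∣ i) ∨ p ∣ i := by
        constructor
        · rintro ⟨q, hq, hd⟩
          rcases List.mem_append.1 hq with hq | hq
          · exact Or.inl ⟨q, hq, hd⟩
          · rw [List.mem_singleton] at hq; subst hq; exact Or.inr hd
        · rintro (⟨q, hq, hd⟩ | hd)
          · exact ⟨q, List.mem_append_left _ hq, hd⟩
          · exact ⟨p, List.mem_append_right _ (List.mem_singleton.2 rfl), hd⟩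
      have h4 : (∃ q ∈ [p], q ∣ i) ↔ p ∣ i := by simp
      unfold multF
      by_cases h1 : ∃ q ∈ l', q ∣ i <;> by_cases h2 : p ∣ i
      · rw [if_pos h1, if_pos (h4.2 h2), if_pos (h3.2 (Or.inl h1))]; rfl
      · rw [if_pos h1, if_neg (fun h => h2 (h4.1 h)), if_pos (h3.2 (Or.inl h1))]; rfl
      · rw [if_neg h1, if_pos (h4.2 h2), if_pos (h3.2 (Or.inr h2))]; rfl
      · rw [if_neg h1, if_neg (fun h => h2 (h4.1 h)),
          if_neg (fun h => (h3.1 h).elim h1 h2)]; rfl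
    rw [e, ih (l' ++ [p]) (fun q hq => h q (by simp [hq]))]
    simp

def surv (l : List ℕ) (i : ℕ) : ℕ := 1 - multF l i

theorem surv_lt (l : List ℕ) (w : ℕ) (hw : 0 < w) (i : ℕ) : surv l i < 2 ^ w := by
  have : 2 ^ 1 ≤ 2 ^ w := Nat.pow_le_pow_right (by norm_num) hw
  unfold surv; omega

theorem sieve_surv (w N : ℕ) (hw : 0 < w) (l : List ℕ) (h : ∀ p ∈ l, 0 < p) :
    rep w N - sieve w N l 0 = pack w (surv l) N := by
  have h0 : pack w (multF []) N = 0 := by simp [pack, multF]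
  have h1 := sieve_eq w N hw l [] h
  rw [h0, List.nil_append] at h1
  rw [h1, rep_eq w hw, ← pack_sub]
  · rfl
  · intro i _; unfold multF; split_ifs <;> omega

theorem surv_prime (l : List ℕ) (B : ℕ) (hl : ∀ p ≤ B, p.Prime → p ∈ l) (i : ℕ) (h2 : 2 ≤ i)
    (hi : i < (B + 1) ^ 2) (hs : surv l i ≠ 0) : i.Prime := by
  by_contra hnp
  have h1 : i.minFac ^ 2 ≤ i := Nat.minFac_sq_le_self (by omega) hnp
  have h2 : i.minFac.Prime := Nat.minFac_prime (by omega)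
  have h3 : i.minFac ≤ B := by
    by_contra hc
    have : (B + 1) ^ 2 ≤ i.minFac ^ 2 := Nat.pow_le_pow_left (by omega) 2
    omega
  apply hs
  unfold surv multF
  rw [if_pos ⟨_, hl _ h3 h2, Nat.minFac_dvd i⟩]

def walk (w v r s0 N M : ℕ) (chain : List ℕ) : ℕ → ℕ → ℕ → ℕ → ℕ → ℕ → Bool
  | 0, _, A, _, _, _ => Nat.ble M A
  | k + 1, d, A, s, X, acc =>
    force (A * v / 1000) (fun T => force (A * r / 1000) (fun Q =>
      Nat.blt T A && Nat.ble s T && Nat.blt T N && Nat.blt Q (s0 * s0) &&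
      gapChk A Q T (2 * T - A) 0 chain &&
      force (acc + cnt w d s (T + 1 - s) (X &&& (2 ^ (w * (T + 1 - s)) - 1))) (fun acc' =>
        Nat.ble 1 acc' && good Q acc' &&
        force (X >>> (w * (T + 1 - s))) (fun X' =>
          walk w v r s0 N M chain k 4 (Q + 1) (T + 1) X' acc'))))

theorem walk_sound (w v r s0 N M B : ℕ) (chain l : List ℕ) (hw : 0 < w) (hs0 : 2 ≤ s0)
    (hl : ∀ p ≤ B, p.Prime → p ∈ l) (hN : N ≤ (B + 1) ^ 2)
    (hc : ∀ p ∈ chain, p.Prime) : ∀ (k d A s X acc : ℕ), s0 ≤ s → s ≤ N →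
    X = pack w (fun i => surv l (s + i)) (N - s) →
    acc ≤ ∑ i ∈ Finset.Ico s0 s, i * surv l i →
    walk w v r s0 N M chain k d A s X acc = true →
    ∀ P n, P.Prime → P ∣ landau n → A ≤ P → P < M → Good P n := by
  intro k
  induction k with
  | zero =>
    intro d A s X acc _ _ _ _ h P n _ _ h1 h2
    rw [walk, Nat.ble_eq] at h
    omega
  | succ k ih =>
    intro d A s X acc hs hsN hX hacc h P n hP hd hAP hPM
    rw [walk] at h
    simp only [force_eq, Nat.and_two_pow_sub_one_eq_mod, Nat.shiftRight_eq_div_pow] at h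
    set T := A * v / 1000 with hT
    set Q := A * r / 1000 with hQ
    simp only [Bool.and_eq_true, Nat.blt_eq, Nat.ble_eq] at h
    obtain ⟨⟨⟨⟨⟨hTA, hsT⟩, hTN⟩, hQs⟩, hg⟩, ⟨h1, hgood⟩, hrec⟩ := h
    have hlen : T + 1 - s ≤ N - s := by omega
    have hf : ∀ i < N - s, surv l (s + i) < 2 ^ w := fun i _ => surv_lt l w hw _
    have hXm : X % 2 ^ (w * (T + 1 - s)) = pack w (fun i => surv l (s + i)) (T + 1 - s) := by
      rw [hX, pack_mod w _ _ _ hlen hf]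
    have hXd : X / 2 ^ (w * (T + 1 - s)) = pack w (fun i => surv l (T + 1 + i)) (N - (T + 1)) := by
      rw [hX, pack_div w _ _ _ hlen hf, show N - s - (T + 1 - s) = N - (T + 1) by omega]
      apply pack_congr
      intro i _
      rw [← add_assoc, show s + (T + 1 - s) = T + 1 by omega]
    rw [hXm] at h1 hgood hrec
    have hcnt := cnt_le w d s (T + 1 - s) (fun i => surv l (s + i))
      (fun i _ => surv_lt l w hw _)
    set acc' := acc + cnt w d s (T + 1 - s) (pack w (fun i => surv l (s + i)) (T + 1 - s))
    have hacc' : acc' ≤ ∑ i ∈ Finset.Ico s0 (T + 1), i * surv l i := by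
      rw [← Finset.sum_Ico_consecutive _ hs (by omega : s ≤ T + 1),
        Finset.sum_Ico_eq_sum_range _ s]
      exact Nat.add_le_add hacc hcnt
    by_cases hPQ : P ≤ Q
    · have h5 : ∑ p ∈ (Finset.range (T+1)).filter (fun p => p.Prime ∧ Q < p^2), p ≤ n := by
        refine exchange_range hP hd hAP hPQ hTA ?_
        intro x hx1 hx2
        obtain ⟨p, hp, h6⟩ := gapChk_sound A Q T _ hTA.le _ _ hg x hx1 hx2
        exact ⟨p, hc p hp, h6⟩
      have h7 : ∑ i ∈ Finset.Ico s0 (T + 1), i * surv l i ≤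
          ∑ p ∈ (Finset.range (T+1)).filter (fun p => p.Prime ∧ Q < p^2), p := by
        rw [← Finset.sum_filter_add_sum_filter_not (Finset.Ico s0 (T+1)) (fun i => surv l i = 0)]
        rw [Finset.sum_eq_zero (s := (Finset.Ico s0 (T+1)).filter _), zero_add]
        · refine (Finset.sum_le_sum (g := fun i => i) ?_).trans
            (Finset.sum_le_sum_of_subset ?_)
          · intro i _
            have : surv l i ≤ 1 := by unfold surv; omega
            nlinarith
          · intro i hi
            simp only [Finset.mem_filter, Finset.mem_Ico, Finset.mem_range] at hi ⊢
            refine ⟨hi.1.2, surv_prime l B hl i (by omega) (by omega) hi.2, ?_⟩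
            have : s0 * s0 ≤ i * i := Nat.mul_le_mul hi.1.1 hi.1.1
            rw [pow_two]; omega
        · intro i hi
          rw [(Finset.mem_filter.1 hi).2, mul_zero]
      have h8 := good_sound hgood h1 ((hacc'.trans h7).trans h5)
      unfold Good at h8 ⊢
      refine lt_of_le_of_lt ?_ h8
      have : (P : ℝ) ≤ Q := by exact_mod_cast hPQ
      gcongr
    · exact ih 4 (Q + 1) (T + 1) _ acc' (by omega) (by omega) hXd hacc' hrec P n hP hd (by omega) hPM

/-- a chain of primes with small gaps -/
def chainL : List ℕ := [
  541, 547, 557, 563, 571, 577, 587, 593, 601, 607, 617, 619, 631, 641, 647, 653, 661, 673, 683,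
  691, 701, 709, 719, 727, 739, 751, 761, 773, 787, 797, 811, 823, 829, 839, 853, 863, 877, 887,
  907, 919, 929, 941, 953, 967, 983, 997, 1013, 1031, 1049, 1063, 1069, 1087, 1103, 1117, 1129,
  1151, 1171, 1187, 1201, 1217, 1237, 1259, 1279, 1301, 1321, 1327, 1361, 1381, 1399, 1423,
  1447, 1471, 1493, 1511, 1531, 1553, 1579, 1607, 1627, 1637, 1663, 1669, 1699, 1723, 1753,
  1783, 1811, 1831, 1861, 1889, 1913, 1933, 1951, 1979, 2011, 2039, 2069, 2099, 2131, 2161,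
  2179, 2213, 2251, 2287, 2311, 2351, 2393, 2423, 2459, 2503, 2543, 2579, 2621, 2663, 2707,
  2753, 2801, 2851, 2897, 2939, 2971, 3023, 3067, 3121, 3169, 3221, 3271, 3329, 3373, 3433,
  3491, 3547, 3607, 3671, 3733, 3797, 3863, 3931, 4001, 4073, 4139, 4211, 4283, 4357, 4423,
  4493, 4567, 4649, 4729, 4813, 4889, 4973, 5059, 5147, 5237, 5323, 5417, 5507, 5591, 5689,
  5791, 5881, 5981, 6079, 6173, 6277, 6389, 6491, 6607, 6719, 6833, 6949, 7069, 7193, 7321,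
  7451, 7583, 7717, 7853, 7993, 8123, 8269, 8389, 8539, 8689, 8839, 8971, 9127, 9283, 9439,
  9601, 9769, 9941, 10111, 10289, 10463, 10651, 10837, 11027, 11213, 11411, 11597, 11801, 12011,
  12227, 12437, 12659, 12853, 13063, 13297, 13523, 13763, 14009, 14251, 14503, 14759, 15017,
  15287, 15559, 15823, 16103, 16381, 16673, 16963, 17257, 17551, 17863, 18181, 18503, 18803,
  19141, 19483, 19819, 20173, 20533, 20899, 21269, 21649, 22037, 22433, 22817, 23227, 23633,
  24049, 24481, 24919, 25367, 25819, 26267, 26737, 27211, 27697, 28183, 28687, 29201, 29723,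
  30253, 30781, 31333, 31891, 32443, 33023, 33617, 34217, 34819, 35437, 36073, 36721, 37379,
  38047, 38729, 39419, 40127, 40849, 41579, 42323, 43067, 43801, 44587, 45389, 46199, 47017,
  47857, 48679, 49549, 50423, 51329, 52249, 53189, 54139, 55109, 56099, 57107, 58129, 59167,
  60223, 61297, 62383, 63499, 64633, 65789, 66973, 68171, 69389, 70627, 71887, 73141, 74453,
  75793, 77153, 78541, 79943, 81373, 82837, 84319, 85831, 87359, 88919, 90511, 92119, 93763,
  95443, 97159, 98899, 100673, 102481, 104323, 106189, 108089, 110023, 111997, 114001, 116047,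
  118127, 120247, 122401, 124601, 126839, 129121, 131441, 133801, 136207, 138647, 141131,
  143669, 146249, 148873, 151549, 154267, 157037, 159857, 162731, 165653, 168631, 171659,
  174737, 177841, 181039, 184291, 187597, 190921, 194353, 197837, 201389, 204983, 208667,
  212423, 216233, 220123, 224071, 228103, 232207, 236381, 240631, 244957, 249341, 253823,
  258389, 263023, 267749, 272567, 277429, 282413, 287491, 292661, 297911, 303271, 308723,
  314267, 319919, 325673, 331523, 337489, 343561, 349729, 356023, 362431, 368947, 375569,
  382303, 389173, 396173, 403301, 410551, 417931, 425443, 433099, 440893, 448829, 456901,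
  465119, 473479, 481997, 490663, 499493, 508477, 517619, 526931, 536407, 546053, 555871,
  565867, 576049, 586403, 596941, 607681, 618619, 629747, 641077, 652609, 664331, 676279,
  688451, 700837, 713417, 726221, 739283, 752581, 766127, 779899, 793931, 808217, 822763,
  837533, 852589, 867913, 883517, 899413, 915601, 932081, 948853, 965927, 983299, 1000981,
  1018993, 1037329, 1055981, 1074977, 1094321, 1113997, 1134047, 1154449, 1175219, 1196359,
  1217893, 1239803, 1262119, 1284823, 1307927, 1331443, 1355401, 1379797, 1404617, 1429889,
  1455613, 1481801, 1508473, 1535621, 1580141, 1625951, 1673099, 1721593, 1771507, 1822871,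
  1875707, 1930099, 1986071, 2043647, 2102897, 2163881, 2226619, 2291189, 2357629, 2425991,
  2496323, 2568703, 2643181, 2719811, 2798669, 2879819, 2963333, 3049261, 3137681, 3228661,
  3322279, 3418619, 3517753, 3619723, 3724667, 3832679, 3943799, 4058167, 4175837, 4296917,
  4421507, 4549711, 4681639, 4817399, 4957103, 5100841, 5248759, 5400973, 5557579, 5718737,
  5884577, 6055223, 6230821, 6411469, 6597401, 6788699, 6985553, 7188119, 7396553, 7611047,
  7831763, 8058881, 8292577, 8533061, 8780509, 9035111, 9297109, 9566719, 9844129, 10129597]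

/-- trial division with an early exit -/
def isPQ : List ℕ → ℕ → Bool
  | [], _ => true
  | d :: l, n => bif Nat.blt n (d * d) then true else
      bif Nat.beq (n % d) 0 then false else isPQ l n

theorem isPQ_sound (n : ℕ) (hn : 2 ≤ n) : ∀ (l : List ℕ), l.Pairwise (· < ·) → isPQ l n = true →
    isPB l n = true := by
  have key : ∀ (l : List ℕ), l.Pairwise (· < ·) → isPQ l n = true →
      l.all (fun d => Nat.blt n (d * d) || !(Nat.beq (n % d) 0)) = true := by
    intro l
    induction l with
    | nil => intro _ _; rfl
    | cons d l ih =>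
      intro hs h
      rw [List.pairwise_cons] at hs
      rw [isPQ] at h
      cases h1 : Nat.blt n (d * d)
      · rw [h1] at h
        cases h2 : Nat.beq (n % d) 0
        · rw [h2] at h
          simp only [cond_false] at h
          rw [List.all_cons, h1, h2, ih hs.2 h]; rfl
        · rw [h2] at h; simp at h
      · rw [Nat.blt_eq] at h1
        rw [List.all_eq_true]
        intro e he
        have h3 : d ≤ e := by
          rcases List.mem_cons.1 he with rfl | he
          · exact le_rfl
          · exact (hs.1 e he).le
        rw [Bool.or_eq_true, Nat.blt_eq]
        exact Or.inl (lt_of_lt_of_le h1 (Nat.mul_le_mul h3 h3))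
  intro l hs h
  rw [isPB, Bool.and_eq_true, Nat.ble_eq]
  exact ⟨hn, key l hs h⟩

theorem chainL_isPQ : chainL.all (fun p => Nat.ble 2 p && isPQ primeL p) = true := by
  decide +kernel

theorem primeL_sorted : primeL.Pairwise (· < ·) := by
  rw [← primeL_eq]
  exact List.Pairwise.filter _ List.pairwise_lt_range

theorem divL_mem (B k : ℕ) (hB : B < 5410) (h : (primeL.drop k).all (fun p => Nat.blt B p) = true) :
    ∀ p ≤ B, p.Prime → p ∈ primeL.take k := by
  intro p hp hpp
  have h1 := mem_primeL.2 ⟨by omega, hpp⟩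
  rw [← List.take_append_drop k primeL, List.mem_append] at h1
  rcases h1 with h1 | h1
  · exact h1
  · have := List.all_eq_true.1 h p h1
    rw [Nat.blt_eq] at this
    omega

theorem chainL_prime : ∀ p ∈ chainL, p.Prime := by
  intro p hp
  have h2 : chainL.all (fun p => Nat.blt p 10300000) = true := by decide +kernel
  have h3 := List.all_eq_true.1 h2 p hp
  rw [Nat.blt_eq] at h3
  have h4 := List.all_eq_true.1 chainL_isPQ p hp
  rw [Bool.and_eq_true, Nat.ble_eq] at h4
  exact prime_of_isPB primeL 5409 (fun d hd hp => mem_primeL.2 ⟨by omega, hp⟩) p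
    (by norm_num; omega) (isPQ_sound p h4.1 _ primeL_sorted h4.2)

def midRun (w N s0 k A M n : ℕ) : Bool :=
  force ((rep w N - sieve w N (primeL.take n) 0) >>> (w * s0)) (fun X =>
    walk w 880 1030 s0 N M chainL k 8 A s0 X 0)

theorem midRun_sound (w N s0 k A M n B : ℕ) (hw : 0 < w) (hs0 : 2 ≤ s0) (hsN : s0 ≤ N)
    (hB : B < 5410) (hN : N ≤ (B + 1) ^ 2)
    (hn : (primeL.drop n).all (fun p => Nat.blt B p) = true)
    (h : midRun w N s0 k A M n = true) :
    ∀ P n, P.Prime → P ∣ landau n → A ≤ P → P < M → Good P n := by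
  rw [midRun, force_eq, Nat.shiftRight_eq_div_pow, sieve_surv w N hw _ (fun p hp =>
    (mem_primeL.1 (List.mem_of_mem_take hp)).2.pos)] at h
  refine walk_sound w 880 1030 s0 N M B chainL (primeL.take n) hw hs0 (divL_mem B n hB hn) hN
    chainL_prime k 8 A s0 _ 0 le_rfl hsN ?_ (Nat.zero_le _) h
  exact pack_div w _ _ _ hsN (fun i _ => surv_lt _ w hw i)


theorem mid_run1 : midRun 9 86436 317 98 5410 98288 62 = true := by decide +kernel

theorem mid_run2 : midRun 9 1713000 1423 102 98288 2004328 214 = true := by decide +kernel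

theorem mid_range {P n : ℕ} (hP : P.Prime) (hd : P ∣ landau n) (h1 : 5410 ≤ P) (h2 : P < 2004328) :
    Good P n := by
  by_cases h : P < 98288
  · exact midRun_sound 9 86436 317 98 5410 98288 62 293 (by norm_num) (by norm_num) (by norm_num)
      (by norm_num) (by norm_num) (by decide +kernel) mid_run1 P n hP hd h1 h
  · exact midRun_sound 9 1713000 1423 102 98288 2004328 214 1308 (by norm_num) (by norm_num)
      (by norm_num) (by norm_num) (by norm_num) (by decide +kernel) mid_run2 P n hP hd
      (by omega) h2


open ArithmeticFunction in
theorem log_factorial_mangoldt (N : ℕ) : ∀ m ≤ N,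
    Real.log (m.factorial : ℝ) = ∑ n ∈ Finset.Ioc 0 N, vonMangoldt n * ((m / n : ℕ) : ℝ) := by
  intro m
  induction m with
  | zero => intro _; simp
  | succ m ih =>
    intro h
    rw [Nat.factorial_succ, Nat.cast_mul, Real.log_mul (by positivity) (by positivity),
      ih (by omega), ← vonMangoldt_sum]
    have h1 : (m + 1).divisors = (Finset.Ioc 0 N).filter (fun n => n ∣ m + 1) := by
      ext n
      simp only [Nat.mem_divisors, Finset.mem_filter, Finset.mem_Ioc]
      constructor
      · rintro ⟨hd, _⟩
        have := Nat.le_of_dvd (by omega) hd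
        have := Nat.pos_of_dvd_of_pos hd (by omega)
        exact ⟨⟨this, by omega⟩, hd⟩
      · rintro ⟨_, hd⟩; exact ⟨hd, by omega⟩
    rw [h1, Finset.sum_filter, ← Finset.sum_add_distrib]
    apply Finset.sum_congr rfl
    intro n _
    rw [Nat.succ_div]
    split_ifs <;> push_cast <;> ring

/-- the function `F-hat` -/
def Fh (l : List (ℕ × ℤ)) (y : ℕ) : ℤ := (l.map fun p => (p.1 : ℤ) * p.2 * ((y / p.1 : ℕ) : ℤ)).sum

def Uc (U : List (ℕ × ℕ)) (y : ℕ) : ℕ := (U.map fun u => if u.1 ≤ y then u.2 else 0).sum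

open ArithmeticFunction in
theorem Fh_sum (x : ℕ) (l : List (ℕ × ℤ)) :
    (l.map fun p => (p.1 : ℝ) * p.2 * Real.log ((x / p.1).factorial : ℝ)).sum =
      ∑ n ∈ Finset.Ioc 0 x, vonMangoldt n * ((Fh l (x / n) : ℤ) : ℝ) := by
  induction l with
  | nil => simp [Fh]
  | cons p l ih =>
    rw [List.map_cons, List.sum_cons, ih, log_factorial_mangoldt x _ (Nat.div_le_self _ _),
      Finset.mul_sum, ← Finset.sum_add_distrib]
    apply Finset.sum_congr rfl
    intro n _
    have : Fh (p :: l) (x / n) = (p.1 : ℤ) * p.2 * ((x / n / p.1 : ℕ) : ℤ) + Fh l (x / n) := by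
      simp [Fh]
    have h9 : x / p.1 / n = x / n / p.1 := by
      rw [Nat.div_div_eq_div_mul, mul_comm, ← Nat.div_div_eq_div_mul]
    rw [this, h9, Int.cast_add, Int.cast_mul, Int.cast_mul, Int.cast_natCast, Int.cast_natCast]
    ring

open ArithmeticFunction in
theorem psi_nat (x : ℕ) : Chebyshev.psi (x : ℝ) = ∑ n ∈ Finset.Ioc 0 x, vonMangoldt n := by
  rw [Chebyshev.psi, Nat.floor_natCast]

open ArithmeticFunction in
theorem Uc_sum (x : ℕ) (U : List (ℕ × ℕ)) (hU : ∀ u ∈ U, 1 ≤ u.1) :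
    ∑ n ∈ Finset.Ioc 0 x, vonMangoldt n * ((Uc U (x / n) : ℕ) : ℝ) =
      (U.map fun u => (u.2 : ℝ) * Chebyshev.psi ((x / u.1 : ℕ) : ℝ)).sum := by
  induction U with
  | nil => simp [Uc]
  | cons u U ih =>
    have hu := hU u (by simp)
    rw [List.map_cons, List.sum_cons, ← ih (fun v hv => hU v (by simp [hv])), psi_nat]
    have : ∀ n, Uc (u :: U) (x / n) = (if u.1 ≤ x / n then u.2 else 0) + Uc U (x / n) := by
      intro n; simp [Uc]
    simp only [this]
    push_cast
    simp only [mul_add]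
    rw [Finset.sum_add_distrib]
    congr 1
    have h2 : Finset.Ioc 0 (x / u.1) = (Finset.Ioc 0 x).filter (fun n => u.1 ≤ x / n) := by
      ext n
      simp only [Finset.mem_filter, Finset.mem_Ioc]
      constructor
      · rintro ⟨h1, h2⟩
        have h3 := Nat.div_le_self x u.1
        refine ⟨⟨h1, by omega⟩, ?_⟩
        rw [Nat.le_div_iff_mul_le h1, mul_comm]
        exact (Nat.le_div_iff_mul_le hu).1 h2
      · rintro ⟨⟨h1, h2⟩, h3⟩
        refine ⟨h1, ?_⟩
        rw [Nat.le_div_iff_mul_le hu, mul_comm]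
        exact (Nat.le_div_iff_mul_le h1).1 h3
    rw [h2, Finset.sum_filter, Finset.mul_sum]
    apply Finset.sum_congr rfl
    intro n _
    split_ifs <;> ring

open ArithmeticFunction in
theorem cert_psi (l : List (ℕ × ℤ)) (s : ℤ) (U : List (ℕ × ℕ)) (hU : ∀ u ∈ U, 1 ≤ u.1)
    (hF : ∀ y ≥ 1, Fh l y ≤ s + Uc U y) (x : ℕ) :
    (l.map fun p => (p.1 : ℝ) * p.2 * Real.log ((x / p.1).factorial : ℝ)).sum ≤
      s * Chebyshev.psi (x : ℝ) +
        (U.map fun u => (u.2 : ℝ) * Chebyshev.psi ((x / u.1 : ℕ) : ℝ)).sum := by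
  rw [Fh_sum, ← Uc_sum x U hU, psi_nat, Finset.mul_sum, ← Finset.sum_add_distrib]
  apply Finset.sum_le_sum
  intro n hn
  rw [Finset.mem_Ioc] at hn
  have h1 := hF (x / n) ((Nat.le_div_iff_mul_le hn.1).2 (by omega))
  have h2 : ((Fh l (x / n) : ℤ) : ℝ) ≤ s + Uc U (x / n) := by exact_mod_cast h1
  have h3 := mul_le_mul_of_nonneg_left h2 (vonMangoldt_nonneg (n := n))
  linarith

theorem log_factorial_upper (m : ℕ) (hm : 1 ≤ m) :
    Real.log (m.factorial : ℝ) ≤ m * Real.log m - m + Real.log m + 1 := by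
  induction m, hm using Nat.le_induction with
  | base => simp
  | succ m hm ih =>
    have h0 : (0 : ℝ) < m := by exact_mod_cast hm
    rw [Nat.factorial_succ, Nat.cast_mul, Real.log_mul (by positivity) (by positivity)]
    have h1 := Real.one_sub_inv_le_log_of_pos (show (0 : ℝ) < ((m + 1 : ℕ) : ℝ) / m by positivity)
    rw [Real.log_div (by positivity) (by positivity), inv_div] at h1
    have h2 : (1 : ℝ) - m / ((m + 1 : ℕ) : ℝ) = 1 / (m + 1) := by push_cast; field_simp; ring
    rw [h2] at h1
    have h3 : ((m : ℝ) + 1) * (1 / (m + 1)) = 1 := by field_simp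
    have h4 := mul_le_mul_of_nonneg_left h1 (show (0 : ℝ) ≤ (m : ℝ) + 1 by positivity)
    push_cast at *
    nlinarith

theorem log_factorial_lower (m : ℕ) (hm : 1 ≤ m) :
    m * Real.log m - m ≤ Real.log (m.factorial : ℝ) := by
  have h := Stirling.le_log_factorial_stirling (n := m) (by omega)
  have h1 : 0 ≤ Real.log m := Real.log_nonneg (by exact_mod_cast hm)
  have h2 : 0 ≤ Real.log (2 * Real.pi) := Real.log_nonneg (by
    have := Real.two_le_pi; linarith)
  linarith

theorem stirling_abs (x d : ℕ) (hd : 1 ≤ d) (hx : d ≤ x) :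
    |Real.log ((x / d).factorial : ℝ) - ((x / d : ℝ) * Real.log (x / d) - x / d)|
      ≤ Real.log x + 1 := by
  set m := x / d with hm
  have hm1 : 1 ≤ m := (Nat.le_div_iff_mul_le hd).2 (by omega)
  have hd0 : (0 : ℝ) < d := by exact_mod_cast hd
  have hx0 : (0 : ℝ) < x := by exact_mod_cast (by omega : 0 < x)
  set z : ℝ := (x : ℝ) / d with hz
  have hm0 : (0 : ℝ) < m := by exact_mod_cast hm1
  have hm1' : (1 : ℝ) ≤ m := by exact_mod_cast hm1
  have hmz : (m : ℝ) ≤ z := Nat.cast_div_le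
  have hzm : z < m + 1 := by
    rw [hz, div_lt_iff₀ hd0]
    have : x < (m + 1) * d := by
      rw [mul_comm]; exact Nat.lt_mul_div_succ x hd
    exact_mod_cast this
  have hz0 : 0 < z := by linarith
  have h1 := Real.one_sub_inv_le_log_of_pos (show 0 < z / m by positivity)
  have h2 := Real.one_sub_inv_le_log_of_pos (show 0 < m / z by positivity)
  rw [Real.log_div hz0.ne' hm0.ne', inv_div] at h1
  rw [Real.log_div hm0.ne' hz0.ne', inv_div] at h2
  have h3 := mul_le_mul_of_nonneg_left h1 hz0.le
  have h4 := mul_le_mul_of_nonneg_left h2 hm0.le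
  have e3 : z * (1 - m / z) = z - m := by field_simp
  have e4 : m * (1 - z / m) = m - z := by field_simp
  rw [e3] at h3
  rw [e4] at h4
  have hlm : 0 ≤ Real.log m := Real.log_nonneg hm1'
  have hlz : Real.log m ≤ Real.log z := Real.log_le_log hm0 hmz
  have hlx : Real.log z ≤ Real.log x := Real.log_le_log hz0 (by
    rw [hz]; exact div_le_self hx0.le (by exact_mod_cast hd))
  have h5 := log_factorial_upper m hm1
  have h6 := log_factorial_lower m hm1
  have h7 : 0 ≤ (z - m) * Real.log m := mul_nonneg (by linarith) hlm
  have h8 : (z - m) * Real.log z ≤ 1 * Real.log z :=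
    mul_le_mul_of_nonneg_right (by linarith) (by linarith)
  rw [abs_le]
  constructor <;> nlinarith

def sumE (l : List (ℕ × ℤ)) : ℤ := (l.map fun p => p.2).sum
def sumW (l : List (ℕ × ℤ)) : ℕ := (l.map fun p => p.1 * p.2.natAbs).sum
noncomputable def sumLog (l : List (ℕ × ℤ)) : ℝ := (l.map fun p => (p.2 : ℝ) * Real.log p.1).sum

theorem stirling_sum (x : ℕ) (l : List (ℕ × ℤ)) (hl : ∀ p ∈ l, 1 ≤ p.1 ∧ p.1 ≤ x) :
    x * (Real.log x - 1) * sumE l - x * sumLog l - sumW l * (Real.log x + 1) ≤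
    (l.map fun p => (p.1 : ℝ) * p.2 * Real.log ((x / p.1).factorial : ℝ)).sum := by
  induction l with
  | nil => simp [sumE, sumW, sumLog]
  | cons p l ih =>
    have h1 := ih (fun q hq => hl q (by simp [hq]))
    obtain ⟨d, e⟩ := p
    obtain ⟨hd, hdx⟩ := hl (d, e) (by simp)
    simp only at hd hdx
    have h2 := stirling_abs x d hd hdx
    have hd0 : (0 : ℝ) < d := by exact_mod_cast hd
    have hx0 : (0 : ℝ) < x := by exact_mod_cast (by omega : 0 < x)
    have e1 : sumE ((d, e) :: l) = e + sumE l := by simp [sumE]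
    have e2 : sumW ((d, e) :: l) = d * e.natAbs + sumW l := by simp [sumW]
    have e3 : sumLog ((d, e) :: l) = e * Real.log d + sumLog l := by simp [sumLog]
    rw [List.map_cons, List.sum_cons, e1, e2, e3]
    simp only
    set r := Real.log ((x / d).factorial : ℝ) - ((x / d : ℝ) * Real.log (x / d) - x / d) with hr
    have e4 : Real.log ((x / d).factorial : ℝ) = r + ((x / d : ℝ) * Real.log (x / d) - x / d) := by
      rw [hr]; ring
    rw [e4, Real.log_div hx0.ne' hd0.ne']
    have h3 : (d : ℝ) * e * (r + ((x / d : ℝ) * (Real.log x - Real.log d) - x / d)) =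
        d * e * r + e * x * (Real.log x - Real.log d - 1) := by field_simp
    rw [h3]
    have h4 : |(d : ℝ) * e * r| ≤ d * |(e : ℝ)| * (Real.log x + 1) := by
      rw [abs_mul, abs_mul, abs_of_pos hd0]
      exact mul_le_mul_of_nonneg_left h2 (by positivity)
    have h5 := (abs_le.1 h4).1
    have h6 : ((e.natAbs : ℕ) : ℝ) = |(e : ℝ)| := by rw [Nat.cast_natAbs]; simp
    push_cast
    rw [h6]
    nlinarith

/-- rational bounds for `- ∑ e_d log d` -/
def sumK (N : ℕ) (l : List (ℕ × ℤ)) : ℤ :=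
  (l.map fun p => match p.2 with
    | Int.ofNat a => -((a * (Nat.log2 (p.1 ^ N) + 1) : ℕ) : ℤ)
    | Int.negSucc a => (((a + 1) * Nat.log2 (p.1 ^ N) : ℕ) : ℤ)).sum

theorem log2_bounds (N d : ℕ) (hd : 1 ≤ d) :
    (Nat.log2 (d ^ N) : ℝ) * Real.log 2 ≤ N * Real.log d ∧
    N * Real.log d ≤ ((Nat.log2 (d ^ N) : ℝ) + 1) * Real.log 2 := by
  have hd0 : (0 : ℝ) < d := by exact_mod_cast hd
  have hpos : d ^ N ≠ 0 := by positivity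
  constructor
  · have h1 : 2 ^ Nat.log2 (d ^ N) ≤ d ^ N := Nat.log2_self_le hpos
    have h2 : (2 : ℝ) ^ Nat.log2 (d ^ N) ≤ (d : ℝ) ^ N := by exact_mod_cast h1
    have h3 := Real.log_le_log (by positivity) h2
    rwa [Real.log_pow, Real.log_pow] at h3
  · have h1 : d ^ N < 2 ^ (Nat.log2 (d ^ N) + 1) := Nat.lt_log2_self
    have h2 : (d : ℝ) ^ N ≤ (2 : ℝ) ^ (Nat.log2 (d ^ N) + 1) := by exact_mod_cast h1.le
    have h3 := Real.log_le_log (by positivity) h2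
    rw [Real.log_pow, Real.log_pow] at h3
    push_cast at h3
    exact h3

theorem sumK_le (N : ℕ) (l : List (ℕ × ℤ)) (hl : ∀ p ∈ l, 1 ≤ p.1) :
    (sumK N l : ℝ) * Real.log 2 ≤ -(N * sumLog l) := by
  induction l with
  | nil => simp [sumK, sumLog]
  | cons p l ih =>
    have h1 := ih (fun q hq => hl q (by simp [hq]))
    obtain ⟨d, e⟩ := p
    obtain ⟨h2, h3⟩ := log2_bounds N d (hl (d, e) (by simp))
    have e3 : sumLog ((d, e) :: l) = e * Real.log d + sumLog l := by simp [sumLog]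
    rw [e3]
    cases e with
    | ofNat a =>
      have e1 : sumK N ((d, Int.ofNat a) :: l) =
          -((a * (Nat.log2 (d ^ N) + 1) : ℕ) : ℤ) + sumK N l := by simp [sumK]
      rw [e1]
      have h4 := mul_le_mul_of_nonneg_left h3 (Nat.cast_nonneg (α := ℝ) a)
      push_cast
      have h5 : ((Int.ofNat a : ℤ) : ℝ) = a := by simp
      rw [h5]
      nlinarith
    | negSucc a =>
      have e1 : sumK N ((d, Int.negSucc a) :: l) =
          (((a + 1) * Nat.log2 (d ^ N) : ℕ) : ℤ) + sumK N l := by simp [sumK]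
      rw [e1]
      have h4 := mul_le_mul_of_nonneg_left h2 (show (0 : ℝ) ≤ (a : ℝ) + 1 by positivity)
      have h5 : ((Int.negSucc a : ℤ) : ℝ) = -((a : ℝ) + 1) := by
        rw [Int.cast_negSucc]
        push_cast
        ring
      rw [h5]
      push_cast
      nlinarith

theorem cheb_cert (l : List (ℕ × ℤ)) (s : ℤ) (U : List (ℕ × ℕ)) (N : ℕ) (K : ℤ) (W D : ℕ)
    (hU : ∀ u ∈ U, 1 ≤ u.1)
    (hF : ∀ y ≥ 1, Fh l y ≤ s + Uc U y) (hl : ∀ p ∈ l, 1 ≤ p.1 ∧ p.1 ≤ D) (hE : sumE l = 0)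
    (hK : K ≤ sumK N l) (hW : sumW l ≤ W) (hN : 0 < N) (x : ℕ) (hx1 : 1 ≤ x) (hx : D ≤ x) :
    x * (K * Real.log 2 / N) - W * (Real.log x + 1) ≤
      s * Chebyshev.psi (x : ℝ) +
        (U.map fun u => (u.2 : ℝ) * Chebyshev.psi ((x / u.1 : ℕ) : ℝ)).sum := by
  refine le_trans ?_ (cert_psi l s U hU hF x)
  refine le_trans ?_ (stirling_sum x l (fun p hp => ⟨(hl p hp).1, (hl p hp).2.trans hx⟩))
  have h1 := sumK_le N l (fun p hp => (hl p hp).1)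
  have hN0 : (0 : ℝ) < N := by exact_mod_cast hN
  have hl2 : 0 < Real.log 2 := Real.log_pos (by norm_num)
  have hK' : (K : ℝ) ≤ sumK N l := by exact_mod_cast hK
  have hW' : (sumW l : ℝ) ≤ W := by exact_mod_cast hW
  have hx' : 0 ≤ Real.log x := Real.log_nonneg (by exact_mod_cast hx1)
  have h2 : K * Real.log 2 / N ≤ -sumLog l := by
    rw [div_le_iff₀ hN0]
    nlinarith
  have h3 : (x : ℝ) * (K * Real.log 2 / N) ≤ x * -sumLog l :=
    mul_le_mul_of_nonneg_left h2 (Nat.cast_nonneg _)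
  have h4 : (sumW l : ℝ) * (Real.log x + 1) ≤ W * (Real.log x + 1) :=
    mul_le_mul_of_nonneg_right hW' (by linarith)
  rw [hE]
  simp only [Int.cast_zero, mul_zero]
  linarith


/-- `∑ d a ⌊y/d⌋` -/
def FN (l : List (ℕ × ℕ)) (y : ℕ) : ℕ := (l.map fun p => p.1 * p.2 * (y / p.1)).sum

def sumDA (l : List (ℕ × ℕ)) : ℕ := (l.map fun p => p.1 * p.2).sum

def gdig (l U : List (ℕ × ℕ)) (j : ℕ) : ℕ :=
  (l.map fun p => p.1 * p.2 * multF [p.1] j).sum + (U.map fun u => if u.1 = j then u.2 else 0).sum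

def gpk1 (W n : ℕ) : List (ℕ × ℕ) → ℕ → ℕ
  | [], X => X
  | p :: l, X => force (X + p.1 * p.2 * rep (W * p.1) ((n + p.1 - 1) / p.1)) fun X' => gpk1 W n l X'

def gpk2 (W : ℕ) : List (ℕ × ℕ) → ℕ → ℕ
  | [], X => X
  | p :: l, X => force (X + p.2 * 2 ^ (W * p.1)) fun X' => gpk2 W l X'

theorem gpk1_eq (W n : ℕ) (hW : 0 < W) : ∀ (l : List (ℕ × ℕ)) (X : ℕ), (∀ p ∈ l, 1 ≤ p.1) →
    gpk1 W n l X = X + pack W (fun j => (l.map fun p => p.1 * p.2 * multF [p.1] j).sum) n := by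
  intro l
  induction l with
  | nil => intro X _; simp [gpk1, pack]
  | cons p l ih =>
    intro X h
    rw [gpk1, force_eq, ih _ (fun q hq => h q (by simp [hq])), pack_mult W p.1 n hW (h p (by simp)),
      ← pack_mul, add_assoc, ← pack_add]
    simp

theorem pack_delta (W n k u : ℕ) (hk : k < n) :
    pack W (fun j => if k = j then u else 0) n = u * 2 ^ (W * k) := by
  unfold pack
  rw [Finset.sum_eq_single k]
  · simp
  · intro b _ hb; simp [Ne.symm hb]
  · intro h; simp at h; omega

theorem gpk2_eq (W n : ℕ) : ∀ (U : List (ℕ × ℕ)) (X : ℕ), (∀ p ∈ U, p.1 < n) →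
    gpk2 W U X = X + pack W (fun j => (U.map fun u => if u.1 = j then u.2 else 0).sum) n := by
  intro l
  induction l with
  | nil => intro X _; simp [gpk2, pack]
  | cons p l ih =>
    intro X h
    rw [gpk2, force_eq, ih _ (fun q hq => h q (by simp [hq])), ← pack_delta W n p.1 p.2 (h p (by simp)),
      add_assoc, ← pack_add]
    simp

theorem gpk_eq (W n : ℕ) (hW : 0 < W) (l U : List (ℕ × ℕ)) (hl : ∀ p ∈ l, 1 ≤ p.1)
    (hU : ∀ p ∈ U, p.1 < n) : gpk2 W U (gpk1 W n l 0) = pack W (gdig l U) n := by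
  rw [gpk2_eq W n U _ hU, gpk1_eq W n hW l _ hl, zero_add, ← pack_add]
  rfl

theorem pack_prefix (W n : ℕ) (f : ℕ → ℕ) :
    pack W (fun i => ∑ j ∈ Finset.range (i + 1), f j) n * (2 ^ W - 1) + pack W f n =
      2 ^ (W * n) * ∑ j ∈ Finset.range n, f j := by
  have h1 : 1 ≤ 2 ^ W := Nat.one_le_two_pow
  obtain ⟨c, hc⟩ := Nat.exists_eq_add_of_le h1
  have hc' : 2 ^ W - 1 = c := by omega
  rw [hc']
  induction n with
  | zero => simp [pack]
  | succ n ih =>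
    rw [pack_succ, pack_succ, Finset.sum_range_succ, Nat.mul_succ, pow_add]
    have : ∀ A B T b f0 : ℕ, A * c + B = b * T →
        (A + (T + f0) * b) * c + (B + f0 * b) = b * (1 + c) * (T + f0) := by
      intro A B T b f0 h
      calc (A + (T + f0) * b) * c + (B + f0 * b) = (A * c + B) + (T + f0) * b * c + f0 * b := by ring
        _ = _ := by rw [h]; ring
    have h2 := this _ _ _ _ (f n) ih
    rw [hc]
    exact h2

theorem sum_multF (d : ℕ) (hd : 1 ≤ d) (y : ℕ) :
    ∑ j ∈ Finset.range (y + 1), multF [d] j = y / d + 1 := by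
  induction y with
  | zero =>
    rw [zero_add, Finset.sum_range_one]
    simp [multF]
  | succ y ih =>
    rw [Finset.sum_range_succ, ih, Nat.succ_div]
    by_cases h : d ∣ y + 1 <;> simp [multF, h] <;> ring

theorem gdig_sum (l U : List (ℕ × ℕ)) (hl : ∀ p ∈ l, 1 ≤ p.1) (y : ℕ) :
    ∑ j ∈ Finset.range (y + 1), gdig l U j = FN l y + sumDA l + Uc U y := by
  unfold gdig
  rw [Finset.sum_add_distrib]
  congr 1
  · induction l with
    | nil => simp [FN, sumDA]
    | cons p l ih =>
      simp only [List.map_cons, List.sum_cons, Finset.sum_add_distrib]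
      rw [ih (fun q hq => hl q (by simp [hq])), ← Finset.mul_sum, sum_multF _ (hl p (by simp))]
      simp only [FN, sumDA, List.map_cons, List.sum_cons]
      ring
  · induction U with
    | nil => simp [Uc]
    | cons p l ih =>
      simp only [List.map_cons, List.sum_cons, Finset.sum_add_distrib]
      rw [ih, Finset.sum_ite_eq]
      simp [Uc]

def gQ (W n : ℕ) (l U : List (ℕ × ℕ)) : ℕ :=
  (2 ^ (W * n) * (FN l (n - 1) + sumDA l + Uc U (n - 1)) - gpk2 W U (gpk1 W n l 0)) / (2 ^ W - 1)

theorem gQ_eq (W n : ℕ) (hW : 0 < W) (hn : 0 < n) (l U : List (ℕ × ℕ)) (hl : ∀ p ∈ l, 1 ≤ p.1)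
    (hU : ∀ p ∈ U, p.1 < n) :
    gQ W n l U = pack W (fun y => FN l y + sumDA l + Uc U y) n := by
  unfold gQ
  have h1 := pack_prefix W n (gdig l U)
  obtain ⟨m, rfl⟩ : ∃ m, n = m + 1 := ⟨n - 1, by omega⟩
  rw [gdig_sum l U hl m] at h1
  rw [gpk_eq W _ hW l U hl hU, Nat.add_sub_cancel, ← h1, Nat.add_sub_cancel]
  have h2 : 2 ≤ 2 ^ W := by
    calc 2 = 2 ^ 1 := rfl
      _ ≤ 2 ^ W := Nat.pow_le_pow_right (by norm_num) hW
  rw [Nat.mul_div_cancel _ (by omega)]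
  apply pack_congr
  intro i _
  exact gdig_sum l U hl i

theorem FN_mono (l : List (ℕ × ℕ)) {y z : ℕ} (h : y ≤ z) : FN l y ≤ FN l z := by
  induction l with
  | nil => simp [FN]
  | cons p l ih =>
    have : p.1 * p.2 * (y / p.1) ≤ p.1 * p.2 * (z / p.1) :=
      Nat.mul_le_mul_left _ (Nat.div_le_div_right h)
    simp only [FN, List.map_cons, List.sum_cons] at ih ⊢
    omega

theorem Uc_mono (l : List (ℕ × ℕ)) {y z : ℕ} (h : y ≤ z) : Uc l y ≤ Uc l z := by
  induction l with
  | nil => simp [Uc]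
  | cons p l ih =>
    simp only [Uc, List.map_cons, List.sum_cons] at ih ⊢
    split_ifs <;> omega

theorem FN_tail (l : List (ℕ × ℕ)) (hl : ∀ p ∈ l, 1 ≤ p.1) (y : ℕ) :
    FN l y ≤ (l.map fun p => p.2).sum * y ∧
    (l.map fun p => p.2).sum * y ≤ FN l y + (l.map fun p => p.2 * (p.1 - 1)).sum := by
  induction l with
  | nil => simp [FN]
  | cons p l ih =>
    obtain ⟨h1, h2⟩ := ih (fun q hq => hl q (by simp [hq]))
    simp only [FN, List.map_cons, List.sum_cons] at h1 h2 ⊢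
    rw [Nat.add_mul]
    have hp := hl p (by simp)
    have h3 : p.1 * (y / p.1) ≤ y := Nat.mul_div_le _ _
    have h4 : y ≤ p.1 * (y / p.1) + (p.1 - 1) := by
      have := Nat.lt_mul_div_succ y (show 0 < p.1 by omega)
      rw [Nat.mul_succ] at this
      omega
    have h5 := Nat.mul_le_mul_left p.2 h3
    have h6 := Nat.mul_le_mul_left p.2 h4
    rw [Nat.mul_add] at h6
    have e : p.1 * p.2 * (y / p.1) = p.2 * (p.1 * (y / p.1)) := by ring
    rw [e]
    constructor <;> omega

/-- the kernel check of a certificate -/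
def gChk (w n sp sm : ℕ) (lp ln U : List (ℕ × ℕ)) : Bool :=
  lp.all (fun p => Nat.ble 1 p.1) && ln.all (fun p => Nat.ble 1 p.1) &&
  U.all (fun p => Nat.blt p.1 n && Nat.ble 1 p.1) && Nat.blt 1 n && Nat.blt 0 w &&
  Nat.blt (FN lp (n - 1) + sumDA lp + Uc ((0, sumDA ln) :: [(1, sm)]) (n - 1)) (2 ^ w) &&
  Nat.blt (FN ln (n - 1) + sumDA ln + Uc ((0, sumDA lp) :: (1, sp) :: U) (n - 1)) (2 ^ w) &&
  Nat.beq (lp.map fun p => p.2).sum (ln.map fun p => p.2).sum &&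
  Nat.ble ((ln.map fun p => p.2 * (p.1 - 1)).sum + sm) (sp + (U.map fun p => p.2).sum) &&
  packLe w n (gQ (w + 1) n lp ((0, sumDA ln) :: [(1, sm)]))
    (gQ (w + 1) n ln ((0, sumDA lp) :: (1, sp) :: U))

theorem Uc_cons (k u : ℕ) (U : List (ℕ × ℕ)) (y : ℕ) (h : k ≤ y) :
    Uc ((k, u) :: U) y = u + Uc U y := by simp [Uc, h]

theorem Uc_all (U : List (ℕ × ℕ)) (y : ℕ) (h : ∀ u ∈ U, u.1 ≤ y) :
    Uc U y = (U.map fun p => p.2).sum := by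
  unfold Uc
  congr 1
  apply List.map_congr_left
  intro u hu
  rw [if_pos (h u hu)]

theorem gChk_sound (w n sp sm : ℕ) (lp ln U : List (ℕ × ℕ))
    (h : gChk w n sp sm lp ln U = true) :
    (∀ y ≥ 1, FN lp y + sm ≤ FN ln y + sp + Uc U y) := by
  simp only [gChk, Bool.and_eq_true, List.all_eq_true, Nat.ble_eq, Nat.blt_eq, Nat.beq_eq] at h
  obtain ⟨⟨⟨⟨⟨⟨⟨⟨⟨h1, h2⟩, h3⟩, h4⟩, h5⟩, h6⟩, h7⟩, h8⟩, h9⟩, h10⟩ := h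
  rw [gQ_eq _ n (by omega) (by omega) lp _ h1 (by
      intro p hp
      simp only [List.mem_cons, List.not_mem_nil, or_false] at hp
      rcases hp with rfl | rfl <;> simp <;> omega),
    gQ_eq _ n (by omega) (by omega) ln _ h2 (by
      intro p hp
      simp only [List.mem_cons] at hp
      rcases hp with rfl | rfl | hp
      · simp; omega
      · simp; omega
      · exact (h3 p hp).1)] at h10
  have h11 := packLe_sound w _ _ n ?_ ?_ h10
  · intro y hy
    by_cases hyn : y < n
    · have := h11 y hyn
      rw [Uc_cons _ _ _ _ (Nat.zero_le _), Uc_cons _ _ _ _ hy, Uc_cons _ _ _ _ (Nat.zero_le _),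
        Uc_cons _ _ _ _ hy] at this
      have e : Uc [] y = 0 := rfl
      omega
    · have a1 := (FN_tail lp h1 y).1
      have a2 := (FN_tail ln h2 y).2
      rw [h8] at a1
      rw [Uc_all U y (fun u hu => by have := (h3 u hu).1; omega)]
      omega
  · intro i hi
    refine lt_of_le_of_lt ?_ h6
    have := FN_mono lp (show i ≤ n - 1 by omega)
    have := Uc_mono ((0, sumDA ln) :: [(1, sm)]) (show i ≤ n - 1 by omega)
    omega
  · intro i hi
    refine lt_of_le_of_lt ?_ h7
    have := FN_mono ln (show i ≤ n - 1 by omega)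
    have := Uc_mono ((0, sumDA lp) :: (1, sp) :: U) (show i ≤ n - 1 by omega)
    omega

def mkL (lp ln : List (ℕ × ℕ)) : List (ℕ × ℤ) :=
  (lp.map fun p => (p.1, (p.2 : ℤ))) ++ (ln.map fun p => (p.1, -(p.2 : ℤ)))

theorem Fh_append (l l' : List (ℕ × ℤ)) (y : ℕ) : Fh (l ++ l') y = Fh l y + Fh l' y := by
  simp [Fh]

theorem Fh_mkL (lp ln : List (ℕ × ℕ)) (y : ℕ) : Fh (mkL lp ln) y = (FN lp y : ℤ) - FN ln y := by
  rw [mkL, Fh_append, sub_eq_add_neg]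
  congr 1
  · induction lp with
    | nil => simp [Fh, FN]
    | cons p l ih =>
      simp only [Fh, FN, List.map_cons, List.sum_cons] at ih ⊢
      rw [ih]
      push_cast
      rfl
  · induction ln with
    | nil => simp [Fh, FN]
    | cons p l ih =>
      simp only [Fh, FN, List.map_cons, List.sum_cons] at ih ⊢
      rw [ih]
      push_cast
      ring

def mkK (N : ℕ) (lp ln : List (ℕ × ℕ)) : ℕ × ℕ :=
  ((lp.map fun p => p.2 * (Nat.log2 (p.1 ^ N) + 1)).sum, (ln.map fun p => p.2 * Nat.log2 (p.1 ^ N)).sum)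

theorem sumK_append (N : ℕ) (l l' : List (ℕ × ℤ)) : sumK N (l ++ l') = sumK N l + sumK N l' := by
  simp [sumK]

theorem sumK_mkL (N : ℕ) (lp ln : List (ℕ × ℕ)) (hn : ∀ p ∈ ln, 1 ≤ p.2) :
    sumK N (mkL lp ln) = ((mkK N lp ln).2 : ℤ) - (mkK N lp ln).1 := by
  rw [mkL, sumK_append, add_comm, sub_eq_add_neg]
  congr 1
  · induction ln with
    | nil => simp [sumK, mkK]
    | cons p l ih =>
      have ih := ih (fun q hq => hn q (by simp [hq]))
      obtain ⟨a, ha⟩ : ∃ a, p.2 = a + 1 := ⟨p.2 - 1, by have := hn p (by simp); omega⟩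
      have e : -((a + 1 : ℕ) : ℤ) = Int.negSucc a := rfl
      simp only [sumK, mkK, List.map_cons, List.sum_cons] at ih ⊢
      rw [ih, ha, e]
      push_cast
      rfl
  · induction lp with
    | nil => simp [sumK, mkK]
    | cons p l ih =>
      simp only [sumK, mkK, List.map_cons, List.sum_cons] at ih ⊢
      rw [ih]
      push_cast
      ring

def gChk2 (N W D : ℕ) (lp ln : List (ℕ × ℕ)) : Bool :=
  lp.all (fun p => Nat.ble 1 p.1 && Nat.ble p.1 D) &&
  ln.all (fun p => Nat.ble 1 p.1 && Nat.ble p.1 D && Nat.ble 1 p.2) &&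
  Nat.beq (lp.map fun p => p.2).sum (ln.map fun p => p.2).sum &&
  Nat.ble (sumDA lp + sumDA ln) W && Nat.blt 0 N

def lg2 : ℕ → ℕ → ℕ → ℕ
  | 0, k, _ => k
  | j + 1, k, X => bif Nat.ble (2 ^ (k + 2 ^ j)) X then force (k + 2 ^ j) (fun k' => lg2 j k' X)
      else lg2 j k X

theorem lg2_eq (j k X : ℕ) (h1 : 2 ^ k ≤ X) (h2 : X < 2 ^ (k + 2 ^ j)) : lg2 j k X = Nat.log2 X := by
  induction j generalizing k with
  | zero =>
    rw [lg2]
    symm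
    rw [Nat.log2_eq_iff (by have := Nat.one_le_two_pow (n := k); omega)]
    exact ⟨h1, h2⟩
  | succ j ih =>
    rw [lg2]
    cases h : Nat.ble (2 ^ (k + 2 ^ j)) X with
    | true =>
      rw [cond_true, force_eq]
      apply ih _ (Nat.le_of_ble_eq_true h)
      have e : k + 2 ^ (j + 1) = k + 2 ^ j + 2 ^ j := by rw [pow_succ]; ring
      rwa [e] at h2
    | false =>
      rw [cond_false]
      apply ih _ h1
      by_contra hc
      have := Nat.ble_eq_true_of_le (not_lt.1 hc)
      rw [this] at h
      exact absurd h (by decide)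

def mkL2 (c : ℕ) : List (ℕ × ℕ) → ℕ → ℕ
  | [], acc => acc
  | p :: l, acc => force (p.1 ^ 65536) fun X => force (lg2 20 0 X + c) fun k =>
      force (acc + p.2 * k) fun acc' => mkL2 c l acc'

theorem mkL2_eq (c : ℕ) : ∀ (l : List (ℕ × ℕ)) (acc : ℕ), (∀ p ∈ l, 1 ≤ p.1 ∧ p.1 ≤ 500) →
    mkL2 c l acc = acc + (l.map fun p => p.2 * (Nat.log2 (p.1 ^ 65536) + c)).sum := by
  intro l
  induction l with
  | nil => intro acc _; simp [mkL2]
  | cons p l ih =>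
    intro acc h
    obtain ⟨h1, h2⟩ := h p (by simp)
    rw [mkL2, force_eq, force_eq, force_eq, ih _ (fun q hq => h q (by simp [hq])), lg2_eq]
    · rw [List.map_cons, List.sum_cons]; ring
    · rw [pow_zero]; exact Nat.one_le_pow _ _ h1
    · have e : 2 ^ (0 + 2 ^ 20) = (2 ^ 16) ^ 65536 := by
        have e0 : 0 + 2 ^ 20 = 16 * 65536 := by norm_num
        rw [e0]
        exact pow_mul 2 16 65536
      rw [e]
      exact Nat.pow_lt_pow_left (lt_of_le_of_lt h2 (by norm_num)) (by norm_num)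

theorem cheb_cert2 (w n sp sm N K W D : ℕ) (neg : Bool) (lp ln U : List (ℕ × ℕ))
    (h : gChk w n sp sm lp ln U = true) (h2 : gChk2 N W D lp ln = true)
    (h3 : bif neg then (mkK N lp ln).1 ≤ (mkK N lp ln).2 + K else
      K + (mkK N lp ln).1 ≤ (mkK N lp ln).2) (x : ℕ) (hx1 : 1 ≤ x)
    (hx : D ≤ x) :
    x * ((bif neg then -(K : ℝ) else K) * Real.log 2 / N) - W * (Real.log x + 1) ≤
      ((sp : ℝ) - sm) * Chebyshev.psi (x : ℝ) +
        (U.map fun u => (u.2 : ℝ) * Chebyshev.psi ((x / u.1 : ℕ) : ℝ)).sum := by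
  have hs := gChk_sound _ _ _ _ _ _ _ h
  simp only [gChk, Bool.and_eq_true, List.all_eq_true, Nat.ble_eq, Nat.blt_eq, Nat.beq_eq] at h
  simp only [gChk2, Bool.and_eq_true, List.all_eq_true, Nat.ble_eq, Nat.blt_eq, Nat.beq_eq] at h2
  obtain ⟨⟨⟨⟨a1, a2⟩, a3⟩, a4⟩, a5⟩ := h2
  have key := cheb_cert (mkL lp ln) ((sp : ℤ) - sm) U N (bif neg then -(K : ℤ) else K) W D
    (fun u hu => (h.1.1.1.1.1.1.1.2 u hu).2) ?_ ?_ ?_ ?_ ?_ a5 x hx1 hx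
  · have e1 : (((sp : ℤ) - sm : ℤ) : ℝ) = (sp : ℝ) - sm := by push_cast; rfl
    have e2 : ((bif neg then -(K : ℤ) else K : ℤ) : ℝ) = bif neg then -(K : ℝ) else K := by
      cases neg <;> simp
    rw [e1, e2] at key
    exact key
  · intro y hy
    have := hs y hy
    rw [Fh_mkL]
    omega
  · intro p hp
    rw [mkL, List.mem_append, List.mem_map, List.mem_map] at hp
    rcases hp with ⟨q, hq, rfl⟩ | ⟨q, hq, rfl⟩
    · exact a1 q hq
    · exact (a2 q hq).1
  · have e : sumE (mkL lp ln) = (((lp.map fun p => p.2).sum : ℕ) : ℤ) - ((ln.map fun p => p.2).sum : ℕ) := by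
      clear h a1 a2 a3 a4 h3 hs hx
      rw [mkL, sumE, List.map_append, List.sum_append, sub_eq_add_neg]
      congr 1
      · induction lp with
        | nil => simp
        | cons p l ih => simp only [List.map_cons, List.sum_cons] at ih ⊢; rw [ih]; push_cast; rfl
      · induction ln with
        | nil => simp
        | cons p l ih => simp only [List.map_cons, List.sum_cons] at ih ⊢; rw [ih]; push_cast; ring
    rw [e, a3]
    simp
  · rw [sumK_mkL _ _ _ (fun p hp => (a2 p hp).2)]
    cases neg
    · simp only [cond_false] at h3 ⊢
      omega
    · simp only [cond_true] at h3 ⊢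
      omega
  · refine le_trans (le_of_eq ?_) a4
    clear h a1 a2 a3 a4 h3 hs hx
    rw [mkL, sumW, List.map_append, List.sum_append]
    congr 1
    · induction lp with
      | nil => simp [sumDA]
      | cons p l ih => simp only [sumDA, List.map_cons, List.sum_cons] at ih ⊢; rw [ih]; rfl
    · induction ln with
      | nil => simp [sumDA]
      | cons p l ih =>
        simp only [sumDA, List.map_cons, List.sum_cons] at ih ⊢
        rw [ih, Int.natAbs_neg]; rfl


def lpA : List (ℕ × ℕ) := [
  (1, 99999997), (6, 16666667), (10, 10000000), (14, 7142857), (15, 6666667), (21, 4761905),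
  (22, 4545455), (26, 3846154), (33, 3030303), (34, 2941176), (35, 2857143), (38, 2631579),
  (39, 2564103), (46, 2173913), (51, 1960784), (55, 1818182), (57, 1754386), (58, 1724138),
  (62, 1612903), (65, 1538462), (69, 1449275), (74, 1351351), (77, 1298701), (82, 1219512),
  (85, 1176471), (86, 1162791), (87, 1149425), (91, 1098901), (93, 819041), (94, 863524),
  (96, 51492), (106, 943396), (111, 900901), (115, 869565), (118, 847458), (119, 840336),
  (122, 819672), (123, 813008), (129, 367910), (133, 751880), (134, 746269), (141, 709220),
  (142, 704225), (143, 699301), (145, 659522), (146, 618127), (155, 97281), (156, 133043),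
  (158, 632911), (159, 628931), (161, 523186), (162, 97327), (166, 63098), (167, 52271),
  (171, 3552), (177, 408294), (178, 561798), (183, 546448), (185, 540541), (187, 312120),
  (188, 245215), (194, 188699), (196, 156469), (200, 169322), (201, 497512), (202, 129362),
  (203, 492611), (205, 487805), (206, 164803), (209, 437612), (210, 375574), (213, 211775),
  (214, 286134), (215, 317705), (216, 389968), (217, 321304), (218, 237550), (226, 442478),
  (227, 404613), (233, 235729), (235, 425532), (237, 237360), (247, 206811), (248, 160020),
  (249, 244329), (252, 70517), (253, 103285), (256, 388252), (259, 367363), (265, 377358),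
  (267, 109790), (269, 43234), (270, 14770), (272, 265932), (275, 180655), (278, 344904),
  (280, 101303), (285, 3736), (287, 346473), (291, 123383), (292, 35810), (294, 142043),
  (295, 338983), (296, 122622), (298, 129156), (299, 334448), (300, 92239), (301, 136957),
  (303, 330033), (307, 44949), (308, 305302), (312, 146172), (314, 114119), (319, 313480),
  (321, 265172), (326, 271271), (327, 147444), (328, 246820), (330, 300241), (331, 84408),
  (332, 269656), (333, 3198), (334, 185499), (335, 140219), (336, 168855), (337, 21595),
  (340, 34297), (342, 93766), (343, 135872), (344, 81064), (346, 248681), (348, 59156),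
  (350, 96148), (353, 72328), (355, 101723), (358, 279330), (359, 96898), (360, 121734),
  (362, 261707), (363, 14497), (365, 210652), (373, 39723), (375, 14417), (376, 34956),
  (377, 55850), (378, 124620), (380, 77809), (381, 262467), (382, 34094), (386, 259067),
  (387, 135761), (390, 256410), (391, 255754), (393, 157133), (394, 253807), (396, 117537),
  (398, 251256), (404, 247525), (407, 89180), (408, 155460), (411, 38775), (413, 67148),
  (415, 215725), (416, 28450), (417, 128566), (420, 18385), (421, 6683), (422, 202677),
  (423, 43875), (427, 234192), (433, 165113), (437, 78123), (438, 99583), (439, 68192),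
  (441, 59412), (444, 79350), (445, 224719), (446, 39595), (447, 86104), (448, 103866),
  (450, 155902), (451, 32739), (453, 130070), (456, 80400), (458, 30413), (462, 216450),
  (464, 66226), (465, 18818), (469, 213220), (471, 76079), (473, 211416), (475, 210526),
  (476, 2237), (478, 117687), (481, 207900), (482, 207469), (485, 65799), (486, 77205),
  (490, 193732), (492, 39032), (493, 36938), (496, 121603), (497, 199825), (499, 34025),
  (500, 200000)]

def lnA : List (ℕ × ℕ) := [
  (2, 50000000), (3, 33333333), (5, 20000000), (7, 14285714), (11, 9090909), (13, 7692308),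
  (17, 5882353), (19, 5263158), (23, 4347826), (29, 3448276), (30, 3333333), (31, 3225806),
  (37, 2702703), (41, 2439024), (42, 2380952), (43, 2325581), (47, 2127660), (53, 1886792),
  (59, 1694915), (61, 1639344), (66, 1515152), (67, 1492537), (70, 1428571), (71, 1408451),
  (73, 1369863), (78, 1282051), (79, 1265823), (83, 1204819), (89, 1123596), (95, 11208),
  (97, 377398), (98, 312938), (100, 338644), (101, 258723), (102, 980392), (103, 329607),
  (105, 952381), (107, 934579), (109, 917431), (110, 909091), (113, 884956), (114, 877193),
  (127, 787402), (130, 659285), (131, 471400), (136, 618115), (137, 116324), (138, 724638),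
  (139, 719424), (147, 75460), (148, 245244), (149, 258312), (151, 662252), (154, 649351),
  (157, 228238), (163, 613497), (164, 117095), (165, 606061), (168, 105776), (170, 487277),
  (172, 81143), (173, 497361), (174, 574713), (179, 403732), (181, 552486), (182, 549451),
  (186, 409521), (189, 227762), (190, 150013), (191, 68188), (192, 25746), (193, 518135),
  (195, 512821), (197, 507614), (199, 502513), (211, 333325), (219, 35309), (220, 14064),
  (222, 450450), (223, 79190), (224, 228507), (225, 311804), (228, 143313), (229, 60827),
  (230, 434783), (231, 432900), (232, 132453), (238, 420168), (239, 235373), (241, 414938),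
  (246, 406504), (250, 396855), (251, 133576), (255, 67306), (257, 175077), (258, 183955),
  (260, 36308), (261, 80673), (262, 130304), (263, 227548), (264, 291877), (266, 264785),
  (271, 76199), (273, 323333), (274, 123152), (277, 361011), (279, 1501), (281, 355872),
  (282, 287841), (283, 353357), (286, 349650), (288, 15211), (290, 329761), (293, 341297),
  (302, 61453), (304, 267191), (305, 44093), (306, 126691), (309, 167760), (310, 48641),
  (313, 144744), (317, 315457), (318, 314465), (322, 310559), (323, 309598), (324, 308642),
  (325, 149604), (329, 295936), (338, 88296), (341, 293255), (349, 78142), (351, 6079),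
  (352, 65183), (354, 282486), (356, 207657), (357, 171520), (366, 273224), (367, 209504),
  (370, 270270), (371, 72252), (372, 106680), (374, 140411), (379, 66267), (383, 261097),
  (385, 259740), (395, 42983), (397, 74474), (399, 250627), (400, 44046), (401, 205440),
  (402, 248756), (405, 18759), (406, 246305), (409, 19713), (410, 243902), (412, 115069),
  (414, 30549), (418, 218806), (419, 109336), (425, 2893), (426, 234742), (428, 38303),
  (429, 233100), (430, 232558), (431, 218174), (432, 196285), (434, 160652), (435, 219841),
  (436, 122115), (440, 43023), (442, 226244), (449, 169525), (452, 18), (454, 202307),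
  (455, 110870), (457, 59562), (460, 2809), (461, 214117), (463, 215983), (466, 117865),
  (467, 214133), (468, 44348), (470, 172705), (474, 118680), (479, 208768), (480, 10298),
  (483, 174395), (484, 206612), (487, 99781), (488, 105186), (489, 26442), (494, 125696),
  (495, 160655), (498, 115265)]

def UA : List (ℕ × ℕ) := [
  (1, 77), (353, 28695839), (389, 114293587), (427, 33923176), (625, 12516117), (1007, 64843400),
  (1218, 87656308), (1962, 79151709), (4626, 157365662), (14516, 58800029), (28287, 114565099),
  (41415, 71880222), (55123, 53534949), (120001, 11973775287)]

def lpB : List (ℕ × ℕ) := [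
  (2, 50000000), (3, 33333333), (5, 20000000), (7, 14285714), (11, 9090909), (13, 7692308),
  (17, 5882353), (19, 5263158), (23, 4347826), (29, 3448276), (30, 3333333), (31, 3225806),
  (37, 2702703), (41, 2439024), (42, 2380952), (43, 2325581), (47, 2127660), (53, 1886792),
  (59, 1694915), (61, 1639344), (66, 1515152), (67, 1492537), (70, 1428571), (71, 1408451),
  (73, 1113889), (75, 249148), (78, 1282051), (79, 1265823), (84, 402163), (89, 1123596),
  (97, 1030928), (101, 990099), (102, 980392), (103, 970874), (105, 952381), (107, 344352),
  (108, 158974), (109, 252299), (110, 633252), (111, 8780), (112, 44150), (113, 246793),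
  (114, 877193), (116, 443646), (117, 429410), (121, 97542), (127, 787402), (130, 769231),
  (131, 763359), (137, 729927), (138, 246916), (139, 131164), (140, 167708), (149, 671141),
  (151, 584089), (152, 77649), (154, 649351), (157, 636943), (163, 613497), (165, 606061),
  (167, 439217), (170, 322741), (173, 392567), (174, 574713), (175, 183348), (179, 128921),
  (182, 549451), (186, 437912), (188, 427099), (190, 526316), (191, 466694), (192, 56570),
  (193, 219397), (195, 130546), (198, 249167), (200, 500000), (207, 273408), (208, 17543),
  (211, 473934), (220, 19338), (223, 448430), (227, 440529), (229, 436681), (230, 376887),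
  (231, 432900), (233, 278994), (238, 420168), (239, 418410), (240, 49178), (241, 236023),
  (243, 206330), (245, 27528), (246, 376396), (251, 339216), (255, 215161), (257, 69472),
  (258, 387597), (263, 6627), (264, 9666), (266, 249472), (268, 61662), (269, 211790),
  (270, 10149), (271, 136708), (273, 182267), (279, 66482), (282, 123610), (285, 350877),
  (286, 349650), (289, 29917), (290, 336371), (293, 82943), (297, 170589), (300, 39342),
  (301, 206130), (308, 52591), (309, 5077), (310, 322581), (311, 164660), (312, 7878),
  (315, 129471), (318, 307210), (320, 212935), (322, 281610), (324, 102030), (325, 7863),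
  (331, 184476), (337, 296736), (345, 251258), (347, 288184), (349, 235231), (353, 118149),
  (354, 282486), (356, 108067), (357, 280112), (359, 278552), (360, 88089), (362, 39523),
  (366, 64903), (367, 3919), (368, 151682), (370, 270270), (372, 27552), (373, 61865),
  (374, 44242), (375, 131135), (378, 80383), (379, 150494), (381, 31457), (383, 261097),
  (387, 43755), (388, 250843), (389, 57859), (391, 42540), (397, 194710), (399, 84312),
  (402, 165682), (404, 9719), (405, 113049), (406, 57170), (410, 127008), (411, 185512),
  (412, 925), (414, 22536), (418, 239234), (419, 131614), (421, 135498), (426, 234742),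
  (429, 233100), (430, 183525), (431, 232019), (433, 230947), (434, 230415), (435, 65777),
  (437, 22877), (438, 97303), (439, 227790), (441, 2289), (442, 82493), (443, 125886),
  (444, 101051), (447, 13606), (449, 135281), (455, 219780), (457, 40446), (459, 38349),
  (465, 17848), (467, 23867), (469, 71525), (470, 139907), (474, 210970), (475, 41135),
  (476, 19136), (477, 99676), (483, 155791), (484, 206612), (485, 37710), (487, 43816),
  (488, 108440), (490, 68591), (492, 64910), (493, 4975), (494, 202429), (496, 78505)]

def lnB : List (ℕ × ℕ) := [
  (1, 100000005), (6, 16666667), (10, 10000000), (14, 7142857), (15, 6666667), (21, 4761905),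
  (22, 4545455), (26, 3846154), (33, 3030303), (34, 2941176), (35, 2857143), (38, 2631579),
  (39, 2564103), (46, 2173913), (51, 1960784), (55, 1818182), (57, 1754386), (58, 1724138),
  (62, 1612903), (65, 1538462), (69, 1449275), (74, 1351351), (77, 1298701), (82, 1219512),
  (85, 645482), (86, 917624), (87, 1149425), (91, 1098901), (93, 1075269), (94, 1063830),
  (95, 1052632), (106, 943396), (115, 753774), (118, 847458), (119, 840336), (120, 98355),
  (122, 819672), (123, 813008), (129, 775194), (133, 751880), (134, 746269), (141, 305250),
  (142, 230599), (143, 699301), (145, 689655), (146, 556945), (150, 124574), (155, 645161),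
  (158, 632911), (159, 628931), (161, 621118), (168, 42445), (172, 122583), (177, 564972),
  (178, 561798), (180, 110607), (181, 79046), (183, 129806), (184, 145934), (185, 540541),
  (194, 515464), (196, 170896), (201, 413580), (202, 401363), (203, 114340), (204, 96016),
  (205, 254015), (206, 411689), (209, 478469), (210, 476190), (213, 469484), (214, 172176),
  (215, 465116), (216, 79487), (217, 460829), (218, 126150), (219, 371296), (221, 334444),
  (222, 4390), (224, 22075), (225, 83049), (226, 123397), (232, 221823), (234, 152353),
  (235, 338706), (237, 421941), (242, 105648), (247, 374872), (252, 75098), (253, 395257),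
  (254, 393701), (259, 150342), (262, 381679), (265, 67709), (267, 259314), (274, 278268),
  (275, 253301), (276, 26169), (277, 3518), (278, 65582), (280, 101514), (283, 11977),
  (284, 224879), (287, 35615), (288, 10745), (291, 343643), (294, 973), (298, 151456),
  (302, 331126), (303, 75417), (304, 25413), (305, 320031), (307, 57872), (314, 318471),
  (317, 137179), (319, 161326), (321, 35992), (323, 14009), (326, 300711), (327, 84100),
  (328, 129677), (329, 174668), (330, 211084), (333, 186294), (334, 219608), (335, 298507),
  (336, 94034), (339, 82264), (341, 293255), (346, 196283), (348, 147882), (350, 40519),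
  (351, 143137), (355, 225854), (358, 64460), (363, 32514), (365, 222778), (369, 29942),
  (371, 221178), (376, 245386), (377, 203684), (380, 124033), (382, 233347), (384, 28285),
  (385, 32966), (386, 113763), (390, 256410), (392, 7220), (393, 71937), (395, 253165),
  (396, 124583), (400, 235078), (401, 202778), (403, 29789), (407, 70582), (408, 171214),
  (413, 119492), (416, 8771), (417, 43721), (420, 33164), (422, 131571), (423, 134657),
  (424, 230408), (425, 43967), (427, 224848), (436, 88555), (440, 157868), (445, 202443),
  (446, 103012), (450, 27957), (451, 65353), (453, 220751), (454, 194267), (456, 25883),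
  (458, 78791), (460, 176759), (461, 8966), (462, 98270), (463, 95597), (466, 133574),
  (468, 36428), (471, 81973), (472, 51083), (478, 209205), (479, 101330), (480, 164584),
  (481, 52582), (482, 205862), (486, 82171), (489, 65281), (495, 82188), (497, 185727),
  (499, 95735), (500, 136258)]

def UB : List (ℕ × ℕ) := [
  (321, 31530496), (517, 196640909), (916, 11567541), (1784, 126972035), (2158, 56813586),
  (3159, 2372467), (6156, 36633458), (7449, 47942844), (9013, 28551004), (13196, 90572602),
  (14516, 21545201), (19321, 55585741), (23378, 53705555), (120001, 11235853933)]

theorem certA1 : gChk 45 120002 100000000 0 lpA lnA UA = true := by decide +kernel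

theorem certA2 : gChk2 65536 26264834170 500 lpA lnA = true := by decide +kernel

theorem certA3 : Nat.ble (9412687785431 + mkL2 1 lpA 0) (mkL2 0 lnA 0) = true := by
  decide +kernel

theorem certB1 : gChk 45 120002 0 100000000 lpB lnB UB = true := by decide +kernel

theorem certB2 : gChk2 65536 24563352690 500 lpB lnB = true := by decide +kernel

theorem certB3 : Nat.ble (mkL2 1 lpB 0) (mkL2 0 lnB 0 + 9504292951547) = true := by
  decide +kernel

def lpC : List (ℕ × ℕ) := [(2, 15), (3, 10), (5, 6)]
def lnC : List (ℕ × ℕ) := [(1, 30), (30, 1)]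

theorem certC1 : gChk 30 2002 0 30 lpC lnC [(6, 30), (2001, 29)] = true := by decide +kernel

theorem certC2 : gChk2 65536 150 500 lpC lnC = true := by
  decide +kernel

theorem certC3 : Nat.ble (mkL2 1 lpC 0) (mkL2 0 lnC 0 + 2613228) = true := by
  decide +kernel

/-- the three certificates in final form -/
theorem cheb_cert3 (w n sp sm K W : ℕ) (neg : Bool) (lp ln U : List (ℕ × ℕ))
    (h : gChk w n sp sm lp ln U = true) (h2 : gChk2 65536 W 500 lp ln = true)
    (h3 : bif neg then mkL2 1 lp 0 ≤ mkL2 0 ln 0 + K else K + mkL2 1 lp 0 ≤ mkL2 0 ln 0)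
    (x : ℕ) (hx : 500 ≤ x) :
    x * ((bif neg then -(K : ℝ) else K) * Real.log 2 / 65536) - W * (Real.log x + 1) ≤
      ((sp : ℝ) - sm) * Chebyshev.psi (x : ℝ) +
        (U.map fun u => (u.2 : ℝ) * Chebyshev.psi ((x / u.1 : ℕ) : ℝ)).sum := by
  have h4 := h2
  simp only [gChk2, Bool.and_eq_true, List.all_eq_true, Nat.ble_eq, Nat.blt_eq, Nat.beq_eq] at h4
  obtain ⟨⟨⟨⟨a1, a2⟩, a3⟩, a4⟩, a5⟩ := h4
  rw [mkL2_eq 1 lp 0 a1, mkL2_eq 0 ln 0 (fun p hp => (a2 p hp).1), zero_add, zero_add] at h3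
  have := cheb_cert2 w n sp sm 65536 K W 500 neg lp ln U h h2 h3 x (by omega) hx
  exact_mod_cast this


def lcmChk : ℕ → ℕ → ℕ → Bool
  | 0, _, _ => true
  | f + 1, m, L => force (Nat.lcm L (m + 1)) fun L' => force (m + 1) fun m' =>
      bif Nat.ble L' (3 ^ m') then lcmChk f m' L' else false

theorem lcmUpto_succ (m : ℕ) : Nat.lcmUpto (m + 1) = Nat.lcm (Nat.lcmUpto m) (m + 1) := by
  unfold Nat.lcmUpto
  rw [← Finset.insert_Icc_right_eq_Icc_add_one (by omega), Finset.lcm_insert, lcm_comm]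
  rfl

theorem lcmChk_sound (f m : ℕ) (h : lcmChk f m (Nat.lcmUpto m) = true) :
    ∀ k, m < k → k ≤ m + f → Nat.lcmUpto k ≤ 3 ^ k := by
  induction f generalizing m with
  | zero => intro k h1 h2; omega
  | succ f ih =>
    rw [lcmChk, force_eq, force_eq, ← lcmUpto_succ] at h
    cases h1 : Nat.ble (Nat.lcmUpto (m + 1)) (3 ^ (m + 1)) with
    | false => rw [h1, cond_false] at h; exact absurd h (by decide)
    | true =>
      rw [h1, cond_true] at h
      intro k hk1 hk2
      by_cases hk : k = m + 1
      · subst hk; exact Nat.le_of_ble_eq_true h1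
      · exact ih (m + 1) h k (by omega) (by omega)

theorem lcm_small : lcmChk 2400 0 1 = true := by decide +kernel

theorem log2_lt : Real.log 2 < 0.6931471808 := Real.log_two_lt_d9
theorem log2_gt : 0.6931471803 < Real.log 2 := Real.log_two_gt_d9

theorem log3_lt : Real.log 3 < 1.11 := by
  have h : Real.log ((3 : ℝ) ^ 5) ≤ Real.log ((2 : ℝ) ^ 8) :=
    Real.log_le_log (by norm_num) (by norm_num)
  rw [Real.log_pow, Real.log_pow] at h
  push_cast at h
  have := log2_lt
  linarith

theorem psi_small (m : ℕ) (hm : m ≤ 2400) : Chebyshev.psi (m : ℝ) ≤ 1.13 * m := by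
  rcases Nat.eq_zero_or_pos m with rfl | h0
  · simp
  · have h1 := lcmChk_sound 2400 0 (by
      have e : Nat.lcmUpto 0 = 1 := by simp [Nat.lcmUpto]
      rw [e]; exact lcm_small) m h0 (by omega)
    rw [Chebyshev.psi_eq_log_lcmUpto]
    have h2 : ((Nat.lcmUpto m : ℕ) : ℝ) ≤ (3 : ℝ) ^ m := by exact_mod_cast h1
    have h3 := Real.log_le_log (by exact_mod_cast Nat.lcmUpto_pos m) h2
    rw [Real.log_pow] at h3
    have h4 : (0 : ℝ) ≤ m := Nat.cast_nonneg _
    have := log3_lt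
    nlinarith

/-- tangent line bound for the logarithm -/
theorem log_tangent (x t : ℝ) (hx : 0 < x) (ht : 0 < t) : Real.log x ≤ Real.log t + (x / t - 1) := by
  have h := Real.log_le_sub_one_of_pos (show 0 < x / t by positivity)
  rw [Real.log_div hx.ne' ht.ne'] at h
  linarith

theorem psi_le_nat (m : ℕ) : Chebyshev.psi (m : ℝ) ≤ 1.13 * m := by
  induction m using Nat.strong_induction_on with
  | _ m ih =>
    by_cases hm : m ≤ 2400
    · exact psi_small m hm
    · have hm' : (2400 : ℝ) ≤ m := by exact_mod_cast (by omega : 2400 ≤ m)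
      have key := cheb_cert3 30 2002 0 30 2613228 150 true lpC lnC _ certC1 certC2
        (Nat.le_of_ble_eq_true certC3) m (by omega)
      simp only [cond_true, List.map_cons, List.map_nil, List.sum_cons, List.sum_nil] at key
      have i1 := ih (m / 6) (by omega)
      have i2 := ih (m / 2001) (by omega)
      have j1 : ((m / 6 : ℕ) : ℝ) ≤ (m : ℝ) / 6 := by exact_mod_cast Nat.cast_div_le (α := ℝ)
      have j2 : ((m / 2001 : ℕ) : ℝ) ≤ (m : ℝ) / 2001 := by
        exact_mod_cast Nat.cast_div_le (α := ℝ)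
      have h4 := log_tangent m (2 ^ 12) (by linarith) (by norm_num)
      rw [Real.log_pow] at h4
      have l2 := log2_lt
      have l3 : (m : ℝ) * (-(2613228 : ℕ) * Real.log 2 / 65536) ≥ -(m * 27.64) := by
        have : (2613228 : ℕ) * Real.log 2 / 65536 ≤ 27.64 := by push_cast; linarith
        have := mul_le_mul_of_nonneg_left this (show (0 : ℝ) ≤ m by linarith)
        have e : (m : ℝ) * (-(2613228 : ℕ) * Real.log 2 / 65536) =
          -(m * ((2613228 : ℕ) * Real.log 2 / 65536)) := by ring
        rw [e]; linarith
      push_cast at key l3 h4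
      linarith

theorem psi_le_real (x : ℝ) (hx : 0 ≤ x) : Chebyshev.psi x ≤ 1.13 * x := by
  rw [Chebyshev.psi_eq_psi_coe_floor]
  have h1 := psi_le_nat ⌊x⌋₊
  have h2 := Nat.floor_le hx
  linarith

theorem U_bound (U : List (ℕ × ℕ)) (x : ℕ) :
    (U.map fun u => (u.2 : ℝ) * Chebyshev.psi ((x / u.1 : ℕ) : ℝ)).sum ≤
      1.13 * x * (U.map fun u => (u.2 : ℝ) / u.1).sum := by
  induction U with
  | nil => simp
  | cons u U ih =>
    simp only [List.map_cons, List.sum_cons]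
    have h1 := psi_le_nat (x / u.1)
    have j1 : ((x / u.1 : ℕ) : ℝ) ≤ (x : ℝ) / u.1 := Nat.cast_div_le
    have h2 : (u.2 : ℝ) * Chebyshev.psi ((x / u.1 : ℕ) : ℝ) ≤ u.2 * (1.13 * ((x : ℝ) / u.1)) :=
      mul_le_mul_of_nonneg_left (by linarith) (Nat.cast_nonneg _)
    have e : (u.2 : ℝ) * (1.13 * ((x : ℝ) / u.1)) = 1.13 * x * ((u.2 : ℝ) / u.1) := by ring
    rw [e] at h2
    linarith

theorem UA_sum : (UA.map fun u => (u.2 : ℝ) / u.1).sum ≤ 795970 := by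
  simp only [UA, List.map_cons, List.map_nil, List.sum_cons, List.sum_nil]
  norm_num

theorem UB_sum : (UB.map fun u => (u.2 : ℝ) / u.1).sum ≤ 712170 := by
  simp only [UB, List.map_cons, List.map_nil, List.sum_cons, List.sum_nil]
  norm_num

theorem psi_lower (x : ℕ) (hx : 500 ≤ x) :
    0.98654 * (x : ℝ) - 263 * (Real.log x + 1) ≤ Chebyshev.psi (x : ℝ) := by
  have key := cheb_cert3 45 120002 100000000 0 9412687785431 26264834170 false lpA lnA _ certA1
    certA2 (Nat.le_of_ble_eq_true certA3) x hx
  have h1 := U_bound UA x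
  have hx0 : (0 : ℝ) ≤ x := Nat.cast_nonneg _
  have h2 : 1.13 * (x : ℝ) * (UA.map fun u => (u.2 : ℝ) / u.1).sum ≤ 1.13 * x * 795970 :=
    mul_le_mul_of_nonneg_left UA_sum (by positivity)
  have hl : 0 ≤ Real.log x := Real.log_nonneg (by exact_mod_cast (by omega : 1 ≤ x))
  rw [cond_false] at key
  have l2 := log2_gt
  have h3 : (x : ℝ) * (((9412687785431 : ℕ) : ℝ) * Real.log 2 / 65536) ≥ x * 99554100 := by
    apply mul_le_mul_of_nonneg_left _ hx0
    push_cast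
    linarith
  push_cast at key h3
  linarith

theorem psi_upper (x : ℕ) (hx : 500 ≤ x) :
    Chebyshev.psi (x : ℝ) ≤ 1.01328 * (x : ℝ) + 246 * (Real.log x + 1) := by
  have key := cheb_cert3 45 120002 0 100000000 9504292951547 24563352690 true lpB lnB _ certB1
    certB2 (Nat.le_of_ble_eq_true certB3) x hx
  have h1 := U_bound UB x
  have hx0 : (0 : ℝ) ≤ x := Nat.cast_nonneg _
  have h2 : 1.13 * (x : ℝ) * (UB.map fun u => (u.2 : ℝ) / u.1).sum ≤ 1.13 * x * 712170 :=
    mul_le_mul_of_nonneg_left UB_sum (by positivity)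
  have hl : 0 ≤ Real.log x := Real.log_nonneg (by exact_mod_cast (by omega : 1 ≤ x))
  rw [cond_true] at key
  have l2 := log2_lt
  have h3 : (x : ℝ) * (((9504292951547 : ℕ) : ℝ) * Real.log 2 / 65536) ≤ x * 100522980 := by
    apply mul_le_mul_of_nonneg_left _ hx0
    push_cast
    linarith
  have e : (x : ℝ) * (-((9504292951547 : ℕ) : ℝ) * Real.log 2 / 65536) =
    -(x * (((9504292951547 : ℕ) : ℝ) * Real.log 2 / 65536)) := by ring
  rw [e] at key
  push_cast at key h3
  linarith

theorem theta_lower (x : ℕ) (hx : 1000000 ≤ x) (s t : ℝ) (hs : 1 ≤ s) (ht : 1 ≤ t)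
    (hsx : s ^ 2 ≤ x) (htx : t ^ 3 ≤ x) :
    (0.98654 - 1.13 / s - 2.26 / t ^ 2) * (x : ℝ) - 263 * (Real.log x + 1) ≤
      Chebyshev.theta (x : ℝ) := by
  have h1 := Chebyshev.psi_sub_theta_le_psi_add_psi_add_psi (x : ℝ)
  have h2 := psi_lower x (by omega)
  have hx0 : (1000000 : ℝ) ≤ x := by exact_mod_cast hx
  have a1 := psi_le_real ((x : ℝ) ^ (2 : ℝ)⁻¹) (by positivity)
  have a2 := psi_le_real ((x : ℝ) ^ (3 : ℝ)⁻¹) (by positivity)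
  have a3 := psi_le_real ((x : ℝ) ^ (5 : ℝ)⁻¹) (by positivity)
  have a4 : (x : ℝ) ^ (5 : ℝ)⁻¹ ≤ (x : ℝ) ^ (3 : ℝ)⁻¹ :=
    Real.rpow_le_rpow_of_exponent_le (by linarith) (by norm_num)
  set q := (x : ℝ) ^ (2 : ℝ)⁻¹ with hq
  set r := (x : ℝ) ^ (3 : ℝ)⁻¹ with hr
  have q0 : 0 ≤ q := by positivity
  have r0 : 0 ≤ r := by positivity
  have q2 : q ^ 2 = x := by
    rw [hq, ← Real.rpow_natCast, ← Real.rpow_mul (by linarith)]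
    norm_num
  have r3 : r ^ 3 = x := by
    rw [hr, ← Real.rpow_natCast, ← Real.rpow_mul (by linarith)]
    norm_num
  have b1 : s ≤ q := by
    apply le_of_sq_le_sq _ q0
    rw [q2]; exact hsx
  have b2 : t ≤ r := by
    apply le_of_pow_le_pow_left₀ (n := 3) (by norm_num) r0
    rw [r3]; exact htx
  have c1 : q ≤ x / s := by
    rw [le_div_iff₀ (by linarith), ← q2]
    nlinarith
  have c2 : r ≤ x / t ^ 2 := by
    rw [le_div_iff₀ (by positivity), ← r3]
    have : t ^ 2 ≤ r ^ 2 := by gcongr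
    nlinarith
  have e : (0.98654 - 1.13 / s - 2.26 / t ^ 2) * (x : ℝ) =
    0.98654 * x - 1.13 * (x / s) - 2.26 * (x / t ^ 2) := by ring
  rw [e]
  linarith


theorem theta_nat (n : ℕ) : Chebyshev.theta (n : ℝ) =
    ∑ p ∈ (Finset.range (n + 1)).filter Nat.Prime, Real.log p := by
  rw [Chebyshev.theta, Nat.floor_natCast]
  apply Finset.sum_congr _ (fun _ _ => rfl)
  ext p
  simp only [Finset.mem_filter, Finset.mem_Ioc, Finset.mem_range]
  constructor
  · rintro ⟨⟨h1, h2⟩, h3⟩; exact ⟨by omega, h3⟩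
  · rintro ⟨h1, h3⟩; exact ⟨⟨h3.pos, by omega⟩, h3⟩

theorem sum_filter_succ (f : ℕ → ℝ) (n : ℕ) :
    ∑ p ∈ (Finset.range (n + 1 + 1)).filter Nat.Prime, f p =
      ∑ p ∈ (Finset.range (n + 1)).filter Nat.Prime, f p + if (n + 1).Prime then f (n + 1) else 0 := by
  rw [Finset.sum_filter, Finset.sum_range_succ, Finset.sum_filter]

theorem abel_aux (x : ℕ) (L b E : ℝ) (hL : Real.log x = L) (hL2 : 2 ≤ L) (hb : 0 ≤ b) (hE : 0 ≤ E)
    (hth : ∀ m : ℕ, 1 ≤ m → Chebyshev.theta (m : ℝ) ≤ b * m + E) (n : ℕ) (hn : 1 ≤ n) (hnx : n ≤ x) :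
    0 ≤ ∑ p ∈ (Finset.range (n + 1)).filter Nat.Prime, Real.log p * (p * (2 * L - Real.log p)) +
      (b * n + E - Chebyshev.theta (n : ℝ)) * (n * (2 * L - Real.log n)) -
      b * (L * n ^ 2 - n ^ 2 * Real.log n / 2 + n ^ 2 / 4) := by
  induction n, hn using Nat.le_induction with
  | base =>
    have e : (Finset.range (1 + 1)).filter Nat.Prime = ∅ := by decide
    rw [e]
    have : Chebyshev.theta ((1 : ℕ) : ℝ) = 0 := by simp
    rw [this]
    simp
    nlinarith
  | succ n hn ih =>
    have ih := ih (by omega)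
    rw [sum_filter_succ (fun p => Real.log p * (p * (2 * L - Real.log p)))]
    have e : Chebyshev.theta ((n + 1 : ℕ) : ℝ) = Chebyshev.theta (n : ℝ) +
        if (n + 1).Prime then Real.log ((n + 1 : ℕ) : ℝ) else 0 := by
      rw [theta_nat, theta_nat, sum_filter_succ (fun p => Real.log p)]
    have hn0 : (1 : ℝ) ≤ n := by exact_mod_cast hn
    have hT := hth n hn
    have hlm : Real.log ((n + 1 : ℕ) : ℝ) ≤ L := by
      rw [← hL]
      exact Real.log_le_log (by positivity) (by exact_mod_cast hnx)
    have hl0 : 0 ≤ Real.log (n : ℝ) := Real.log_nonneg hn0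
    have u1 : Real.log ((n + 1 : ℕ) : ℝ) ≤ Real.log n + 1 / n := by
      have := log_tangent ((n + 1 : ℕ) : ℝ) n (by positivity) (by linarith)
      have e2 : ((n + 1 : ℕ) : ℝ) / n - 1 = 1 / n := by push_cast; field_simp; ring
      rw [e2] at this; exact this
    have u2 : Real.log (n : ℝ) ≤ Real.log ((n + 1 : ℕ) : ℝ) - 1 / (n + 1) := by
      have := log_tangent n ((n + 1 : ℕ) : ℝ) (by linarith) (by positivity)
      have e2 : (n : ℝ) / ((n + 1 : ℕ) : ℝ) - 1 = -(1 / (n + 1)) := by push_cast; field_simp; ring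
      rw [e2] at this; linarith
    have hP : (if (n + 1).Prime then Real.log ((n + 1 : ℕ) : ℝ) *
        (((n + 1 : ℕ) : ℝ) * (2 * L - Real.log ((n + 1 : ℕ) : ℝ))) else 0) =
        (if (n + 1).Prime then Real.log ((n + 1 : ℕ) : ℝ) else 0) *
        (((n + 1 : ℕ) : ℝ) * (2 * L - Real.log ((n + 1 : ℕ) : ℝ))) := by
      split_ifs <;> simp
    rw [hP, e]
    set S := ∑ p ∈ (Finset.range (n + 1)).filter Nat.Prime, Real.log p * (p * (2 * L - Real.log p))
    set D := (if (n + 1).Prime then Real.log ((n + 1 : ℕ) : ℝ) else 0)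
    set th := Chebyshev.theta (n : ℝ)
    set lm := Real.log ((n + 1 : ℕ) : ℝ)
    set ln := Real.log (n : ℝ)
    push_cast
    have v1 : n * (lm - ln) ≤ 1 := by
      have := mul_le_mul_of_nonneg_left u1 (show (0 : ℝ) ≤ n by linarith)
      have e3 : (n : ℝ) * (ln + 1 / n) = n * ln + 1 := by field_simp
      nlinarith
    have v2 : 1 ≤ (n + 1) * (lm - ln) := by
      have := mul_le_mul_of_nonneg_left u2 (show (0 : ℝ) ≤ (n : ℝ) + 1 by linarith)
      have e3 : ((n : ℝ) + 1) * (lm - 1 / (n + 1)) = (n + 1) * lm - 1 := by field_simp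
      nlinarith
    have w1 : 0 ≤ ((n : ℝ) + 1) * (2 * L - lm) - n * (2 * L - ln) := by nlinarith
    have w2 : 0 ≤ (b * n + E - th) * (((n : ℝ) + 1) * (2 * L - lm) - n * (2 * L - ln)) :=
      mul_nonneg (by linarith) w1
    have w3 : 0 ≤ ((n : ℝ) + 1) * (2 * L - lm) -
        ((L * (n + 1) ^ 2 - (n + 1) ^ 2 * lm / 2 + (n + 1) ^ 2 / 4) -
          (L * n ^ 2 - n ^ 2 * ln / 2 + n ^ 2 / 4)) := by
      have a1 : (n : ℝ) - 1 ≤ n ^ 2 * (lm - ln) := by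
        have h5 : 0 ≤ lm - ln := by nlinarith
        have := mul_le_mul_of_nonneg_left v2 (show (0 : ℝ) ≤ n - 1 by linarith)
        nlinarith
      have e4 : ((n : ℝ) + 1) * (2 * L - lm) -
        ((L * (n + 1) ^ 2 - (n + 1) ^ 2 * lm / 2 + (n + 1) ^ 2 / 4) -
          (L * n ^ 2 - n ^ 2 * ln / 2 + n ^ 2 / 4)) =
          L - lm / 2 + n ^ 2 * (lm - ln) / 2 - (2 * n + 1) / 4 := by ring
      rw [e4]
      linarith
    have w4 := mul_nonneg hb w3
    nlinarith

theorem sum_primes_lower (x : ℕ) (L b E : ℝ) (hL : Real.log x = L) (hL2 : 2 ≤ L) (hb : 0 ≤ b)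
    (hE : 0 ≤ E) (hx : 1 ≤ x)
    (hth : ∀ m : ℕ, 1 ≤ m → Chebyshev.theta (m : ℝ) ≤ b * m + E) :
    (Chebyshev.theta (x : ℝ) - (b * x + E)) * (x / L) + b * (x ^ 2 / (2 * L) + x ^ 2 / (4 * L ^ 2)) ≤
      ∑ p ∈ (Finset.range (x + 1)).filter Nat.Prime, (p : ℝ) := by
  have h := abel_aux x L b E hL hL2 hb hE hth x hx le_rfl
  rw [hL] at h
  have h1 : ∑ p ∈ (Finset.range (x + 1)).filter Nat.Prime, Real.log p * (p * (2 * L - Real.log p)) ≤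
      (∑ p ∈ (Finset.range (x + 1)).filter Nat.Prime, (p : ℝ)) * L ^ 2 := by
    rw [Finset.sum_mul]
    apply Finset.sum_le_sum
    intro p _
    have : Real.log p * (2 * L - Real.log p) ≤ L ^ 2 := by nlinarith [sq_nonneg (L - Real.log p)]
    have := mul_le_mul_of_nonneg_left this (Nat.cast_nonneg (α := ℝ) p)
    linarith
  have hL0 : 0 < L := by linarith
  have h2 : ((Chebyshev.theta (x : ℝ) - (b * x + E)) * (x / L) +
      b * (x ^ 2 / (2 * L) + x ^ 2 / (4 * L ^ 2))) * L ^ 2 =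
      (Chebyshev.theta (x : ℝ) - (b * x + E)) * (x * L) + b * (x ^ 2 * L / 2 + x ^ 2 / 4) := by
    field_simp
  have h3 : ((Chebyshev.theta (x : ℝ) - (b * x + E)) * (x / L) +
      b * (x ^ 2 / (2 * L) + x ^ 2 / (4 * L ^ 2))) * L ^ 2 ≤
      (∑ p ∈ (Finset.range (x + 1)).filter Nat.Prime, (p : ℝ)) * L ^ 2 := by
    rw [h2]
    nlinarith
  exact le_of_mul_le_mul_right h3 (by positivity)

def chk2 : ℕ → List ℕ → Bool
  | a, [] => Nat.ble 10000000 a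
  | a, b :: l => (Nat.ble b 199999 || Nat.ble (1000 * b) (1029 * (a + 1))) && chk2 b l

theorem chk2_sound (l : List ℕ) (a : ℕ) (h : chk2 a l = true) (x : ℕ) (hx : a < x)
    (h1 : 200000 ≤ x) (h2 : x ≤ 10000000) : ∃ p ∈ l, x ≤ p ∧ 1000 * p ≤ 1029 * x := by
  induction l generalizing a with
  | nil => rw [chk2, Nat.ble_eq] at h; omega
  | cons b l ih =>
    rw [chk2, Bool.and_eq_true, Bool.or_eq_true, Nat.ble_eq, Nat.ble_eq] at h
    by_cases hb : b < x
    · obtain ⟨p, hp, h3⟩ := ih b h.2 hb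
      exact ⟨p, List.mem_cons_of_mem _ hp, h3⟩
    · exact ⟨b, List.mem_cons_self, by omega, by omega⟩

theorem chk2_chain : chk2 0 chainL = true := by decide +kernel

theorem log10_7 : Real.log 10000000 < 16.2 := by
  have h : Real.log ((10000000 : ℝ) ^ 10) ≤ Real.log ((2 : ℝ) ^ 233) :=
    Real.log_le_log (by norm_num) (by norm_num)
  rw [Real.log_pow, Real.log_pow] at h
  push_cast at h
  have := log2_lt
  linarith

theorem theta_lower7 (x : ℕ) (hx : 10000000 ≤ x) : 0.98567 * (x : ℝ) ≤ Chebyshev.theta (x : ℝ) := by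
  have hx0 : (10000000 : ℝ) ≤ x := by exact_mod_cast hx
  have h := theta_lower x (by omega) 3162 215 (by norm_num) (by norm_num) (by linarith) (by linarith)
  have h1 := log_tangent x 10000000 (by linarith) (by norm_num)
  have h2 := log10_7
  norm_num at h
  linarith

theorem theta_upper7 (x : ℕ) (hx : 10000000 ≤ x) : Chebyshev.theta (x : ℝ) ≤ 1.0138 * x := by
  have hx0 : (10000000 : ℝ) ≤ x := by exact_mod_cast hx
  have h := psi_upper x (by omega)
  have h3 := Chebyshev.theta_le_psi (x : ℝ)
  have h1 := log_tangent x 10000000 (by linarith) (by norm_num)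
  have h2 := log10_7
  linarith

theorem gap_large (x : ℕ) (hx : 200000 ≤ x) : ∃ p, p.Prime ∧ x ≤ p ∧ 1000 * p ≤ 1029 * x := by
  by_cases h : x ≤ 10000000
  · obtain ⟨p, hp, h1, h2⟩ := chk2_sound chainL 0 chk2_chain x (by omega) hx h
    exact ⟨p, chainL_prime p hp, h1, h2⟩
  · by_contra hc
    push Not at hc
    set y := 1029 * x / 1000 with hy
    have hxy : x ≤ y := by omega
    have e : Chebyshev.theta (y : ℝ) = Chebyshev.theta (x : ℝ) := by
      rw [theta_nat, theta_nat]
      apply Finset.sum_congr _ (fun _ _ => rfl)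
      ext p
      simp only [Finset.mem_filter, Finset.mem_range]
      constructor
      · rintro ⟨h1, h2⟩
        refine ⟨?_, h2⟩
        by_contra h3
        have := hc p h2 (by omega)
        omega
      · rintro ⟨h1, h2⟩
        exact ⟨by omega, h2⟩
    have h1 := theta_lower7 y (by omega)
    have h2 := theta_upper7 x (by omega)
    have h3 : (1029 * (x : ℝ)) ≤ 1000 * y + 1000 := by
      have : 1029 * x ≤ 1000 * y + 1000 := by omega
      exact_mod_cast this
    have hx0 : (10000000 : ℝ) ≤ x := by exact_mod_cast (by omega : 10000000 ≤ x)
    rw [e] at h1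
    linarith


set_option exponentiation.threshold 3000 in
theorem log_171 : 14.348 < Real.log 1710000 ∧ Real.log 1710000 < 14.356 := by
  have h : Real.log ((2 : ℝ) ^ 207) ≤ Real.log ((1710000 : ℝ) ^ 10) :=
    Real.log_le_log (by norm_num) (by norm_num)
  have h' : Real.log ((1710000 : ℝ) ^ 100) ≤ Real.log ((2 : ℝ) ^ 2071) :=
    Real.log_le_log (by positivity)
      (by exact_mod_cast (by decide +kernel : (1710000 : ℕ) ^ 100 ≤ 2 ^ 2071))
  rw [Real.log_pow, Real.log_pow] at h h'
  push_cast at h h'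
  have := log2_lt
  have := log2_gt
  constructor <;> linarith

theorem theta_upper_all (m : ℕ) (_hm : 1 ≤ m) : Chebyshev.theta (m : ℝ) ≤ 1.01343 * m + 3535 := by
  have h3 := Chebyshev.theta_le_psi (m : ℝ)
  have hm0 : (0 : ℝ) ≤ m := Nat.cast_nonneg _
  by_cases h : 500 ≤ m
  · have h1 := psi_upper m h
    have hm1 : (500 : ℝ) ≤ m := by exact_mod_cast h
    have h2 := log_tangent m 1710000 (by linarith) (by norm_num)
    have h4 := log_171.2
    linarith
  · have h1 := psi_le_nat m
    have hm1 : (m : ℝ) ≤ 500 := by exact_mod_cast (by omega : m ≤ 500)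
    linarith

theorem theta_lower_171 (x : ℕ) (hx : 1710000 ≤ x) : 0.983 * (x : ℝ) ≤ Chebyshev.theta (x : ℝ) := by
  have hx0 : (1710000 : ℝ) ≤ x := by exact_mod_cast hx
  have h := theta_lower x (by omega) 1307 119 (by norm_num) (by norm_num) (by linarith) (by linarith)
  have h1 := log_tangent x 1710000 (by linarith) (by norm_num)
  have h2 := log_171.2
  norm_num at h
  linarith

theorem small_primes_sum (P T : ℕ) :
    ∑ p ∈ (Finset.range (T + 1)).filter Nat.Prime, p ≤
      ∑ p ∈ (Finset.range (T + 1)).filter (fun p => p.Prime ∧ P < p ^ 2), p + P := by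
  rw [← Finset.sum_filter_add_sum_filter_not ((Finset.range (T + 1)).filter Nat.Prime)
    (fun p => P < p ^ 2), Finset.filter_filter, Finset.filter_filter]
  apply Nat.add_le_add_left
  have hsub : (Finset.range (T + 1)).filter (fun p => p.Prime ∧ ¬ P < p ^ 2) ⊆
      Finset.Icc 1 (Nat.sqrt P) := by
    intro p hp
    simp only [Finset.mem_filter, Finset.mem_range] at hp
    rw [Finset.mem_Icc]
    refine ⟨hp.2.1.pos, ?_⟩
    rw [Nat.le_sqrt']
    omega
  calc _ ≤ ∑ p ∈ Finset.Icc 1 (Nat.sqrt P), p := Finset.sum_le_sum_of_subset hsub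
    _ ≤ (Finset.Icc 1 (Nat.sqrt P)).card • Nat.sqrt P := by
        apply Finset.sum_le_card_nsmul
        intro p hp
        exact (Finset.mem_Icc.1 hp).2
    _ = Nat.sqrt P * Nat.sqrt P := by simp
    _ ≤ P := Nat.sqrt_le P

theorem large_n {P n : ℕ} (hP : P.Prime) (hd : P ∣ landau n) (h1 : 2004328 ≤ P) :
    ∑ p ∈ (Finset.range (171 * P / 200 + 1)).filter Nat.Prime, p ≤ n + P := by
  refine (small_primes_sum P _).trans (Nat.add_le_add_right ?_ _)
  set T := 171 * P / 200 with hT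
  have t1 : 200 * T ≤ 171 * P := Nat.mul_div_le _ _
  have t2 : 171 * P < 200 * T + 200 := by omega
  refine exchange_range hP hd le_rfl le_rfl (by omega) ?_
  intro x hx1 hx2
  have main : ∀ p y : ℕ, x ≤ y → 1000 * p ≤ 1029 * y → y ≤ 2 * T - P → (x = y ∨ 10 * y ≤ P + 10) →
      p * P < T * (x + P - T) := by
    intro p y hxy hp hy hor
    obtain ⟨D, hD⟩ : ∃ D, P = T + D := ⟨P - T, by omega⟩
    have e : x + P - T = x + D := by omega
    rw [e]
    have d1 : 29 * P ≤ 200 * D := by omega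
    have q1 : 1000 * p * P ≤ 1029 * y * P := Nat.mul_le_mul_right _ hp
    have q2 : (171 * P) * (200 * x + 29 * P) ≤ (200 * T + 200) * (200 * x + 200 * D) :=
      Nat.mul_le_mul (by omega) (by omega)
    have q3 : P * P ≥ 2004328 * P := Nat.mul_le_mul_right _ h1
    have q4 : D ≤ P := by omega
    have q5 : x ≤ P := by omega
    have hy' : 200 * y ≤ 142 * P := by omega
    have q6 : 200 * y * P ≤ 142 * P * P := Nat.mul_le_mul_right _ hy'
    rcases hor with rfl | hor
    · nlinarith
    · have q7 : 10 * y * P ≤ (P + 10) * P := Nat.mul_le_mul_right _ hor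
      nlinarith
  by_cases hx : x ≤ P / 10 + 1
  · obtain ⟨p, hp, a1, a2⟩ := gap_large (P / 10 + 1) (by omega)
    refine ⟨p, hp, ?_, by omega, main p (P / 10 + 1) hx a2 (by omega) (Or.inr (by omega))⟩
    have : P < 10 * p := by omega
    nlinarith
  · obtain ⟨p, hp, a1, a2⟩ := gap_large x (by omega)
    refine ⟨p, hp, ?_, a1, main p x le_rfl a2 hx2 (Or.inl rfl)⟩
    have : P < 10 * p := by omega
    nlinarith

set_option maxHeartbeats 2000000 in
theorem large_range {P n : ℕ} (hP : P.Prime) (hd : P ∣ landau n) (h1 : 2004328 ≤ P) : Good P n := by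
  have hs := large_n hP hd h1
  set x := 171 * P / 200 with hxdef
  have t1 : 200 * x ≤ 171 * P := Nat.mul_div_le _ _
  have t2 : 171 * P < 200 * x + 200 := by omega
  have hx : 1710000 ≤ x := by omega
  have hx0 : (1710000 : ℝ) ≤ x := by exact_mod_cast hx
  have t2' : 171 * (P : ℝ) ≤ 200 * x + 200 := by exact_mod_cast t2.le
  have hs' : ∑ p ∈ (Finset.range (x + 1)).filter Nat.Prime, (p : ℝ) ≤ n + P := by
    have h9 : ((∑ p ∈ (Finset.range (x + 1)).filter Nat.Prime, p : ℕ) : ℝ) ≤ ((n + P : ℕ) : ℝ) :=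
      Nat.cast_le.2 hs
    rw [Nat.cast_sum, Nat.cast_add] at h9
    exact h9
  set L := Real.log x with hL
  have hL1 : 14.348 < L := by
    have : Real.log 1710000 ≤ L := Real.log_le_log (by norm_num) hx0
    have := log_171.1
    linarith
  have hL2 : L ≤ 13.356 + x / 1710000 := by
    have := log_tangent x 1710000 (by linarith) (by norm_num)
    have := log_171.2
    linarith
  have key := sum_primes_lower x L 1.01343 3535 hL.symm (by linarith) (by norm_num) (by norm_num)
    (by omega) theta_upper_all
  have hth := theta_lower_171 x hx
  have hL0 : 0 < L := by linarith
  set w := 1 / (2 * L) with hw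
  have hw0 : 0 < w := by positivity
  have hw1 : w ≤ 0.03485 := by
    rw [hw, div_le_iff₀ (by positivity)]; linarith
  have hwL : w * L = 1 / 2 := by rw [hw]; field_simp
  have e1 : (x : ℝ) / L = 2 * x * w := by rw [hw]; field_simp
  have e2 : (x : ℝ) ^ 2 / (2 * L) = x ^ 2 * w := by rw [hw]; field_simp
  have e3 : (x : ℝ) ^ 2 / (4 * L ^ 2) = x ^ 2 * w ^ 2 := by rw [hw]; field_simp; norm_num
  rw [e1, e2, e3] at key
  -- lower bound for n
  have hxw : 0 < x * w := by positivity
  have hPx : (P : ℝ) ≤ 0.0001 * (x ^ 2 * w) := by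
    have a1 : (1 : ℝ) ≤ 0.00002 * (x * w) * 2 := by
      have : w * L ≤ w * (13.356 + x / 1710000) := mul_le_mul_of_nonneg_left hL2 hw0.le
      rw [hwL] at this
      have h5 : w * 1710000 ≤ w * x := mul_le_mul_of_nonneg_left hx0 hw0.le
      linarith
    have a2 := mul_le_mul_of_nonneg_left a1 (show (0 : ℝ) ≤ x by linarith)
    nlinarith
  have hn : x ^ 2 * w * (0.948 + w) ≤ n := by
    have a1 : (0.983 * (x : ℝ) - (1.01343 * x + 3535)) * (2 * x * w) ≤
        (Chebyshev.theta (x : ℝ) - (1.01343 * x + 3535)) * (2 * x * w) :=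
      mul_le_mul_of_nonneg_right (by linarith) (by positivity)
    have a2 : 3535 * (2 * x * w) ≤ 0.0042 * (x ^ 2 * w) := by
      have : 7070 * (x * w) ≤ 0.0042 * x * (x * w) :=
        mul_le_mul_of_nonneg_right (by linarith) hxw.le
      nlinarith
    have a3 : 0 ≤ x ^ 2 * w ^ 2 := by positivity
    nlinarith
  have hx2w : 0 < (x : ℝ) ^ 2 * w := by positivity
  -- lower bound for log n
  have hn0 : x ^ 2 * w * 0.948 ≤ n := by nlinarith
  have hlog : 2 * L * (31 / 32) - 2.521 ≤ Real.log n := by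
    have b1 : Real.log (x ^ 2 * w * 0.948) ≤ Real.log n := Real.log_le_log (by positivity) hn0
    have hx00 : (x : ℝ) ≠ 0 := by linarith
    rw [Real.log_mul (by positivity) (by norm_num), Real.log_mul (by positivity) (by positivity),
      Real.log_pow, hw, one_div, Real.log_inv, ← hL] at b1
    have b2 := log_tangent (2 * L) (2 ^ 5) (by positivity) (by norm_num)
    rw [Real.log_pow] at b2
    have b3 := Real.one_sub_inv_le_log_of_pos (show (0 : ℝ) < 0.948 by norm_num)
    have b4 : (0.948 : ℝ)⁻¹ ≤ 1.055 := by norm_num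
    have := log2_lt
    push_cast at b1 b2
    linarith
  have hY0 : 0 < 2 * L * (31 / 32) - 2.521 := by linarith
  have hnl : x ^ 2 * w * (0.948 + w) * (2 * L * (31 / 32) - 2.521) ≤ n * Real.log n :=
    mul_le_mul hn hlog hY0.le (Nat.cast_nonneg _)
  have e4 : x ^ 2 * w * (0.948 + w) * (2 * L * (31 / 32) - 2.521) =
      x ^ 2 * ((0.948 + w) * (31 / 32 - 2.521 * w)) := by
    have : x ^ 2 * w * (0.948 + w) * (2 * L * (31 / 32) - 2.521) =
      x ^ 2 * ((0.948 + w) * ((w * L) * 2 * (31 / 32) - 2.521 * w)) := by ring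
    rw [this, hwL]; ring
  have h86 : 0.86 ≤ (0.948 + w) * (31 / 32 - 2.521 * w) := by nlinarith
  have hfin : 0.86 * (x : ℝ) ^ 2 ≤ n * Real.log n := by
    rw [e4] at hnl
    have := mul_le_mul_of_nonneg_left h86 (show (0 : ℝ) ≤ (x : ℝ) ^ 2 by positivity)
    linarith
  have hPP : (P : ℝ) ^ 2 ≤ 1.36806 * x ^ 2 := by
    have c1 : (P : ℝ) ≤ 1.1696 * x + 2 := by linarith
    have c2 : (P : ℝ) ≤ 1.16962 * x := by linarith
    have c3 : (0 : ℝ) ≤ P := Nat.cast_nonneg _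
    have : (P : ℝ) ^ 2 ≤ (1.16962 * x) ^ 2 := by gcongr
    nlinarith
  have hl215 : 215 * Real.log 215 ≤ 1154.9 := by
    have := log215_lt
    have := log2_lt
    linarith
  have hl0 : 0 ≤ Real.log 215 := Real.log_nonneg (by norm_num)
  unfold Good
  have hx2 : (0 : ℝ) < (x : ℝ) ^ 2 := by positivity
  calc (P : ℝ) ^ 2 * (215 * Real.log 215) ≤ (1.36806 * x ^ 2) * 1154.9 :=
        mul_le_mul hPP hl215 (by linarith) (by positivity)
    _ < 43 ^ 2 * (0.86 * (x : ℝ) ^ 2) := by linarith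
    _ ≤ _ := mul_le_mul_of_nonneg_left hfin (by norm_num)


theorem landau_cases (n : ℕ) (hn : 4 ≤ n) : Good (maxPrimeFac (landau n)) n ∨
    (maxPrimeFac (landau n) = 43 ∧ n = 215) := by
  have h2 : 2 ≤ landau n := by
    refine le_landau (by norm_num) ?_
    have : ell 2 = 2 := by
      unfold ell
      rw [Nat.Prime.primeFactors Nat.prime_two]
      simp [Nat.prime_two.factorization_self]
    omega
  obtain ⟨hp, hd, -⟩ := maxPrimeFac_spec h2
  generalize hP : maxPrimeFac (landau n) = P at *
  rcases lt_or_ge P 468 with h | h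
  · exact landau_small_range hp h hn hP
  rcases lt_or_ge P 5410 with h' | h'
  · exact Or.inl (exact_range hp h h' hd)
  rcases lt_or_ge P 2004328 with h'' | h''
  · exact Or.inl (mid_range hp hd h' h'')
  · exact Or.inl (large_range hp hd h'')

theorem good_sqrt {P n : ℕ} (h : Good P n) :
    (P : ℝ) * Real.sqrt (215 * Real.log 215) < 43 * Real.sqrt (n * Real.log n) := by
  unfold Good at h
  have hl0 : 0 ≤ Real.log 215 := Real.log_nonneg (by norm_num)
  have hn0 : 0 ≤ (n : ℝ) * Real.log n := mul_nonneg (Nat.cast_nonneg _) (Real.log_natCast_nonneg n)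
  apply lt_of_pow_lt_pow_left₀ 2 (by positivity)
  rw [mul_pow, mul_pow, Real.sq_sqrt (by positivity), Real.sq_sqrt hn0]
  exact h

/-- For every n ≥ 4, P⁺(g(n))/√(n log n) ≤ 43/√(215 log 215); the maximum is
attained only at n = 215, where P⁺(g(215)) = 43. -/
theorem stmt0 :
    (∀ n : ℕ, 4 ≤ n →
      (maxPrimeFac (landau n) : ℝ) * Real.sqrt (215 * Real.log 215) ≤
        43 * Real.sqrt (n * Real.log n)) ∧
    maxPrimeFac (landau 215) = 43 ∧
    (∀ n : ℕ, 4 ≤ n →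
      (maxPrimeFac (landau n) : ℝ) * Real.sqrt (215 * Real.log 215) =
        43 * Real.sqrt (n * Real.log n) → n = 215) := by
  refine ⟨?_, ?_, ?_⟩
  · intro n hn
    rcases landau_cases n hn with h | ⟨h1, h2⟩
    · exact (good_sqrt h).le
    · rw [h1, h2]; norm_num
  · rcases landau_cases 215 (by norm_num) with h | ⟨h1, -⟩
    · exfalso
      have h43 := landau215_ge
      have h43' : (43 : ℝ) ≤ maxPrimeFac (landau 215) := by exact_mod_cast h43
      have h5 := good_sqrt h
      have h6 := mul_le_mul_of_nonneg_right h43' (Real.sqrt_nonneg (215 * Real.log 215))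
      push_cast at h5
      linarith
    · exact h1
  · intro n hn he
    rcases landau_cases n hn with h | ⟨h1, h2⟩
    · exact absurd he (good_sqrt h).ne
    · exact h2
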